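/- arXiv:2304.13715 — 3 statements merged into one kernel-verified Lean document; each statement's English description precedes it below -/
import Mathlib

section
/- Let H be a graph and let F ⊆ E(H) be such that H − F is a disjoint union of graphs H₁, …, H_k and such that no edge of F has both ends in the same component of H − F. If G is a graph and G₁, …, G_k are pairwise vertex-disjoint subgraphs of G such that G_i is (H_i + |F|)-linked for every i ∈ {1,…,k}, and the pair (G, V(G) ∖ ⋃_{i=1}^k V(G_i)) is 2|F|-dense, then H is a minor of G. -/
open SimpleGraph

/-- The degree of a vertex: the number of neighbours. -/
noncomputable def deg {V : Type*} (G : SimpleGraph V) (v : V) : ℕ :=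
  (G.neighborSet v).ncard

/-- The minimum degree of a graph. -/
noncomputable def minDeg {V : Type*} (G : SimpleGraph V) : ℕ :=
  sInf (Set.range (deg G))

/-- The maximum degree of a graph. -/
noncomputable def maxDeg {V : Type*} (G : SimpleGraph V) : ℕ :=
  sSup (Set.range (deg G))

/-- The density of a graph: number of edges divided by number of vertices. -/
noncomputable def density {V : Type*} (G : SimpleGraph V) : ℝ :=
  (G.edgeSet.ncard : ℝ) / (Nat.card V : ℝ)

/-- The density of a subgraph of `G`. -/
noncomputable def subDensity {V : Type*} {G : SimpleGraph V} (J : G.Subgraph) : ℝ :=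
  (J.edgeSet.ncard : ℝ) / (J.verts.ncard : ℝ)

/-- A model (branch decomposition) of `H` in `G`: pairwise disjoint branch sets,
each inducing a connected (in particular nonempty) subgraph, with an edge of `G`
between the branch sets of any two adjacent vertices of `H`. -/
def IsModel {α β : Type*} (H : SimpleGraph α) (G : SimpleGraph β) (μ : α → Set β) : Prop :=
  (∀ u v : α, u ≠ v → Disjoint (μ u) (μ v)) ∧
  (∀ v : α, (G.induce (μ v)).Connected) ∧
  (∀ u v : α, H.Adj u v → ∃ a ∈ μ u, ∃ b ∈ μ v, G.Adj a b)

/-- `H` is a minor of `G`: there is a model of `H` in `G`. -/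
def IsMinor {α β : Type*} (H : SimpleGraph α) (G : SimpleGraph β) : Prop :=
  ∃ μ : α → Set β, IsModel H G μ

/-- `H` is isomorphic to a subgraph of `G`. -/
def IsSubgraphEmb {α β : Type*} (H : SimpleGraph α) (G : SimpleGraph β) : Prop :=
  ∃ f : α ↪ β, ∀ u v : α, H.Adj u v → G.Adj (f u) (f v)

/-- A (proper) separation of `G`. -/
def IsSeparation {V : Type*} (G : SimpleGraph V) (A B : Set V) : Prop :=
  A ∪ B = Set.univ ∧ ¬ A ⊆ B ∧ ¬ B ⊆ A ∧
    ∀ u ∈ A \ B, ∀ v ∈ B \ A, ¬ G.Adj u v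

/-- The pair `(G, X)` is `k`-dense: `X` is a proper subset of the vertices, and for
every separation of order at most `k` one of the two sides is contained in `X`. -/
def KDense {V : Type*} (G : SimpleGraph V) (X : Set V) (k : ℝ) : Prop :=
  X ≠ Set.univ ∧
  ∀ A B : Set V, IsSeparation G A B → ((A ∩ B).ncard : ℝ) ≤ k →
    A \ B ⊆ X ∨ B \ A ⊆ X

/-- The pair `(G, X)` is `(d, k)`-dense. -/
def DensePair {V : Type*} (G : SimpleGraph V) (X : Set V) (d k : ℝ) : Prop :=
  X ≠ Set.univ ∧
  (∀ v : V, v ∉ X → d ≤ (deg G v : ℝ)) ∧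
  ∀ A B : Set V, IsSeparation G A B → ((A ∩ B).ncard : ℝ) ≤ k →
    A \ B ⊆ X ∨ B \ A ⊆ X

/-- A graph family (of finite graphs, represented on the vertex sets `Fin n`) with
strongly sublinear separators: closed under subgraphs, and there are `c > 0` and
`0 < β < 1` such that every member has a balanced separation of order ≤ `c * n ^ β`. -/
def SSLS (F : ∀ n : ℕ, SimpleGraph (Fin n) → Prop) : Prop :=
  (∀ (n m : ℕ) (G : SimpleGraph (Fin n)) (H : SimpleGraph (Fin m)),
      F n G → IsSubgraphEmb H G → F m H) ∧
  ∃ c : ℝ, 0 < c ∧ ∃ β : ℝ, 0 < β ∧ β < 1 ∧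
    ∀ (n : ℕ) (G : SimpleGraph (Fin n)), F n G →
      ∃ A B : Set (Fin n), IsSeparation G A B ∧
        (A.ncard : ℝ) ≤ 2 / 3 * n ∧ (B.ncard : ℝ) ≤ 2 / 3 * n ∧
        ((A ∩ B).ncard : ℝ) ≤ c * (n : ℝ) ^ (β : ℝ)

/-- The extremal function `c(H)`: the supremum of densities of non-null graphs
with no `H` minor. -/
noncomputable def extremalFunction {α : Type*} (H : SimpleGraph α) : ℝ :=
  sSup {x : ℝ | ∃ (n : ℕ) (G : SimpleGraph (Fin n)), 0 < n ∧ ¬ IsMinor H G ∧ density G = x}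

/-- `G` is `H`-linked: `G` has at least as many vertices as `H` and every injection
`φ` of the vertices of `H` into those of `G` extends to a `φ`-rooted model of `H`. -/
def IsLinked {α β : Type*} (H : SimpleGraph α) (G : SimpleGraph β) : Prop :=
  Nat.card α ≤ Nat.card β ∧
  ∀ φ : α ↪ β, ∃ μ : α → Set β, IsModel H G μ ∧ ∀ v : α, φ v ∈ μ v

/-- `H'` is obtained from `H` by a simple edge extension: adding a new vertex joined
by an edge to at most one vertex of `H`, or two new vertices joined by an edge. -/
def IsSimpleEdgeExt {α β : Type*} (H : SimpleGraph α) (H' : SimpleGraph β) : Prop :=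
  ∃ f : α ↪ β,
    ((∃ x : β, x ∉ Set.range f ∧ (∀ y : β, y = x ∨ y ∈ Set.range f) ∧
       ((∀ u v : β, H'.Adj u v ↔ ∃ a b : α, u = f a ∧ v = f b ∧ H.Adj a b) ∨
        (∃ a : α, ∀ u v : β, H'.Adj u v ↔
          ((∃ a' b' : α, u = f a' ∧ v = f b' ∧ H.Adj a' b') ∨
           (u = x ∧ v = f a) ∨ (v = x ∧ u = f a))))) ∨
     (∃ x y : β, x ≠ y ∧ x ∉ Set.range f ∧ y ∉ Set.range f ∧
       (∀ z : β, z = x ∨ z = y ∨ z ∈ Set.range f) ∧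
       (∀ u v : β, H'.Adj u v ↔
         ((∃ a b : α, u = f a ∧ v = f b ∧ H.Adj a b) ∨
          (u = x ∧ v = y) ∨ (u = y ∧ v = x)))))

/-- `J` is a `k`-edge extension of `H`: obtained by a sequence of at most `k`
simple edge extensions (up to isomorphism). -/
def IsKEdgeExt {α β : Type*} (k : ℕ) (H : SimpleGraph α) (J : SimpleGraph β) : Prop :=
  ∃ j : ℕ, j ≤ k ∧ ∃ c : ℕ → (Σ n : ℕ, SimpleGraph (Fin n)),
    Nonempty (H ≃g (c 0).2) ∧ Nonempty (J ≃g (c j).2) ∧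
    ∀ i : ℕ, i < j → IsSimpleEdgeExt (c i).2 (c (i + 1)).2

/-- `G` is `(H + k)`-linked: `G` is `J`-linked for every `k`-edge extension `J` of `H`. -/
def IsPlusKLinked {α β : Type*} (H : SimpleGraph α) (k : ℕ) (G : SimpleGraph β) : Prop :=
  ∀ (m : ℕ) (J : SimpleGraph (Fin m)), IsKEdgeExt k H J → IsLinked J G

-- The connectivity of `G`: the minimum order of a separation, except for complete
-- graphs, where it is the number of vertices minus one.
open scoped Classical in
noncomputable def connectivity {V : Type*} (G : SimpleGraph V) : ℕ :=
  if ∀ u v : V, u ≠ v → G.Adj u v then Nat.card V - 1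
  else sInf {k : ℕ | ∃ A B : Set V, IsSeparation G A B ∧ (A ∩ B).ncard = k}

/-!
Write `n = |F|`. Being `(Hᵢ + n)`-linked forces `Gᵢ` to have at least `|Hᵢ| + 2n` vertices and, if
`n > 0`, minimum degree at least `|Hᵢ| + 2n - 1`. By density and Menger's theorem the pieces can be
joined by disjoint connectors, one for every edge of `F`. Taking each of them to be a shortest path
in the graph in which the pieces are completed to cliques, it meets every piece in at most two
vertices, and the two pieces it is meant to join in one vertex each. Choose the roots of all
vertices of `H` off the connectors. Inside `Gᵢ` one then has to realize an `n`-edge extension of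
`Hᵢ`: a connector that passes through asks for an edge between two new vertices, and one that ends
there for a new vertex joined to a root. Linkedness realizes all these extensions by branch sets
containing the prescribed vertices, and composing the models gives `H`.
-/

section Connectivity

variable {V W : Type*} {G : SimpleGraph V} {G' : SimpleGraph W} {C D : Set V}

theorem subset_of_connected_induce (hC : (G.induce C).Connected) (hCD : (C ∩ D).Nonempty)
    (hD : ∀ u ∈ D, ∀ v ∈ C, G.Adj u v → v ∈ D) : C ⊆ D := by
  intro v hv
  obtain ⟨d, hdC, hdD⟩ := hCD
  obtain ⟨p⟩ := hC.preconnected ⟨d, hdC⟩ ⟨v, hv⟩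
  have mem_of_walk : ∀ {a b : C}, (G.induce C).Walk a b → a.1 ∈ D → b.1 ∈ D := by
    intro a b p
    induction p with
    | nil => exact id
    | cons hadj _ ih => exact fun ha ↦ ih (hD _ ha _ (Subtype.property _) hadj)
  exact mem_of_walk p hdD

theorem connected_induce_mono {G₁ G₂ : SimpleGraph V} (h : G₁ ≤ G₂)
    (hC : (G₁.induce C).Connected) : (G₂.induce C).Connected :=
  hC.mono fun _ _ hadj ↦ h hadj

theorem connected_induce_singleton (G : SimpleGraph V) (v : V) : (G.induce {v}).Connected :=
  have : Nonempty ({v} : Set V) := ⟨⟨v, rfl⟩⟩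
  .of_subsingleton

theorem connected_induce_image (f : G →g G') (hC : (G.induce C).Connected) :
    (G'.induce (f '' C)).Connected :=
  hC.map (induceHom f (Set.mapsTo_image f C)) fun ⟨_, v, hv, h⟩ ↦ ⟨⟨v, hv⟩, Subtype.ext h⟩

theorem connected_induce_biUnion {Z : Set W} {M : W → Set V} (hZ : (G'.induce Z).Connected)
    (hM : ∀ w ∈ Z, (G.induce (M w)).Connected)
    (hadj : ∀ u ∈ Z, ∀ v ∈ Z, G'.Adj u v → ∃ a ∈ M u, ∃ b ∈ M v, G.Adj a b) :
    (G.induce (⋃ w ∈ Z, M w)).Connected := by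
  obtain ⟨w, hw⟩ := hZ.nonempty
  obtain ⟨x, hx⟩ := (hM w hw).nonempty
  refine induce_connected_of_patches x (Set.mem_biUnion hw hx) @fun y hy ↦ ?_
  obtain ⟨v, hv, hyv⟩ := Set.mem_iUnion₂.1 hy
  obtain ⟨p⟩ := hZ.preconnected ⟨w, hw⟩ ⟨v, hv⟩
  have patch_of_walk : ∀ {a b : Z}, (G'.induce Z).Walk a b →
      ∃ S ⊆ ⋃ w ∈ Z, M w, M a ⊆ S ∧ M b ⊆ S ∧ (G.induce S).Connected := by
    intro a b p
    induction p with
    | @nil a => exact ⟨M a, Set.subset_biUnion_of_mem a.2, subset_rfl, subset_rfl, hM a a.2⟩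
    | @cons a b c h _ ih =>
      obtain ⟨S, hS, hbS, hcS, hconn⟩ := ih
      obtain ⟨s, hs, t, ht, hst⟩ := hadj a a.2 b b.2 h
      exact ⟨M a ∪ S, Set.union_subset (Set.subset_biUnion_of_mem a.2) hS,
        Set.subset_union_left, hcS.trans Set.subset_union_right,
        connected_induce_union (hM a a.2).preconnected hconn.preconnected hs (hbS ht) hst⟩
  obtain ⟨S, hS, hwS, hvS, hconn⟩ := patch_of_walk p
  exact ⟨S, hS, hwS hx, hvS hyv, hconn.preconnected _ _⟩

theorem connected_induce_insert_biUnion {ι : Type*} {v : V} {Z : Set ι} {M : ι → Set V}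
    (hM : ∀ f ∈ Z, (G.induce (M f)).Connected) (hadj : ∀ f ∈ Z, ∃ p ∈ M f, G.Adj p v) :
    (G.induce (insert v (⋃ f ∈ Z, M f))).Connected := by
  refine induce_connected_of_patches v (.inl rfl) @fun q hq ↦ ?_
  rcases hq with rfl | hq
  · exact ⟨{q}, by simp, rfl, rfl, .rfl⟩
  · obtain ⟨f, hf, hqf⟩ := Set.mem_iUnion₂.1 hq
    obtain ⟨p, hp, hpv⟩ := hadj f hf
    refine ⟨M f ∪ {v}, Set.union_subset ((Set.subset_biUnion_of_mem hf).trans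
      (Set.subset_insert _ _)) (by simp), .inr rfl, .inl hqf, ?_⟩
    exact (connected_induce_union (hM f hf).preconnected
      (connected_induce_singleton G v).preconnected hp rfl hpv).preconnected _ _

end Connectivity

section Menger

variable {V : Type*} {G G' : SimpleGraph V} {S T A B X : Set V} {n : ℕ}

/-- The possibly improper separations `(A, B)` of `G` that separate `S ⊆ A` from `T ⊆ B`. -/
structure IsSeparating (G : SimpleGraph V) (S T A B : Set V) : Prop where
  mem_or_mem (v : V) : v ∈ A ∨ v ∈ B
  left_subset : S ⊆ A
  right_subset : T ⊆ B
  mem_of_adj {u v : V} : G.Adj u v → u ∈ A ∧ v ∈ A ∨ u ∈ B ∧ v ∈ B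

/-- The local connectivity between `S` and `T` is at least `n`: fewer than `n` vertices never
separate `S` from `T`. -/
def HasLocalConnectivity (G : SimpleGraph V) (S T : Set V) (n : ℕ) : Prop :=
  ∀ A B, IsSeparating G S T A B → n ≤ (A ∩ B).ncard

/-- `E` assigns to the vertices of `X` pairwise disjoint connected sets joining them to `T`. These
play the part of the disjoint paths of Menger's theorem. -/
structure IsLinkage (G : SimpleGraph V) (X T : Set V) (E : V → Set V) : Prop where
  mem : ∀ z ∈ X, z ∈ E z
  connected : ∀ z ∈ X, (G.induce (E z)).Connected
  meets : ∀ z ∈ X, (E z ∩ T).Nonempty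
  pairwiseDisjoint : X.PairwiseDisjoint E

theorem IsSeparating.symm (h : IsSeparating G S T A B) : IsSeparating G T S B A :=
  ⟨fun v ↦ (h.mem_or_mem v).symm, h.right_subset, h.left_subset,
    fun hadj ↦ (h.mem_of_adj hadj).symm⟩

theorem HasLocalConnectivity.symm (h : HasLocalConnectivity G S T n) :
    HasLocalConnectivity G T S n :=
  fun A B hAB ↦ Set.inter_comm A B ▸ h B A hAB.symm

theorem IsLinkage.mono (h : G ≤ G') {E : V → Set V} (hE : IsLinkage G X T E) :
    IsLinkage G' X T E :=
  { hE with connected := fun z hz ↦ connected_induce_mono h (hE.connected z hz) }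

/-- The graph on `V` whose edges are those of `G` with both ends in `A`. -/
def restrict (G : SimpleGraph V) (A : Set V) : SimpleGraph V :=
  ((⊤ : G.Subgraph).induce A).spanningCoe

theorem restrict_adj {u v : V} : (restrict G A).Adj u v ↔ u ∈ A ∧ v ∈ A ∧ G.Adj u v := by
  simp [restrict]

theorem restrict_le : restrict G A ≤ G :=
  Subgraph.spanningCoe_le _

theorem IsLinkage.subset_of_restrict {E : V → Set V} (hE : IsLinkage (restrict G A) X T E)
    (hX : X ⊆ A) {z : V} (hz : z ∈ X) : E z ⊆ A :=
  subset_of_connected_induce (hE.connected z hz) ⟨z, hE.mem z hz, hX hz⟩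
    fun _ _ _ _ hadj ↦ (restrict_adj.1 hadj).2.1

theorem exists_isLinkage_of_meets {ι : Type*} {Z : Set ι} {F : ι → Set V}
    (hconn : ∀ z ∈ Z, (G.induce (F z)).Connected) (hS : ∀ z ∈ Z, (F z ∩ S).Nonempty)
    (hT : ∀ z ∈ Z, (F z ∩ T).Nonempty) (hdisj : Z.PairwiseDisjoint F) :
    ∃ X ⊆ S, X.ncard = Z.ncard ∧ ∃ E, IsLinkage G X T E := by
  rcases Z.eq_empty_or_nonempty with rfl | ⟨z₀, hz₀⟩
  · exact ⟨∅, by simp, by simp, fun _ ↦ ∅, by constructor <;> simp⟩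
  have : Nonempty ι := ⟨z₀⟩
  have : Nonempty V := ⟨(hS z₀ hz₀).some⟩
  choose! g hg using hS
  have hinj : Z.InjOn g := fun u hu v hv huv ↦
    hdisj.elim_set hu hv (g u) (hg u hu).1 (huv ▸ (hg v hv).1)
  have hinv : ∀ z ∈ Z, Function.invFunOn g Z (g z) = z := fun z hz ↦
    hinj.leftInvOn_invFunOn hz
  refine ⟨g '' Z, ?_, hinj.ncard_image, fun s ↦ F (Function.invFunOn g Z s), ?_⟩
  · exact Set.image_subset_iff.2 fun z hz ↦ (hg z hz).2
  constructor
  · rintro _ ⟨z, hz, rfl⟩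
    exact (hinv z hz).symm ▸ (hg z hz).1
  · rintro _ ⟨z, hz, rfl⟩
    exact (hinv z hz).symm ▸ hconn z hz
  · rintro _ ⟨z, hz, rfl⟩
    exact (hinv z hz).symm ▸ hT z hz
  · rintro _ ⟨z, hz, rfl⟩ _ ⟨w, hw, rfl⟩ hne
    simp only [Function.onFun, hinv z hz, hinv w hw]
    exact hdisj hz hw fun h ↦ hne (h ▸ rfl)

theorem exists_isLinkage_of_forall_not_adj (hG : ∀ u v, ¬ G.Adj u v)
    (h : HasLocalConnectivity G S T n) :
    ∃ X ⊆ S, X.ncard = n ∧ ∃ E, IsLinkage G X T E := by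
  have hsep : IsSeparating G S T S (Sᶜ ∪ T) :=
    ⟨fun v ↦ by by_cases v ∈ S <;> simp [*], subset_rfl, Set.subset_union_right,
      fun hadj ↦ absurd hadj (hG _ _)⟩
  have hn := h _ _ hsep
  rw [Set.inter_union_distrib_left, Set.inter_compl_self, Set.empty_union] at hn
  obtain ⟨X, hX, hcard⟩ := Set.exists_subset_card_eq hn
  exact ⟨X, fun z hz ↦ (hX hz).1, hcard, fun z ↦ {z}, fun _ _ ↦ rfl,
    fun z _ ↦ connected_induce_singleton G z, fun z hz ↦ ⟨z, rfl, (hX hz).2⟩,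
    fun _ _ _ _ h ↦ Set.disjoint_singleton.2 h⟩

theorem IsSeparating.insert_right {x y : V} (hAB : IsSeparating G' S T A B) (hx : x ∈ A)
    (hy : y ∈ B) (hG : G ≤ G' ⊔ edge x y) : IsSeparating G S T A (insert x B) where
  mem_or_mem v := (hAB.mem_or_mem v).imp_right (Set.mem_insert_of_mem x)
  left_subset := hAB.left_subset
  right_subset := hAB.right_subset.trans (Set.subset_insert x B)
  mem_of_adj {u v} hadj := by
    have := @hAB.mem_of_adj u v
    grind [hG hadj]

/-- Used for `G'` arising from `G` by the deletion of the edge `xy` and for a separation `(A, B)`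
of `G'` across that edge. -/
theorem HasLocalConnectivity.restrict_side [Finite V] {x y : V}
    (h : HasLocalConnectivity G S T n) (hAB : IsSeparating G' S T A B) (hy : y ∈ B)
    (hG : G ≤ G' ⊔ edge x y) :
    HasLocalConnectivity (restrict G' A) (insert x (A ∩ B)) S n := by
  intro B' A' hs
  have hsep : IsSeparating G S T (A' ∩ A) (B' ∪ B) :=
    { mem_or_mem v := by grind [hAB.mem_or_mem v, hs.mem_or_mem v]
      left_subset := Set.subset_inter hs.right_subset hAB.left_subset
      right_subset := hAB.right_subset.trans Set.subset_union_right
      mem_of_adj {u v} hadj := by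
        have hA := @hAB.mem_of_adj u v
        have hA' := @hs.mem_of_adj u v
        have hx := hs.left_subset (Set.mem_insert x _)
        rw [restrict_adj] at hA'
        grind [hG hadj] }
  refine (h _ _ hsep).trans (Set.ncard_le_ncard ?_)
  rintro v ⟨⟨hvA', hvA⟩, hv⟩
  exact ⟨hv.elim id fun hvB ↦ hs.left_subset (.inr ⟨hvA, hvB⟩), hvA'⟩

theorem IsLinkage.exists_insert_adj {x y : V} {D : V → Set V} (hD : IsLinkage G (insert y X) T D)
    (hDB : ∀ z ∈ insert y X, D z ⊆ B) (hxy : G.Adj x y) (hx : x ∉ B) (hy : y ∉ X) :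
    ∃ D', IsLinkage G (insert x X) T D' ∧ ∀ z ∈ insert x X, D' z ⊆ insert x B := by
  classical
  have hyX := Set.mem_insert y X
  have hXB : ∀ z ∈ X, z ∈ B := fun z hz ↦ hDB z (.inr hz) (hD.mem z (.inr hz))
  have hne : ∀ z ∈ X, z ≠ x := fun z hz hzx ↦ hx (hzx ▸ hXB z hz)
  have hdisj : ∀ z ∈ X, Disjoint (insert x (D y)) (D z) := fun z hz ↦
    Set.disjoint_insert_left.2 ⟨fun h ↦ hx (hDB z (.inr hz) h),
      hD.pairwiseDisjoint hyX (.inr hz) fun h ↦ hy (h ▸ hz)⟩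
  obtain ⟨D', hD'x, hD'⟩ : ∃ D' : V → Set V, D' x = insert x (D y) ∧ ∀ z ∈ X, D' z = D z :=
    ⟨Function.update D x (insert x (D y)), Function.update_self .., fun z hz ↦
      Function.update_of_ne (hne z hz) ..⟩
  refine ⟨D', ⟨?_, ?_, ?_, ?_⟩, ?_⟩
  · rintro z (rfl | hz)
    · exact hD'x ▸ Set.mem_insert z _
    · exact hD' z hz ▸ hD.mem z (.inr hz)
  · rintro z (rfl | hz)
    · exact hD'x ▸ connected_induce_union (connected_induce_singleton G z).preconnected
        (hD.connected y hyX).preconnected rfl (hD.mem y hyX) hxy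
    · exact hD' z hz ▸ hD.connected z (.inr hz)
  · rintro z (rfl | hz)
    · exact hD'x ▸ (hD.meets y hyX).mono
        (Set.inter_subset_inter_left T (Set.subset_insert z _))
    · exact hD' z hz ▸ hD.meets z (.inr hz)
  · rintro z (rfl | hz) w (rfl | hw) hzw
    · exact absurd rfl hzw
    · simpa only [Function.onFun, hD'x, hD' w hw] using hdisj w hw
    · simpa only [Function.onFun, hD'x, hD' z hz] using (hdisj z hz).symm
    · simpa only [Function.onFun, hD' z hz, hD' w hw] using
        hD.pairwiseDisjoint (.inr hz) (.inr hw) hzw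
  · rintro z (rfl | hz)
    · exact hD'x ▸ Set.insert_subset_insert (hDB y hyX)
    · exact hD' z hz ▸ (hDB z (.inr hz)).trans (Set.subset_insert x B)

theorem IsLinkage.exists_isLinkage_of_glue {D E : V → Set V} (hE : IsLinkage G X S E)
    (hD : IsLinkage G X T D) (hEA : ∀ z ∈ X, E z ⊆ A) (hDB : ∀ z ∈ X, D z ⊆ B)
    (hAB : A ∩ B ⊆ X) : ∃ Y ⊆ S, Y.ncard = X.ncard ∧ ∃ F, IsLinkage G Y T F := by
  have hcross : ∀ z ∈ X, ∀ w ∈ X, z ≠ w → Disjoint (E z) (D w) := by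
    intro z hz w hw hzw
    refine Set.disjoint_left.2 fun v hvE hvD ↦ hzw ?_
    have hv : v ∈ X := hAB ⟨hEA z hz hvE, hDB w hw hvD⟩
    exact (hE.pairwiseDisjoint.elim_set hz hv v hvE (hE.mem v hv)).trans
      (hD.pairwiseDisjoint.elim_set hv hw v (hD.mem v hv) hvD)
  refine exists_isLinkage_of_meets (F := fun z ↦ E z ∪ D z) (fun z hz ↦ ?_)
    (fun z hz ↦ ?_) (fun z hz ↦ ?_) fun z hz w hw hzw ↦ ?_
  · exact induce_union_connected (hE.connected z hz).preconnected
      (hD.connected z hz).preconnected ⟨z, hE.mem z hz, hD.mem z hz⟩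
  · exact (hE.meets z hz).mono (Set.inter_subset_inter_left S Set.subset_union_left)
  · exact (hD.meets z hz).mono (Set.inter_subset_inter_left T Set.subset_union_right)
  · simp only [Function.onFun, Set.disjoint_union_left, Set.disjoint_union_right]
    exact ⟨⟨hE.pairwiseDisjoint hz hw hzw, (hcross w hw z hz hzw.symm).symm⟩,
      hcross z hz w hw hzw, hD.pairwiseDisjoint hz hw hzw⟩

theorem exists_isLinkage_of_edge [Finite V] {x y : V} (h : HasLocalConnectivity G S T n)
    (ih : ∀ K ≤ G', ∀ S T, HasLocalConnectivity K S T n →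
      ∃ X ⊆ S, X.ncard = n ∧ ∃ E, IsLinkage K X T E)
    (hAB : IsSeparating G' S T A B) (hlt : (A ∩ B).ncard < n) (hxy : G.Adj x y)
    (hG' : G' ≤ G) (hG : G ≤ G' ⊔ edge x y) (hx : x ∈ A \ B) (hy : y ∈ B \ A) :
    ∃ X ⊆ S, X.ncard = n ∧ ∃ E, IsLinkage G X T E := by
  have hxX : x ∉ A ∩ B := fun h ↦ hx.2 h.2
  have hyX : y ∉ A ∩ B := fun h ↦ hy.2 h.1
  have hcard : (insert x (A ∩ B)).ncard = n := by
    have hle := h _ _ (hAB.insert_right hx.1 hy.1 hG)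
    rw [Set.inter_insert_of_mem hx.1] at hle
    have := Set.ncard_insert_of_notMem hxX
    omega
  have hcard' : (insert y (A ∩ B)).ncard = n := by
    rw [Set.ncard_insert_of_notMem hyX, ← Set.ncard_insert_of_notMem hxX, hcard]
  obtain ⟨X, hX, hXcard, E, hE⟩ := ih _ restrict_le _ _ (h.restrict_side hAB hy.1 hG)
  obtain rfl := Set.eq_of_subset_of_ncard_le hX (hcard.trans hXcard.symm).le
  obtain ⟨Y, hY, hYcard, D, hD⟩ := ih _ restrict_le _ _
    (h.symm.restrict_side hAB.symm hx.1 (edge_comm x y ▸ hG))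
  rw [Set.inter_comm] at hY
  obtain rfl := Set.eq_of_subset_of_ncard_le hY (hcard'.trans hYcard.symm).le
  have hEA : ∀ z ∈ insert x (A ∩ B), E z ⊆ A := fun z ↦
    hE.subset_of_restrict (Set.insert_subset hx.1 Set.inter_subset_left)
  have hDB : ∀ z ∈ insert y (A ∩ B), D z ⊆ B := fun z ↦
    hD.subset_of_restrict (Set.insert_subset hy.1 Set.inter_subset_right)
  obtain ⟨D', hD', hDB'⟩ :=
    (hD.mono (restrict_le.trans hG')).exists_insert_adj hDB hxy hx.2 hyX
  exact hcard ▸ (hE.mono (restrict_le.trans hG')).exists_isLinkage_of_glue hD' hEA hDB'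
    (Set.inter_insert_of_mem hx.1).subset

/-- Menger's theorem, by induction on the edges. -/
theorem exists_isLinkage [Finite V] (h : HasLocalConnectivity G S T n) :
    ∃ X ⊆ S, X.ncard = n ∧ ∃ E, IsLinkage G X T E := by
  induction G using WellFoundedLT.induction generalizing S T with
  | _ G ih =>
  by_cases hG : ∀ u v, ¬ G.Adj u v
  · exact exists_isLinkage_of_forall_not_adj hG h
  push Not at hG
  obtain ⟨x, y, hxy⟩ := hG
  have hle : G \ edge x y ≤ G := sdiff_le
  have hsup : G ≤ G \ edge x y ⊔ edge x y := le_sdiff_sup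
  have hlt : G \ edge x y < G := hle.lt_of_not_ge fun hge ↦ by
    simpa [edge_adj, hxy.ne] using hge hxy
  by_cases h' : HasLocalConnectivity (G \ edge x y) S T n
  · obtain ⟨X, hXS, hXcard, E, hE⟩ := ih _ hlt h'
    exact ⟨X, hXS, hXcard, E, hE.mono hle⟩
  unfold HasLocalConnectivity at h'
  push Not at h'
  obtain ⟨A, B, hAB, hcard⟩ := h'
  have of_sides : ∀ {a b}, G.Adj a b → edge a b = edge x y → a ∈ A \ B → b ∈ B \ A →
      ∃ X ⊆ S, X.ncard = n ∧ ∃ E, IsLinkage G X T E := fun hab heq ↦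
    exists_isLinkage_of_edge h (fun K hK S T ↦ ih K (hK.trans_lt hlt)) hAB hcard hab hle
      (heq ▸ hsup)
  by_cases hx : x ∈ A \ B ∧ y ∈ B \ A
  · exact of_sides hxy rfl hx.1 hx.2
  by_cases hy : y ∈ A \ B ∧ x ∈ B \ A
  · exact of_sides hxy.symm (edge_comm y x) hy.1 hy.2
  refine absurd (h A B { hAB with mem_of_adj := fun {u v} hadj ↦ ?_ }) hcard.not_ge
  have := @hAB.mem_of_adj u v
  grind [hsup hadj, hAB.mem_or_mem u, hAB.mem_or_mem v]

end Menger

section Geodesic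

variable {V : Type*} {Q : SimpleGraph V}

theorem dist_add_dist_of_mem_geodesic {u v w : V} {p : Q.Walk u v} (hp : p.length = Q.dist u v)
    (hw : w ∈ p.support) :
    p.getVert (Q.dist u w) = w ∧ Q.dist u w + Q.dist w v = Q.dist u v := by
  obtain ⟨n, rfl, hn⟩ := Walk.mem_support_iff_exists_getVert.1 hw
  have htake := dist_le (p.take n)
  have hdrop := dist_le (p.drop n)
  rw [Walk.take_length, min_eq_left hn] at htake
  rw [Walk.drop_length] at hdrop
  have htri := (p.take n).reachable.dist_triangle_left v
  have hdist : Q.dist u (p.getVert n) = n := by omega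
  exact ⟨by rw [hdist], by omega⟩

theorem ncard_geodesic_inter_le_two {u v : V} {p : Q.Walk u v} (hp : p.length = Q.dist u v)
    {K : Set V} (hK : Q.IsClique K) : ({w | w ∈ p.support} ∩ K).ncard ≤ 2 := by
  by_contra! hcard
  obtain ⟨a, ⟨ha, haK⟩, b, ⟨hb, hbK⟩, c, ⟨hc, hcK⟩, hab, hac, hbc⟩ :=
    (Set.two_lt_ncard (p.support.finite_toSet.inter_of_left K)).1 hcard
  have dist_sub_le : ∀ {w z}, w ∈ p.support → z ∈ p.support → w ∈ K → z ∈ K → w ≠ z →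
      Q.dist u z ≤ Q.dist u w + 1 ∧ Q.dist u w ≠ Q.dist u z := by
    intro w z hw hz hwK hzK hwz
    have htri := (hK hwK hzK hwz).reachable.dist_triangle_right u
    rw [dist_eq_one_iff_adj.2 (hK hwK hzK hwz)] at htri
    refine ⟨htri, fun heq ↦ hwz ?_⟩
    rw [← (dist_add_dist_of_mem_geodesic hp hw).1, heq,
      (dist_add_dist_of_mem_geodesic hp hz).1]
  have := dist_sub_le ha hb haK hbK hab
  have := dist_sub_le hb ha hbK haK hab.symm
  have := dist_sub_le ha hc haK hcK hac
  have := dist_sub_le hc ha hcK haK hac.symm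
  have := dist_sub_le hb hc hbK hcK hbc
  have := dist_sub_le hc hb hcK hbK hbc.symm
  omega

/-- The witness is a shortest path from `A` to `B`. -/
theorem exists_connected_of_isClique_ncard_le_two (hQ : Q.Connected) {A B : Set V}
    (hA : A.Nonempty) (hB : B.Nonempty) :
    ∃ D : Set V, (Q.induce D).Connected ∧ (D ∩ A).ncard = 1 ∧ (D ∩ B).ncard = 1 ∧
      ∀ K, Q.IsClique K → (D ∩ K).ncard ≤ 2 := by
  obtain ⟨⟨u, v⟩, ⟨hu, hv⟩, hmin⟩ := exists_minimalFor_of_wellFoundedLT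
    (fun x : V × V ↦ x.1 ∈ A ∧ x.2 ∈ B) (fun x ↦ Q.dist x.1 x.2)
    ⟨(hA.some, hB.some), hA.some_mem, hB.some_mem⟩
  replace hmin : ∀ a ∈ A, ∀ b ∈ B, Q.dist u v ≤ Q.dist a b := fun a ha b hb ↦
    (le_total _ _).elim id (@hmin (a, b) ⟨ha, hb⟩)
  obtain ⟨p, hp⟩ := hQ.exists_walk_length_eq_dist u v
  refine ⟨{w | w ∈ p.support}, p.connected_induce_support, ?_, ?_,
    fun K hK ↦ ncard_geodesic_inter_le_two hp hK⟩
  · refine Set.ncard_eq_one.2 ⟨u, Set.eq_singleton_iff_unique_mem.2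
      ⟨⟨p.start_mem_support, hu⟩, fun w ⟨hw, hwA⟩ ↦ ?_⟩⟩
    have hdist := dist_add_dist_of_mem_geodesic hp hw
    have := hmin w hwA v hv
    rw [← hdist.1, show Q.dist u w = 0 by omega, Walk.getVert_zero]
  · refine Set.ncard_eq_one.2 ⟨v, Set.eq_singleton_iff_unique_mem.2
      ⟨⟨p.end_mem_support, hv⟩, fun w ⟨hw, hwB⟩ ↦ ?_⟩⟩
    have hdist := dist_add_dist_of_mem_geodesic hp hw
    have := hmin u hu w hwB
    rw [← hdist.1, show Q.dist u w = p.length by omega, Walk.getVert_length]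

theorem exists_connected_subset_of_isClique_ncard_le_two {C A B : Set V}
    (hC : (Q.induce C).Connected) (hA : (C ∩ A).Nonempty) (hB : (C ∩ B).Nonempty) :
    ∃ D ⊆ C, (Q.induce D).Connected ∧ (D ∩ A).ncard = 1 ∧ (D ∩ B).ncard = 1 ∧
      ∀ K, Q.IsClique K → (D ∩ K).ncard ≤ 2 := by
  have hval := Subtype.val_injective (p := (· ∈ C))
  obtain ⟨D, hD, hDA, hDB, hDK⟩ := exists_connected_of_isClique_ncard_le_two hC
    (A := ((↑) : C → V) ⁻¹' A) (B := ((↑) : C → V) ⁻¹' B)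
    (have ⟨x, hx, hxA⟩ := hA; ⟨⟨x, hx⟩, hxA⟩) (have ⟨x, hx, hxB⟩ := hB; ⟨⟨x, hx⟩, hxB⟩)
  have ncard_inter : ∀ K : Set V, ((↑) '' D ∩ K).ncard = (D ∩ (↑) ⁻¹' K).ncard := fun K ↦ by
    rw [← Set.image_inter_preimage, Set.ncard_image_of_injective _ hval]
  refine ⟨(↑) '' D, Subtype.coe_image_subset C D,
    connected_induce_image (Embedding.induce C).toHom hD, ?_, ?_, fun K hK ↦ ?_⟩
  · rw [ncard_inter, hDA]
  · rw [ncard_inter, hDB]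
  · exact (ncard_inter K).trans_le (hDK _ fun a ha b hb hab ↦ hK ha hb (hval.ne hab))

end Geodesic

section CliqueUnion

variable {W κ : Type*} {G : SimpleGraph W} {U : κ → Set W}

/-- The union of the complete graphs on the sets `U i`. Adding it to a graph turns the host pieces
into cliques, in which connecting paths can be shortened. -/
def cliqueUnion (U : κ → Set W) : SimpleGraph W where
  Adj p q := p ≠ q ∧ ∃ i, p ∈ U i ∧ q ∈ U i
  symm := ⟨fun _ _ ⟨hne, i, hp, hq⟩ ↦ ⟨hne.symm, i, hq, hp⟩⟩
  loopless := ⟨fun _ h ↦ h.1 rfl⟩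

theorem isClique_sup_cliqueUnion (i : κ) : (G ⊔ cliqueUnion U).IsClique (U i) :=
  fun _ hp _ hq hpq ↦ .inr ⟨hpq, i, hp, hq⟩

theorem KDense.hasLocalConnectivity [Finite W] {X S T : Set W} {n : ℕ}
    (h : KDense G (Set.univ \ X) n) (hS : S ⊆ X) (hT : T ⊆ X) (hnS : n ≤ S.ncard)
    (hnT : n ≤ T.ncard) : HasLocalConnectivity G S T n := by
  intro A B hAB
  by_contra! hlt
  obtain ⟨s, hs, hsB⟩ : ∃ s ∈ S, s ∉ B := by
    by_contra! hSB
    exact hlt.not_ge <| hnS.trans <| Set.ncard_le_ncard <|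
      Set.subset_inter hAB.left_subset hSB
  obtain ⟨t, ht, htA⟩ : ∃ t ∈ T, t ∉ A := by
    by_contra! hTA
    exact hlt.not_ge <| hnT.trans <| Set.ncard_le_ncard <|
      Set.subset_inter hTA hAB.right_subset
  have hsA := hAB.left_subset hs
  have htB := hAB.right_subset ht
  have hsep : IsSeparation G A B :=
    ⟨Set.eq_univ_of_forall hAB.mem_or_mem, fun hsub ↦ hsB (hsub hsA), fun hsub ↦ htA (hsub htB),
      fun u hu v hv hadj ↦ by have := hAB.mem_of_adj hadj; grind⟩
  rcases h.2 A B hsep (mod_cast hlt.le) with hsub | hsub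
  · exact (hsub ⟨hsA, hsB⟩).2 (hS hs)
  · exact (hsub ⟨htB, htA⟩).2 (hT ht)

theorem exists_injective_forall_mem {ι : Type*} [Finite ι] {t : ι → Set W}
    (h : ∀ v, Nat.card ι ≤ (t v).ncard) : ∃ a : ι → W, a.Injective ∧ ∀ v, a v ∈ t v := by
  classical
  cases nonempty_fintype ι
  have hfin : ∀ v, (t v).Finite := fun v ↦
    have : Nonempty ι := ⟨v⟩
    Set.finite_of_ncard_pos (Nat.card_pos.trans_le (h v))
  obtain ⟨a, hinj, ha⟩ := (Finset.all_card_le_biUnion_card_iff_exists_injective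
    fun v ↦ (hfin v).toFinset).1 fun s ↦ by
      rcases s.eq_empty_or_nonempty with rfl | ⟨v, hv⟩
      · simp
      · calc s.card ≤ Nat.card ι := Nat.card_eq_fintype_card (α := ι) ▸ s.card_le_univ
          _ ≤ (hfin v).toFinset.card := Set.ncard_eq_toFinset_card (t v) (hfin v) ▸ h v
          _ ≤ _ := Finset.card_le_card (Finset.subset_biUnion_of_mem (fun v ↦ (hfin v).toFinset) hv)
  exact ⟨a, hinj, fun v ↦ (hfin v).mem_toFinset.1 (ha v)⟩

theorem exists_injective_forall_mem_of_fibers {ι : Type*} [Finite ι] {t : κ → Set W} {P : ι → κ}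
    (ht : Pairwise fun i j ↦ Disjoint (t i) (t j)) (h : ∀ i, (P ⁻¹' {i}).ncard ≤ (t i).ncard) :
    ∃ a : ι → W, a.Injective ∧ ∀ v, a v ∈ t (P v) := by
  choose a hinj ha using fun i ↦ exists_injective_forall_mem (ι := P ⁻¹' {i}) (t := fun _ ↦ t i)
    fun _ ↦ h i
  refine ⟨fun v ↦ a (P v) ⟨v, rfl⟩, fun u v huv ↦ ?_, fun v ↦ ha _ _⟩
  change a (P u) ⟨u, rfl⟩ = a (P v) ⟨v, rfl⟩ at huv
  have hP : P v = P u := by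
    by_contra hne
    exact Set.disjoint_left.1 (ht hne) (ha _ ⟨v, rfl⟩) (huv ▸ ha _ ⟨u, rfl⟩)
  have transport : ∀ i (hi : P v = i), a (P v) ⟨v, rfl⟩ = a i ⟨v, hi⟩ := by
    rintro _ rfl
    rfl
  exact congrArg Subtype.val (hinj _ (huv.trans (transport _ hP)))

theorem exists_connected_subset_union_of_isLinkage {S : Set W} {E : W → Set W}
    {i j l : κ} (hE : IsLinkage G S (U l) E) {s t : W} (hs : s ∈ S) (ht : t ∈ S)
    (hsi : s ∈ U i) (htj : t ∈ U j) :
    ∃ D ⊆ E s ∪ E t, ((G ⊔ cliqueUnion U).induce D).Connected ∧ (D ∩ U i).ncard = 1 ∧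
      (D ∩ U j).ncard = 1 ∧ ∀ m, (D ∩ U m).ncard ≤ 2 := by
  obtain ⟨u, hu, hul⟩ := hE.meets s hs
  obtain ⟨v, hv, hvl⟩ := hE.meets t ht
  have hEs := connected_induce_mono le_sup_left (hE.connected s hs) (G₂ := G ⊔ cliqueUnion U)
  have hEt := connected_induce_mono le_sup_left (hE.connected t ht) (G₂ := G ⊔ cliqueUnion U)
  have hconn : ((G ⊔ cliqueUnion U).induce (E s ∪ E t)).Connected := by
    by_cases huv : u = v
    · exact induce_union_connected hEs.preconnected hEt.preconnected ⟨u, hu, huv ▸ hv⟩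
    · exact connected_induce_union hEs.preconnected hEt.preconnected hu hv
        (isClique_sup_cliqueUnion l hul hvl huv)
  obtain ⟨D, hD, hDconn, hDi, hDj, hDK⟩ := exists_connected_subset_of_isClique_ncard_le_two hconn
    ⟨s, .inl (hE.mem s hs), hsi⟩ ⟨t, .inr (hE.mem t ht), htj⟩
  exact ⟨D, hD, hDconn, hDi, hDj, fun m ↦ hDK _ (isClique_sup_cliqueUnion m)⟩

/-- Menger's theorem joins `2|ι|` terminals, one in each prescribed `U i`, to a single set `U l`;
within the clique on `U l` the ends are then paired up as wanted. -/
theorem exists_disjoint_connectors [Finite W] {ι : Type*} [Finite ι]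
    (hU : Pairwise fun i j ↦ Disjoint (U i) (U j)) (hcard : ∀ i, 2 * Nat.card ι ≤ (U i).ncard)
    (hdense : KDense G (Set.univ \ ⋃ i, U i) (2 * Nat.card ι : ℕ)) (p q : ι → κ) :
    ∃ C : ι → Set W, (Pairwise fun f g ↦ Disjoint (C f) (C g)) ∧
      ∀ f, ((G ⊔ cliqueUnion U).induce (C f)).Connected ∧ (C f ∩ U (p f)).ncard = 1 ∧
        (C f ∩ U (q f)).ncard = 1 ∧ ∀ m, (C f ∩ U m).ncard ≤ 2 := by
  obtain ⟨l⟩ : Nonempty κ := by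
    by_contra hκ
    rw [not_nonempty_iff] at hκ
    exact hdense.1 (by simp)
  have hcard_sum : Nat.card (ι ⊕ ι) = 2 * Nat.card ι := by rw [Nat.card_sum, two_mul]
  obtain ⟨s, hs, hsU⟩ := exists_injective_forall_mem_of_fibers (P := Sum.elim p q) hU
    fun i ↦ (Set.ncard_le_card _).trans (hcard_sum.trans_le (hcard i))
  have hSn : (Set.range s).ncard = 2 * Nat.card ι := by
    rw [← Set.image_univ, Set.ncard_image_of_injective _ hs, Set.ncard_univ, hcard_sum]
  have hS : Set.range s ⊆ ⋃ i, U i := Set.range_subset_iff.2 fun f ↦ Set.mem_iUnion_of_mem _ (hsU f)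
  obtain ⟨X, hX, hXn, E, hE⟩ := exists_isLinkage
    (hdense.hasLocalConnectivity hS (Set.subset_iUnion U l) hSn.ge (hcard l))
  obtain rfl := Set.eq_of_subset_of_ncard_le hX (hSn.trans hXn.symm).le
  choose C hCE hC using fun f ↦ exists_connected_subset_union_of_isLinkage hE
    ⟨Sum.inl f, rfl⟩ ⟨Sum.inr f, rfl⟩ (hsU (.inl f)) (hsU (.inr f))
  refine ⟨C, fun f g hfg ↦ ?_, hC⟩
  have hdisj : ∀ {a b : ι ⊕ ι}, a ≠ b → Disjoint (E (s a)) (E (s b)) := fun hab ↦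
    hE.pairwiseDisjoint ⟨_, rfl⟩ ⟨_, rfl⟩ (hs.ne hab)
  refine Set.disjoint_of_subset (hCE f) (hCE g) ?_
  simp only [Set.disjoint_union_left, Set.disjoint_union_right]
  exact ⟨⟨hdisj (by simpa), hdisj (by simp)⟩, hdisj (by simp), hdisj (by simpa)⟩

end CliqueUnion

section EdgeExtension

variable {α β γ V ι : Type*} {H : SimpleGraph α} {J : SimpleGraph γ} {G : SimpleGraph β}
  {D : SimpleGraph V} {A E : Set V}

theorem exists_adj_iff_of_embedding (f : H ↪g J) {u v : γ} :
    (∃ a b, u = f a ∧ v = f b ∧ H.Adj a b) ↔ u ∈ Set.range f ∧ v ∈ Set.range f ∧ J.Adj u v := by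
  constructor
  · rintro ⟨a, b, rfl, rfl, hab⟩
    exact ⟨⟨a, rfl⟩, ⟨b, rfl⟩, f.map_adj_iff.2 hab⟩
  · rintro ⟨⟨a, rfl⟩, ⟨b, rfl⟩, hab⟩
    exact ⟨a, b, rfl, rfl, f.map_adj_iff.1 hab⟩

theorem isSimpleEdgeExt_of_compl_range_eq_singleton (f : H ↪g J) {x : γ}
    (hrange : (Set.range f)ᶜ = {x}) (hx : (J.neighborSet x).Subsingleton) :
    IsSimpleEdgeExt H J := by
  have hmem : ∀ z, z ∉ Set.range f ↔ z = x := Set.ext_iff.1 hrange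
  refine ⟨f.toEmbedding, .inl ⟨x, (hmem x).2 rfl, fun y ↦ ?_, ?_⟩⟩
  · exact (em (y ∈ Set.range f)).symm.imp_left (hmem y).1
  change (∀ u v, _ ↔ ∃ a b, u = f a ∧ v = f b ∧ H.Adj a b) ∨
    ∃ a, ∀ u v, _ ↔ (∃ a b, u = f a ∧ v = f b ∧ H.Adj a b) ∨ (u = x ∧ v = f a) ∨ (v = x ∧ u = f a)
  simp only [exists_adj_iff_of_embedding]
  rcases hx.eq_empty_or_singleton with hempty | ⟨y, hy⟩
  · have hnot : ∀ z, ¬ J.Adj x z := Set.eq_empty_iff_forall_notMem.1 hempty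
    refine .inl fun u v ↦ ⟨fun hadj ↦ ⟨?_, ?_, hadj⟩, fun h ↦ h.2.2⟩
    · by_contra hu
      exact hnot v ((hmem u).1 hu ▸ hadj)
    · by_contra hv
      exact hnot u ((hmem v).1 hv ▸ hadj.symm)
  · have hadj : ∀ z, J.Adj x z ↔ z = y := Set.ext_iff.1 hy
    obtain ⟨a, rfl⟩ : y ∈ Set.range f := by
      by_contra hyf
      exact J.irrefl ((hadj x).2 ((hmem y).1 hyf).symm)
    refine .inr ⟨a, fun u v ↦ ?_⟩
    have := hmem u
    have := hmem v
    grind [J.adj_comm u v]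

theorem isSimpleEdgeExt_of_compl_range_eq_pair (f : H ↪g J) {x y : γ}
    (hrange : (Set.range f)ᶜ = {x, y}) (hx : J.neighborSet x = {y}) (hy : J.neighborSet y = {x}) :
    IsSimpleEdgeExt H J := by
  have hmem : ∀ z, z ∉ Set.range f ↔ z = x ∨ z = y := Set.ext_iff.1 hrange
  have hadjx : ∀ z, J.Adj x z ↔ z = y := Set.ext_iff.1 hx
  have hadjy : ∀ z, J.Adj y z ↔ z = x := Set.ext_iff.1 hy
  refine ⟨f.toEmbedding, .inr ⟨x, y, ((hadjx y).2 rfl).ne, (hmem x).2 (.inl rfl),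
    (hmem y).2 (.inr rfl), fun z ↦ ?_, fun u v ↦ ?_⟩⟩
  · by_cases hz : z ∈ Set.range f
    · exact .inr (.inr hz)
    · exact ((hmem z).1 hz).imp_right .inl
  · change _ ↔ (∃ a b, u = f a ∧ v = f b ∧ H.Adj a b) ∨ _
    rw [exists_adj_iff_of_embedding]
    have := hmem u
    have := hmem v
    grind [J.adj_comm u v]

/-- The vertices of `E` turn `D[A]` into the simple edge extension `D[A ∪ E]` of it. -/
def IsAttachment (D : SimpleGraph V) (A E : Set V) : Prop :=
  Disjoint A E ∧ ((∃ x, E = {x} ∧ (D.neighborSet x ∩ A).Subsingleton) ∨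
    ∃ x y, E = {x, y} ∧ D.Adj x y ∧ ∀ a ∈ A, ¬ D.Adj x a ∧ ¬ D.Adj y a)

theorem IsAttachment.isSimpleEdgeExt (h : IsAttachment D A E) (e : D.induce A ≃g H)
    (d : D.induce (A ∪ E) ≃g J) : IsSimpleEdgeExt H J := by
  let f : H ↪g J := d.toEmbedding.comp
    ((induceHomOfLE D Set.subset_union_left).comp e.symm.toEmbedding)
  have hrange : ∀ z : ↥(A ∪ E), d z ∈ (Set.range f)ᶜ ↔ z.1 ∈ E := by
    have hA : ∀ z : ↥(A ∪ E), d z ∈ Set.range f ↔ z.1 ∈ A := by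
      refine fun z ↦ ⟨?_, fun hz ↦ ⟨e ⟨z.1, hz⟩, by simp [f]⟩⟩
      rintro ⟨a, ha⟩
      exact d.injective ha ▸ (e.symm a).2
    intro z
    rw [Set.mem_compl_iff, hA]
    exact ⟨z.2.resolve_left, fun hzE hzA ↦ Set.disjoint_left.1 h.1 hzA hzE⟩
  obtain ⟨-, ⟨x, rfl, hx⟩ | ⟨x, y, rfl, hxy, hnot⟩⟩ := h
  · refine isSimpleEdgeExt_of_compl_range_eq_singleton f (x := d ⟨x, .inr rfl⟩) ?_ ?_
    · rw [Set.ext_iff, d.surjective.forall]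
      refine fun z ↦ (hrange z).trans ?_
      simp [Subtype.ext_iff]
    · have hA : ∀ z : ↥(A ∪ {x}), D.Adj x z.1 → z.1 ∈ D.neighborSet x ∩ A := fun z hz ↦
        ⟨hz, z.2.resolve_right hz.ne'⟩
      refine d.surjective.forall.2 fun z hz ↦ d.surjective.forall.2 fun w hw ↦ ?_
      rw [mem_neighborSet, d.map_adj_iff] at hz hw
      exact congr_arg d (Subtype.ext (hx (hA z hz) (hA w hw)))
  · refine isSimpleEdgeExt_of_compl_range_eq_pair f (x := d ⟨x, .inr (.inl rfl)⟩)
      (y := d ⟨y, .inr (.inr rfl)⟩) ?_ ?_ ?_ <;>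
    refine Set.ext (d.surjective.forall.2 fun z ↦ ?_)
    · refine (hrange z).trans ?_
      simp [Subtype.ext_iff]
    all_goals
      have := z.2
      simp only [mem_neighborSet, d.map_adj_iff, comap_adj, Function.Embedding.subtype_apply,
        Set.mem_singleton_iff, d.injective.eq_iff, Subtype.ext_iff]
      grind [D.adj_comm x y, D.irrefl]

theorem exists_iso_fin [Finite α] (H : SimpleGraph α) :
    ∃ (n : ℕ) (J : SimpleGraph (Fin n)), Nonempty (H ≃g J) :=
  ⟨Nat.card α, H.map (Finite.equivFin α).toEmbedding, ⟨Iso.map (Finite.equivFin α) H⟩⟩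

theorem IsPlusKLinked.of_iso {k : ℕ} (h : IsPlusKLinked H k G) (e : H ≃g J) :
    IsPlusKLinked J k G := by
  rintro m L ⟨j, hj, c, ⟨e₀⟩, hc⟩
  exact h m L ⟨j, hj, c, ⟨e₀.comp e⟩, hc⟩

theorem IsPlusKLinked.mono {j k : ℕ} (h : IsPlusKLinked H k G) (hjk : j ≤ k) :
    IsPlusKLinked H j G := by
  rintro m L ⟨i, hi, hc⟩
  exact h m L ⟨i, hi.trans hjk, hc⟩

theorem IsLinked.of_iso (h : IsLinked H G) (e : H ≃g J) : IsLinked J G := by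
  refine ⟨(Nat.card_congr e.toEquiv).symm.trans_le h.1, fun φ ↦ ?_⟩
  obtain ⟨μ, ⟨hdisj, hconn, hadj⟩, hroot⟩ := h.2 (e.toEquiv.toEmbedding.trans φ)
  refine ⟨fun v ↦ μ (e.symm v), ⟨fun u v huv ↦ hdisj _ _ (e.symm.injective.ne huv),
    fun v ↦ hconn _, fun u v huv ↦ hadj _ _ (e.symm.map_adj_iff.2 huv)⟩, fun v ↦ ?_⟩
  simpa using hroot (e.symm v)

theorem IsPlusKLinked.isLinked [Finite α] {k : ℕ} (h : IsPlusKLinked H k G) : IsLinked H G := by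
  obtain ⟨n, L, ⟨e⟩⟩ := exists_iso_fin H
  exact (h n L ⟨0, k.zero_le, fun _ ↦ ⟨n, L⟩, ⟨e⟩, ⟨Iso.refl⟩,
    fun i hi ↦ absurd hi i.not_lt_zero⟩).of_iso e.symm

theorem IsPlusKLinked.induce_union [Finite V] {k : ℕ}
    (h : IsPlusKLinked (D.induce A) (k + 1) G) (hE : IsAttachment D A E) :
    IsPlusKLinked (D.induce (A ∪ E)) k G := by
  rintro m L ⟨j, hj, c, ⟨d⟩, hL, hc⟩
  obtain ⟨n, K, ⟨e⟩⟩ := exists_iso_fin (D.induce A)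
  refine h m L ⟨j + 1, by omega, fun i ↦ Nat.casesOn i ⟨n, K⟩ c, ⟨e⟩, hL, ?_⟩
  rintro (_ | i) hi
  · exact hE.isSimpleEdgeExt e d
  · exact hc i (by omega)

/-- Disjoint attachments at `A`, or empty sets, with no edges of `D` between them; unlike a
sequence of extensions they can be added in any order. -/
structure IsAttachmentFamily (D : SimpleGraph V) (A : Set V) (E : ι → Set V) : Prop where
  attach : ∀ f, E f = ∅ ∨ IsAttachment D A (E f)
  disjoint : Pairwise fun f g ↦ Disjoint (E f) (E g)
  not_adj : ∀ f g, f ≠ g → ∀ p ∈ E f, ∀ q ∈ E g, ¬ D.Adj p q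

theorem IsAttachmentFamily.isAttachment_union {E : ι → Set V} (hE : IsAttachmentFamily D A E)
    {s : Set ι} {f : ι} (hf : f ∉ s) (hatt : IsAttachment D A (E f)) :
    IsAttachment D (A ∪ ⋃ g ∈ s, E g) (E f) := by
  have hne : ∀ g ∈ s, f ≠ g := fun g hg ↦ by rintro rfl; exact hf hg
  have hB : ∀ x ∈ E f, ∀ b ∈ A ∪ ⋃ g ∈ s, E g, D.Adj x b → b ∈ A := by
    rintro x hx b (hb | hb) hadj
    · exact hb
    · obtain ⟨g, hg, hbg⟩ := Set.mem_iUnion₂.1 hb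
      exact absurd hadj (hE.not_adj f g (hne g hg) x hx b hbg)
  refine ⟨Set.disjoint_union_left.2 ⟨hatt.1, Set.disjoint_iUnion₂_left.2 fun g hg ↦
    hE.disjoint (hne g hg).symm⟩, ?_⟩
  rcases hatt.2 with ⟨x, hx, hsub⟩ | ⟨x, y, hxy, hadj, hnot⟩
  · exact .inl ⟨x, hx, hsub.anti fun b hb ↦ ⟨hb.1, hB x (by simp [hx]) b hb.2 hb.1⟩⟩
  · exact .inr ⟨x, y, hxy, hadj, fun b hb ↦
      ⟨fun h ↦ (hnot b (hB x (by simp [hxy]) b hb h)).1 h,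
        fun h ↦ (hnot b (hB y (by simp [hxy]) b hb h)).2 h⟩⟩

theorem IsPlusKLinked.induce_union_biUnion [Finite V] {E : ι → Set V}
    (hE : IsAttachmentFamily D A E) (s : Finset ι) {k : ℕ}
    (h : IsPlusKLinked (D.induce A) (k + s.card) G) :
    IsPlusKLinked (D.induce (A ∪ ⋃ f ∈ (s : Set ι), E f)) k G := by
  classical
  induction s using Finset.induction_on generalizing k with
  | empty =>
    have hA : A ∪ ⋃ f ∈ ((∅ : Finset ι) : Set ι), E f = A := by simp
    rw [hA]
    exact h
  | insert f s hf ih =>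
    rw [Finset.card_insert_of_notMem hf, add_comm s.card, ← add_assoc] at h
    rw [Finset.coe_insert, Set.biUnion_insert, Set.union_comm (E f), ← Set.union_assoc]
    rcases hE.attach f with hempty | hatt
    · rw [hempty, Set.union_empty]
      exact ih h |>.mono k.le_succ
    · exact (ih h).induce_union (hE.isAttachment_union (by simpa using hf) hatt)

theorem IsPlusKLinked.isLinked_induce_union_iUnion [Finite V] [Finite ι] {E : ι → Set V}
    (hE : IsAttachmentFamily D A E) (h : IsPlusKLinked (D.induce A) (Nat.card ι) G) :
    IsLinked (D.induce (A ∪ ⋃ f, E f)) G := by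
  have := Fintype.ofFinite ι
  have h' : IsPlusKLinked (D.induce A) (0 + (Finset.univ : Finset ι).card) G := by
    simpa [Nat.card_eq_fintype_card] using h
  have hE' := (h'.induce_union_biUnion hE).isLinked
  rwa [Finset.coe_univ, Set.biUnion_univ] at hE'

end EdgeExtension

section LinkedBounds

variable {α β : Type*} {H : SimpleGraph α} {G : SimpleGraph β}

theorem exists_embedding_of_subset_of_ncard_le [Finite β] [Finite α]
    (hcard : Nat.card α ≤ Nat.card β) {u v : α} (huv : u ≠ v) {x y : β} (hxy : x ≠ y)
    {N : Set β} (hx : x ∈ N) (hy : y ∈ N) (hN : N.ncard ≤ Nat.card α) :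
    ∃ φ : α ↪ β, φ u = x ∧ φ v = y ∧ N ⊆ Set.range φ := by
  classical
  cases nonempty_fintype α
  obtain ⟨R, hNR, -, hR⟩ := Set.exists_subsuperset_card_eq N.subset_univ hN
    (hcard.trans_eq (Set.ncard_univ β).symm)
  have hcardR : Fintype.card α = R.toFinite.toFinset.card := by
    rw [← Set.ncard_eq_toFinset_card R, hR, Nat.card_eq_fintype_card]
  obtain ⟨e, he⟩ := Finset.exists_equiv_extend_of_card_eq hcardR (s := {u, v})
    (f := fun w ↦ if w = u then x else y) (by simp [Finset.subset_iff, hNR hx, hNR hy, huv.symm])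
    (by simp [Set.InjOn, huv.symm, hxy, hxy.symm])
  refine ⟨e.toEmbedding.trans (.subtype _), by simp [he u], by simp [he v, huv.symm],
    fun z hz ↦ ?_⟩
  exact ⟨e.symm ⟨z, R.toFinite.mem_toFinset.2 (hNR hz)⟩, by simp⟩

/-- If the degree of `t` were smaller, one could root `u` at `t`, root `v` at a non-neighbour of `t`
and use up all neighbours of `t` as roots of the other vertices. -/
theorem IsLinked.card_le_ncard_neighborSet_succ [Finite β] [Finite α] (h : IsLinked H G) {u v : α}
    (huv : H.Adj u v) (t : β) : Nat.card α ≤ (G.neighborSet t).ncard + 1 := by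
  by_contra! hlt
  have hN := Set.ncard_insert_of_notMem (s := G.neighborSet t) (a := t) G.irrefl
  obtain ⟨y, hy⟩ : ∃ y, y ∉ insert t (G.neighborSet t) := by
    by_contra! hall
    have := h.1
    rw [← Set.ncard_univ β, ← Set.eq_univ_of_forall hall] at this
    omega
  have hyt : t ≠ y := fun hty ↦ hy (.inl hty.symm)
  obtain ⟨φ, hφu, hφv, hφ⟩ := exists_embedding_of_subset_of_ncard_le h.1 huv.ne hyt
    (N := insert y (insert t (G.neighborSet t))) (by simp) (by simp)
    (by rw [Set.ncard_insert_of_notMem hy]; omega)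
  obtain ⟨μ, ⟨hdisj, hconn, hadj⟩, hroot⟩ := h.2 φ
  have eq_of_mem : ∀ {a b : α}, φ b ∈ μ a → b = a := fun {a b} hb ↦ by
    by_contra hab
    exact Set.disjoint_left.1 (hdisj _ _ hab) (hroot b) hb
  have hμu : μ u ⊆ {t} := by
    refine subset_of_connected_induce (hconn u) ⟨t, hφu ▸ hroot u, rfl⟩ ?_
    rintro _ rfl b hb htb
    obtain ⟨w, rfl⟩ := hφ (.inr (.inr htb))
    exact eq_of_mem hb ▸ hφu
  obtain ⟨a, ha, b, hb, hab⟩ := hadj u v huv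
  obtain rfl := hμu ha
  obtain ⟨w, rfl⟩ := hφ (.inr (.inr hab))
  obtain rfl := eq_of_mem hb
  exact hy (.inr (hφv ▸ hab))

theorem isAttachmentFamily_sum_boxProd (H : SimpleGraph α) (ι : Type*) :
    IsAttachmentFamily (H ⊕g ((⊥ : SimpleGraph ι) □ (⊤ : SimpleGraph Bool))) (Set.range Sum.inl)
      fun f ↦ {.inr (f, true), .inr (f, false)} where
  attach f := .inr ⟨by simp [Set.disjoint_right], .inr ⟨_, _, rfl, by simp, by simp⟩⟩
  disjoint f g hfg := by simp [hfg.symm]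
  not_adj f g hfg := by simp [hfg]

theorem IsPlusKLinked.isLinked_sum_boxProd [Finite α] {ι : Type*} [Finite ι]
    (h : IsPlusKLinked H (Nat.card ι) G) :
    IsLinked (H ⊕g ((⊥ : SimpleGraph ι) □ (⊤ : SimpleGraph Bool))) G := by
  have huniv : Set.range (Sum.inl (α := α)) ∪
      ⋃ f : ι, {Sum.inr (f, true), Sum.inr (f, false)} = Set.univ := by
    ext (a | ⟨f, _ | _⟩) <;> simp
  have h' := (h.of_iso Embedding.sumInl.isoInduceRange).isLinked_induce_union_iUnion
    (isAttachmentFamily_sum_boxProd H ι)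
  rw [huniv] at h'
  exact h'.of_iso (induceUnivIso _)

theorem IsPlusKLinked.card_add_le [Finite α] {k : ℕ} (h : IsPlusKLinked H k G) :
    Nat.card α + 2 * k ≤ Nat.card β := by
  have hlink := IsPlusKLinked.isLinked_sum_boxProd (ι := Fin k) (by simpa using h)
  simpa [Nat.card_sum, mul_comm] using hlink.1

theorem IsPlusKLinked.card_add_le_ncard_neighborSet_succ [Finite α] [Finite β] {k : ℕ}
    (h : IsPlusKLinked H k G) (hk : 0 < k) (t : β) :
    Nat.card α + 2 * k ≤ (G.neighborSet t).ncard + 1 := by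
  have hlink := IsPlusKLinked.isLinked_sum_boxProd (ι := Fin k) (by simpa using h)
  simpa [mul_comm] using hlink.card_le_ncard_neighborSet_succ (u := .inr (⟨0, hk⟩, true))
    (v := .inr (⟨0, hk⟩, false)) (by simp) t

theorem IsPlusKLinked.card_add_le_ncard_neighborSet_inter [Finite α] [Finite β] {k : ℕ}
    {K : G.Subgraph} (h : IsPlusKLinked H k K.coe) (hk : 0 < k) {t : β} (ht : t ∈ K.verts) :
    Nat.card α + 2 * k ≤ (G.neighborSet t ∩ K.verts).ncard + 1 := by
  refine (h.card_add_le_ncard_neighborSet_succ hk ⟨t, ht⟩).trans (Nat.add_le_add_right ?_ 1)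
  rw [← Set.ncard_image_of_injective _ Subtype.val_injective]
  refine Set.ncard_le_ncard ?_
  rintro _ ⟨v, hv, rfl⟩
  exact ⟨K.adj_sub hv, v.2⟩

end LinkedBounds

section RootedModel

variable {α κ W : Type*} {H : SimpleGraph α} {D Q G : SimpleGraph W} {S Y : Set W}
  {U : κ → Set W} {M : W → Set W}

/-- A model in `G` of the graph that `D` induces on `S`, in which every branch set `M v` contains
`v` itself: `D` lives on the vertex set of the host, so that its vertices are their own roots. -/
structure IsRootedModelOn (D G : SimpleGraph W) (S : Set W) (M : W → Set W) : Prop where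
  mem : ∀ v ∈ S, v ∈ M v
  pairwiseDisjoint : S.PairwiseDisjoint M
  connected : ∀ v ∈ S, (G.induce (M v)).Connected
  exists_adj : ∀ u ∈ S, ∀ v ∈ S, D.Adj u v → ∃ a ∈ M u, ∃ b ∈ M v, G.Adj a b

theorem IsLinked.exists_isRootedModelOn {K : G.Subgraph} (h : IsLinked (D.induce S) K.coe)
    (hS : S ⊆ K.verts) : ∃ M, IsRootedModelOn D G S M ∧ ∀ v ∈ S, M v ⊆ K.verts := by
  obtain ⟨μ, ⟨hdisj, hconn, hadj⟩, hroot⟩ := h.2 (Set.embeddingOfSubset S K.verts hS)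
  obtain ⟨M, hM⟩ : ∃ M : W → Set W, ∀ v (hv : v ∈ S), M v = Subtype.val '' μ ⟨v, hv⟩ :=
    ⟨fun v ↦ ⋃ hv : v ∈ S, Subtype.val '' μ ⟨v, hv⟩, fun v hv ↦ by simp [hv]⟩
  refine ⟨M, ⟨fun v hv ↦ ?_, fun u hu v hv huv ↦ ?_, fun v hv ↦ ?_, fun u hu v hv huv ↦ ?_⟩,
    fun v hv ↦ ?_⟩
  · rw [hM v hv]
    exact ⟨_, hroot ⟨v, hv⟩, rfl⟩
  · rw [Function.onFun, hM u hu, hM v hv]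
    exact (Set.disjoint_image_iff Subtype.val_injective).2 (hdisj _ _ (by simpa using huv))
  · rw [hM v hv]
    exact connected_induce_image K.hom (hconn _)
  · rw [hM u hu, hM v hv]
    obtain ⟨a, ha, b, hb, hab⟩ := hadj ⟨u, hu⟩ ⟨v, hv⟩ huv
    exact ⟨a, ⟨a, ha, rfl⟩, b, ⟨b, hb, rfl⟩, hab.adj_sub⟩
  · rw [hM v hv]
    exact Subtype.coe_image_subset _ _

theorem eq_of_mem_of_pairwise_disjoint (hU : Pairwise fun i j ↦ Disjoint (U i) (U j)) {v : W}
    {i j : κ} (hi : v ∈ U i) (hj : v ∈ U j) : i = j := by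
  by_contra hij
  exact Set.disjoint_left.1 (hU hij) hi hj

theorem exists_option_forall_eq_some_iff (hU : Pairwise fun i j ↦ Disjoint (U i) (U j)) :
    ∃ p : W → Option κ, ∀ v i, p v = some i ↔ v ∈ U i := by
  classical
  refine ⟨fun v ↦ if h : ∃ i, v ∈ U i then some h.choose else none, fun v i ↦ ?_⟩
  by_cases h : ∃ i, v ∈ U i
  · simp only [dif_pos h, Option.some.injEq]
    exact ⟨fun hi ↦ hi ▸ h.choose_spec, eq_of_mem_of_pairwise_disjoint hU h.choose_spec⟩
  · simpa [h] using not_exists.1 h i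

theorem exists_isRootedModelOn_of_fibers (p : W → κ) (hD : ∀ u v, D.Adj u v → p u = p v)
    (h : ∀ i, ∃ M, IsRootedModelOn D G (Y ∩ p ⁻¹' {i}) M ∧
      ∀ v ∈ Y ∩ p ⁻¹' {i}, M v ⊆ p ⁻¹' {i}) :
    ∃ M, IsRootedModelOn (G ⊔ D) G Y M := by
  choose L hL hLp using h
  have hmem : ∀ v ∈ Y, v ∈ L (p v) v := fun v hv ↦ (hL _).mem v ⟨hv, rfl⟩
  refine ⟨fun v ↦ L (p v) v, hmem, fun u hu v hv huv ↦ ?_,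
    fun v hv ↦ (hL _).connected v ⟨hv, rfl⟩, ?_⟩
  · refine Set.disjoint_left.2 fun x (hxu : x ∈ L (p u) u) (hxv : x ∈ L (p v) v) ↦ ?_
    have hpuv : p v = p u := (hLp _ v ⟨hv, rfl⟩ hxv).symm.trans (hLp _ u ⟨hu, rfl⟩ hxu)
    rw [hpuv] at hxv
    exact Set.disjoint_left.1 ((hL _).pairwiseDisjoint ⟨hu, rfl⟩ ⟨hv, hpuv⟩ huv) hxu hxv
  · rintro u hu v hv (huv | huv)
    · exact ⟨u, hmem u hu, v, hmem v hv, huv⟩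
    · have hpuv := hD u v huv
      change ∃ a ∈ L (p u) u, ∃ b ∈ L (p v) v, G.Adj a b
      rw [← hpuv]
      exact (hL _).exists_adj u ⟨hu, rfl⟩ v ⟨hv, hpuv.symm⟩ huv

theorem exists_isRootedModelOn_of_pieces (hU : Pairwise fun i j ↦ Disjoint (U i) (U j))
    (hD : D ≤ cliqueUnion U)
    (h : ∀ i, ∃ M, IsRootedModelOn D G (Y ∩ U i) M ∧ ∀ v ∈ Y ∩ U i, M v ⊆ U i) :
    ∃ M, IsRootedModelOn (G ⊔ D) G Y M := by
  obtain ⟨p, hp⟩ := exists_option_forall_eq_some_iff hU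
  have hDp : ∀ u v, D.Adj u v → ∃ i, p u = some i ∧ p v = some i := by
    intro u v huv
    obtain ⟨-, i, hu, hv⟩ := hD huv
    exact ⟨i, (hp u i).2 hu, (hp v i).2 hv⟩
  refine exists_isRootedModelOn_of_fibers p (fun u v huv ↦ ?_) fun i ↦ ?_
  · obtain ⟨i, hu, hv⟩ := hDp u v huv
    exact hu.trans hv.symm
  · rcases i with - | i
    · refine ⟨fun v ↦ {v}, ⟨fun v _ ↦ rfl, fun u _ v _ huv ↦ by simpa using huv,
        fun v _ ↦ connected_induce_singleton G v, fun u hu v _ huv ↦ ?_⟩, fun v hv ↦ ?_⟩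
      · obtain ⟨i, hi, -⟩ := hDp u v huv
        exact absurd (hu.2.symm.trans hi) (by simp)
      · exact Set.singleton_subset_iff.2 hv.2
    · have hpi : p ⁻¹' {some i} = U i := Set.ext fun v ↦ hp v i
      exact hpi ▸ h i

theorem IsModel.of_isRootedModelOn {Z : α → Set W} (hZ : IsModel H Q Z) (hZY : ∀ v, Z v ⊆ Y)
    (hM : IsRootedModelOn Q G Y M) : IsModel H G fun v ↦ ⋃ w ∈ Z v, M w := by
  obtain ⟨hdisj, hconn, hadj⟩ := hZ
  refine ⟨fun u v huv ↦ ?_, fun v ↦ ?_, fun u v huv ↦ ?_⟩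
  · refine Set.disjoint_iUnion₂_left.2 fun a ha ↦ Set.disjoint_iUnion₂_right.2 fun b hb ↦ ?_
    exact hM.pairwiseDisjoint (hZY u ha) (hZY v hb) fun hab ↦
      Set.disjoint_left.1 (hdisj u v huv) ha (hab ▸ hb)
  · exact connected_induce_biUnion (hconn v) (fun w hw ↦ hM.connected w (hZY v hw))
      fun a ha b hb ↦ hM.exists_adj a (hZY v ha) b (hZY v hb)
  · obtain ⟨a, ha, b, hb, hab⟩ := hadj u v huv
    obtain ⟨s, hs, t, ht, hst⟩ := hM.exists_adj a (hZY u ha) b (hZY v hb) hab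
    exact ⟨s, Set.mem_biUnion ha hs, t, Set.mem_biUnion hb ht, hst⟩

end RootedModel

section Routing

variable {α ι κ W : Type*} {H H₀ : SimpleGraph α} {G : SimpleGraph W} {P : α → κ} {U : κ → Set W}
  {N : ι → Set α} {φ : α → W} {C : ι → Set W} {p q : W} {f g : ι} {i : κ} {u v : α}

/-- Roots `φ v` in the pieces `U (P v)` and disjoint connectors `C f`, one for each demand `f`.
The connector `C f` is to be joined to the roots of the vertices in `N f`; where it has to be, it
uses the piece in one vertex only. -/
structure IsRouting (G : SimpleGraph W) (P : α → κ) (U : κ → Set W) (N : ι → Set α) (φ : α → W)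
    (C : ι → Set W) : Prop where
  injective : φ.Injective
  mem (v : α) : φ v ∈ U (P v)
  notMem (v : α) (f : ι) : φ v ∉ C f
  disjoint : Pairwise fun f g ↦ Disjoint (C f) (C g)
  connected (f : ι) : ((G ⊔ cliqueUnion U).induce (C f)).Connected
  ncard_le_two (f : ι) (i : κ) : (C f ∩ U i).ncard ≤ 2
  ncard_eq_one (f : ι) (v : α) : v ∈ N f → (C f ∩ U (P v)).ncard = 1

/-- The graph that the pieces of a routing have to realize: a copy of `H₀` on the roots, the parts
of the connectors `C f` inside the pieces, and the edges joining `C f` to the roots of `N f`. -/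
def demandGraph (H₀ : SimpleGraph α) (U : κ → Set W) (N : ι → Set α) (φ : α → W) (C : ι → Set W) :
    SimpleGraph W :=
  cliqueUnion U ⊓ fromRel fun p q ↦
    (∃ u v, H₀.Adj u v ∧ φ u = p ∧ φ v = q) ∨ ∃ f, p ∈ C f ∧ (q ∈ C f ∨ q ∈ φ '' N f)

theorem demandGraph_le : demandGraph H₀ U N φ C ≤ cliqueUnion U :=
  inf_le_left

theorem demandGraph_adj_of_mem (hp : p ∈ C f) (hq : q ∈ C f) (hpq : (cliqueUnion U).Adj p q) :
    (demandGraph H₀ U N φ C).Adj p q :=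
  ⟨hpq, hpq.ne, .inl (.inr ⟨f, hp, .inl hq⟩)⟩

/-- The root of `v` together with the connectors of the demands that start in `v`. -/
def branchSet (φ : α → W) (C : ι → Set W) (x : ι → α) (v : α) : Set W :=
  insert (φ v) (⋃ f ∈ x ⁻¹' {v}, C f)

namespace IsRouting

variable (h : IsRouting G P U N φ C)
include h

theorem eq_of_mem (hf : p ∈ C f) (hg : p ∈ C g) : f = g := by
  by_contra hfg
  exact Set.disjoint_left.1 (h.disjoint hfg) hf hg

theorem demandGraph_adj_map (huv : P u = P v) :
    (demandGraph H₀ U N φ C).Adj (φ u) (φ v) ↔ H₀.Adj u v := by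
  have hcongr : ∀ {a b}, H₀.Adj a b → φ a = φ u → φ b = φ v → H₀.Adj u v := fun hab ha hb ↦
    h.injective ha ▸ h.injective hb ▸ hab
  constructor
  · rintro ⟨-, -, (⟨a, b, hab, ha, hb⟩ | ⟨f, hf, -⟩) | (⟨a, b, hab, ha, hb⟩ | ⟨f, hf, -⟩)⟩
    · exact hcongr hab ha hb
    · exact absurd hf (h.notMem u f)
    · exact hcongr hab.symm hb ha
    · exact absurd hf (h.notMem v f)
  · intro hadj
    have hne : φ u ≠ φ v := h.injective.ne hadj.ne
    exact ⟨⟨hne, P u, h.mem u, huv ▸ h.mem v⟩, hne, .inl (.inl ⟨u, v, hadj, rfl, rfl⟩)⟩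

theorem demandGraph_adj_root (hp : p ∈ C f) (hpv : p ∈ U (P v)) :
    (demandGraph H₀ U N φ C).Adj p (φ v) ↔ v ∈ N f := by
  constructor
  · rintro ⟨-, -, (⟨a, b, -, rfl, -⟩ | ⟨g, hg, hv⟩) | (⟨a, b, -, -, rfl⟩ | ⟨g, hg, -⟩)⟩
    · exact absurd hp (h.notMem a f)
    · obtain rfl := h.eq_of_mem hp hg
      exact h.injective.mem_set_image.1 (hv.resolve_left (h.notMem v f))
    · exact absurd hp (h.notMem b f)
    · exact absurd hg (h.notMem v g)
  · intro hv
    have hne : p ≠ φ v := fun hpv ↦ h.notMem v f (hpv ▸ hp)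
    exact ⟨⟨hne, P v, hpv, h.mem v⟩, hne, .inl (.inr ⟨f, hp, .inr ⟨v, hv, rfl⟩⟩)⟩

theorem not_demandGraph_adj (hfg : f ≠ g) (hp : p ∈ C f) (hq : q ∈ C g) :
    ¬ (demandGraph H₀ U N φ C).Adj p q := by
  have key : ∀ {f g p q}, f ≠ g → p ∈ C f → q ∈ C g →
      ¬ ((∃ u v, H₀.Adj u v ∧ φ u = p ∧ φ v = q) ∨ ∃ f, p ∈ C f ∧ (q ∈ C f ∨ q ∈ φ '' N f)) := by
    rintro f g p q hfg hp hq (⟨a, b, -, rfl, -⟩ | ⟨e, he, he' | ⟨a, -, rfl⟩⟩)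
    · exact h.notMem a f hp
    · exact hfg ((h.eq_of_mem hp he).trans (h.eq_of_mem he' hq))
    · exact h.notMem a g hq
  rintro ⟨-, -, hpq | hqp⟩
  · exact key hfg hp hq hpq
  · exact key hfg.symm hq hp hqp

theorem isAttachment_inter [Finite W] (hN : Set.InjOn P (N f)) (hne : (C f ∩ U i).Nonempty) :
    IsAttachment (demandGraph H₀ U N φ C) (φ '' (P ⁻¹' {i})) (C f ∩ U i) := by
  have adj_iff : ∀ p ∈ C f ∩ U i, ∀ v, P v = i →
      ((demandGraph H₀ U N φ C).Adj p (φ v) ↔ v ∈ N f) := by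
    rintro p hp v rfl
    exact h.demandGraph_adj_root hp.1 hp.2
  refine ⟨Set.disjoint_left.2 ?_, ?_⟩
  · rintro _ ⟨v, -, rfl⟩ hv
    exact h.notMem v f hv.1
  have hcard := h.ncard_le_two f i
  have hpos := hne.ncard_pos
  interval_cases hn : (C f ∩ U i).ncard
  · obtain ⟨p, hp⟩ := Set.ncard_eq_one.1 hn
    have hpf : p ∈ C f ∩ U i := hp ▸ rfl
    refine .inl ⟨p, hp, ?_⟩
    rintro _ ⟨hu, u, hPu, rfl⟩ _ ⟨hv, v, hPv, rfl⟩
    exact congrArg φ (hN ((adj_iff p hpf u hPu).1 hu) ((adj_iff p hpf v hPv).1 hv)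
      (hPu.trans hPv.symm))
  · obtain ⟨p, q, hpq, heq⟩ := Set.ncard_eq_two.1 hn
    have hp : p ∈ C f ∩ U i := heq ▸ .inl rfl
    have hq : q ∈ C f ∩ U i := heq ▸ .inr rfl
    have hnot : ∀ v, P v = i → v ∉ N f := by
      rintro v rfl hv
      have := h.ncard_eq_one f v hv
      omega
    refine .inr ⟨p, q, heq, demandGraph_adj_of_mem hp.1 hq.1 ⟨hpq, i, hp.2, hq.2⟩, ?_⟩
    rintro _ ⟨v, hv, rfl⟩
    exact ⟨fun hadj ↦ hnot v hv ((adj_iff p hp v hv).1 hadj),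
      fun hadj ↦ hnot v hv ((adj_iff q hq v hv).1 hadj)⟩

theorem isAttachmentFamily [Finite W] (hN : ∀ f, Set.InjOn P (N f)) (i : κ) :
    IsAttachmentFamily (demandGraph H₀ U N φ C) (φ '' (P ⁻¹' {i})) fun f ↦ C f ∩ U i where
  attach f := (C f ∩ U i).eq_empty_or_nonempty.imp_right (h.isAttachment_inter (hN f))
  disjoint _ _ hfg := (h.disjoint hfg).mono Set.inter_subset_left Set.inter_subset_left
  not_adj _ _ hfg _ hp _ hq := h.not_demandGraph_adj hfg hp.1 hq.1

/-- The copy of `H₀` on the roots in one piece. -/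
noncomputable def induceIso (H₀ : SimpleGraph α) (i : κ) :
    H₀.induce (P ⁻¹' {i}) ≃g (demandGraph H₀ U N φ C).induce (φ '' (P ⁻¹' {i})) where
  toEquiv := Equiv.Set.image φ _ h.injective
  map_rel_iff' {u v} := h.demandGraph_adj_map (u.2.trans v.2.symm)

theorem union_inter_eq (hU : Pairwise fun i j ↦ Disjoint (U i) (U j)) (i : κ) :
    (Set.range φ ∪ ⋃ f, C f) ∩ U i = φ '' (P ⁻¹' {i}) ∪ ⋃ f, C f ∩ U i := by
  rw [Set.union_inter_distrib_right, Set.iUnion_inter]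
  congr 1
  ext p
  constructor
  · rintro ⟨⟨v, rfl⟩, hv⟩
    exact ⟨v, eq_of_mem_of_pairwise_disjoint hU (h.mem v) hv, rfl⟩
  · rintro ⟨v, rfl, rfl⟩
    exact ⟨⟨v, rfl⟩, h.mem v⟩

theorem exists_demandGraph_adj_root (hv : v ∈ N f) :
    ∃ p ∈ C f, (demandGraph H₀ U N φ C).Adj p (φ v) := by
  obtain ⟨p, hp⟩ := Set.ncard_eq_one.1 (h.ncard_eq_one f v hv)
  obtain ⟨hpf, hpv⟩ : p ∈ C f ∩ U (P v) := hp ▸ rfl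
  exact ⟨p, hpf, (h.demandGraph_adj_root hpf hpv).2 hv⟩

theorem connected_sup_demandGraph (f : ι) :
    ((G ⊔ demandGraph H₀ U N φ C).induce (C f)).Connected :=
  (h.connected f).mono fun p q ↦ Or.imp_right (demandGraph_adj_of_mem p.2 q.2)

theorem disjoint_branchSet (x : ι → α) (huv : u ≠ v) :
    Disjoint (branchSet φ C x u) (branchSet φ C x v) := by
  refine Set.disjoint_left.2 ?_
  rintro p (rfl | hp) (hv | hv)
  · exact huv (h.injective hv)
  · obtain ⟨f, -, hf⟩ := Set.mem_iUnion₂.1 hv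
    exact h.notMem u f hf
  · obtain ⟨f, -, hf⟩ := Set.mem_iUnion₂.1 hp
    exact h.notMem v f (hv ▸ hf)
  · obtain ⟨f, rfl, hf⟩ := Set.mem_iUnion₂.1 hp
    obtain ⟨g, rfl, hg⟩ := Set.mem_iUnion₂.1 hv
    exact huv (congrArg x (h.eq_of_mem hf hg))

theorem isModel_branchSet (hP : ∀ u v, H₀.Adj u v → P u = P v) {x y : ι → α}
    (hH : ∀ u v, H.Adj u v → H₀.Adj u v ∨ ∃ f, s(u, v) = s(x f, y f)) (hx : ∀ f, x f ∈ N f)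
    (hy : ∀ f, ∃ p ∈ C f, (G ⊔ demandGraph H₀ U N φ C).Adj p (φ (y f))) :
    IsModel H (G ⊔ demandGraph H₀ U N φ C) (branchSet φ C x) := by
  refine ⟨fun u v ↦ h.disjoint_branchSet x, fun v ↦ ?_, fun u v huv ↦ ?_⟩
  · refine connected_induce_insert_biUnion (fun f _ ↦ h.connected_sup_demandGraph f) ?_
    rintro f rfl
    obtain ⟨p, hp, hadj⟩ := h.exists_demandGraph_adj_root (H₀ := H₀) (hx f)
    exact ⟨p, hp, .inr hadj⟩
  have exists_adj : ∀ f, ∃ p ∈ branchSet φ C x (x f),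
      (G ⊔ demandGraph H₀ U N φ C).Adj p (φ (y f)) := fun f ↦ by
    obtain ⟨p, hp, hadj⟩ := hy f
    exact ⟨p, .inr (Set.mem_biUnion rfl hp), hadj⟩
  rcases hH u v huv with hadj | ⟨f, hf⟩
  · exact ⟨φ u, .inl rfl, φ v, .inl rfl, .inr ((h.demandGraph_adj_map (hP u v hadj)).2 hadj)⟩
  · obtain ⟨p, hp, hadj⟩ := exists_adj f
    rcases Sym2.eq_iff.1 hf with ⟨rfl, rfl⟩ | ⟨rfl, rfl⟩
    · exact ⟨p, hp, _, .inl rfl, hadj⟩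
    · exact ⟨_, .inl rfl, p, hp, hadj.symm⟩

end IsRouting

theorem IsRouting.exists_isRootedModelOn [Finite W] [Finite ι] {K : κ → G.Subgraph}
    (h : IsRouting G P (fun i ↦ (K i).verts) N φ C)
    (hK : Pairwise fun i j ↦ Disjoint (K i).verts (K j).verts) (hN : ∀ f, Set.InjOn P (N f))
    (hlinked : ∀ i, IsPlusKLinked (H₀.induce (P ⁻¹' {i})) (Nat.card ι) (K i).coe) :
    ∃ M, IsRootedModelOn (G ⊔ demandGraph H₀ (fun i ↦ (K i).verts) N φ C) G
      (Set.range φ ∪ ⋃ f, C f) M := by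
  refine exists_isRootedModelOn_of_pieces hK demandGraph_le fun i ↦ ?_
  refine IsLinked.exists_isRootedModelOn ?_ Set.inter_subset_right
  rw [h.union_inter_eq hK i]
  exact ((hlinked i).of_iso (h.induceIso H₀ i)).isLinked_induce_union_iUnion
    (h.isAttachmentFamily hN i)

theorem IsRouting.isMinor [Finite W] [Finite ι] {K : κ → G.Subgraph}
    (h : IsRouting G P (fun i ↦ (K i).verts) N φ C)
    (hK : Pairwise fun i j ↦ Disjoint (K i).verts (K j).verts) (hN : ∀ f, Set.InjOn P (N f))
    (hlinked : ∀ i, IsPlusKLinked (H₀.induce (P ⁻¹' {i})) (Nat.card ι) (K i).coe)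
    (hP : ∀ u v, H₀.Adj u v → P u = P v) {x y : ι → α}
    (hH : ∀ u v, H.Adj u v → H₀.Adj u v ∨ ∃ f, s(u, v) = s(x f, y f)) (hx : ∀ f, x f ∈ N f)
    (hy : ∀ f, y f ∈ N f ∨ ∃ p ∈ C f, G.Adj p (φ (y f))) : IsMinor H G := by
  have hy' : ∀ f, ∃ p ∈ C f,
      (G ⊔ demandGraph H₀ (fun i ↦ (K i).verts) N φ C).Adj p (φ (y f)) := by
    intro f
    rcases hy f with hyf | ⟨p, hp, hadj⟩
    · obtain ⟨p, hp, hadj⟩ := h.exists_demandGraph_adj_root (H₀ := H₀) hyf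
      exact ⟨p, hp, .inr hadj⟩
    · exact ⟨p, hp, .inl hadj⟩
  obtain ⟨M, hM⟩ := h.exists_isRootedModelOn hK hN hlinked
  refine ⟨_, (h.isModel_branchSet hP hH hx hy').of_isRootedModelOn (fun v ↦ ?_) hM⟩
  exact Set.insert_subset (.inl ⟨v, rfl⟩)
    ((Set.iUnion₂_subset fun f _ ↦ Set.subset_iUnion C f).trans Set.subset_union_right)

end Routing

section ExistsRouting

variable {α ι κ W : Type*} {G : SimpleGraph W} {P : α → κ} {U : κ → Set W} {N N' : ι → Set α}
  {φ : α → W} {C : ι → Set W} {I : Set ι}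

theorem ncard_biUnion_inter_le {X : Set W} {n : ℕ} (hI : I.Finite)
    (h : ∀ f ∈ I, (C f ∩ X).ncard ≤ n) : ((⋃ f ∈ I, C f) ∩ X).ncard ≤ n * I.ncard := by
  rw [Set.iUnion₂_inter]
  calc (⋃ f ∈ I, C f ∩ X).ncard = (⋃ f ∈ hI.toFinset, C f ∩ X).ncard := by
        simp only [hI.mem_toFinset]
    _ ≤ ∑ f ∈ hI.toFinset, (C f ∩ X).ncard := Finset.set_ncard_biUnion_le _ _
    _ ≤ hI.toFinset.card * n := Finset.sum_le_card_nsmul _ _ _ fun f hf ↦ h f (by simpa using hf)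
    _ = n * I.ncard := by rw [Set.ncard_eq_toFinset_card I hI, mul_comm]

theorem exists_injOn_forall_mem [Finite I] [Nonempty W] {t : ι → Set W}
    (h : ∀ f ∈ I, I.ncard ≤ (t f).ncard) : ∃ a : ι → W, Set.InjOn a I ∧ ∀ f ∈ I, a f ∈ t f := by
  obtain ⟨a, ha, hat⟩ := exists_injective_forall_mem (ι := I) (t := fun f ↦ t f) fun f ↦ h f f.2
  obtain ⟨b, hb⟩ : ∃ b : ι → W, ∀ f : I, b f = a f :=
    ⟨Function.extend (↑) a fun _ ↦ Classical.arbitrary W, Subtype.val_injective.extend_apply a _⟩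
  refine ⟨b, fun f hf g hg hfg ↦ ?_, fun f hf ↦ hb ⟨f, hf⟩ ▸ hat ⟨f, hf⟩⟩
  rw [hb ⟨f, hf⟩, hb ⟨g, hg⟩] at hfg
  exact congrArg Subtype.val (ha hfg)

theorem exists_injOn_adj_root [Finite α] [Finite W] [Finite I]
    (hU : Pairwise fun i j ↦ Disjoint (U i) (U j)) (hφU : ∀ v, φ v ∈ U (P v))
    {y : ι → α} {Z : Set W}
    (h : ∀ f ∈ I, (P ⁻¹' {P (y f)}).ncard + (Z ∩ U (P (y f))).ncard + I.ncard ≤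
      (G.neighborSet (φ (y f)) ∩ U (P (y f))).ncard + 1) :
    ∃ a : ι → W, Set.InjOn a I ∧ ∀ f ∈ I,
      a f ∈ U (P (y f)) ∧ G.Adj (φ (y f)) (a f) ∧ a f ∉ Set.range φ ∧ a f ∉ Z := by
  rcases I.eq_empty_or_nonempty with rfl | ⟨f₀, -⟩
  · exact ⟨fun f ↦ φ (y f), Set.injOn_empty _, fun _ hf ↦ hf.elim⟩
  have : Nonempty W := ⟨φ (y f₀)⟩
  obtain ⟨a, ha, hat⟩ := exists_injOn_forall_mem (I := I)
    (t := fun f ↦ (G.neighborSet (φ (y f)) ∩ U (P (y f))) \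
      (φ '' (P ⁻¹' {P (y f)} \ {y f}) ∪ Z ∩ U (P (y f)))) fun f hf ↦ by
      have hfib : (P ⁻¹' {P (y f)} \ {y f}).ncard + 1 = (P ⁻¹' {P (y f)}).ncard :=
        Set.ncard_sdiff_singleton_add_one rfl
      have himg := Set.ncard_image_le (f := φ) (Set.toFinite (P ⁻¹' {P (y f)} \ {y f}))
      have hunion := Set.ncard_union_le (φ '' (P ⁻¹' {P (y f)} \ {y f})) (Z ∩ U (P (y f)))
      have hdiff := Set.le_ncard_sdiff (φ '' (P ⁻¹' {P (y f)} \ {y f}) ∪ Z ∩ U (P (y f)))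
        (G.neighborSet (φ (y f)) ∩ U (P (y f)))
      have := h f hf
      omega
  refine ⟨a, ha, fun f hf ↦ ?_⟩
  obtain ⟨⟨hadj, haU⟩, hnot⟩ := hat f hf
  refine ⟨haU, hadj, ?_, fun haZ ↦ hnot (.inr ⟨haZ, haU⟩)⟩
  rintro ⟨v, hv⟩
  have hPv : P v = P (y f) := eq_of_mem_of_pairwise_disjoint hU (hφU v) (hv ▸ haU)
  refine hnot (.inl ⟨v, ⟨hPv, ?_⟩, hv⟩)
  rintro rfl
  exact hadj.ne hv

theorem IsRouting.replace_singleton (h : IsRouting G P U N φ C) [DecidablePred (· ∈ I)]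
    {a : ι → W} (ha : Set.InjOn a I) (haφ : ∀ f ∈ I, a f ∉ Set.range φ)
    (haC : ∀ f ∈ I, ∀ g ∉ I, a f ∉ C g) (haN : ∀ f ∈ I, ∀ v ∈ N' f, a f ∈ U (P v))
    (hN : ∀ f ∉ I, N' f ⊆ N f) :
    IsRouting G P U N' φ fun f ↦ if f ∈ I then {a f} else C f where
  injective := h.injective
  mem := h.mem
  notMem v f := by
    split_ifs with hf
    · exact fun hv ↦ haφ f hf ⟨v, hv⟩
    · exact h.notMem v f
  disjoint f g hfg := by
    dsimp only
    split_ifs with hf hg hg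
    · exact Set.disjoint_singleton.2 (ha.ne hf hg hfg)
    · exact Set.disjoint_singleton_left.2 (haC f hf g hg)
    · exact Set.disjoint_singleton_right.2 (haC g hg f hf)
    · exact h.disjoint hfg
  connected f := by
    by_cases hf : f ∈ I
    · rw [if_pos hf]
      exact connected_induce_singleton _ _
    · rw [if_neg hf]
      exact h.connected f
  ncard_le_two f i := by
    split_ifs with hf
    · exact (Set.ncard_le_ncard Set.inter_subset_left).trans (by simp)
    · exact h.ncard_le_two f i
  ncard_eq_one f v hv := by
    split_ifs with hf
    · rw [Set.inter_eq_left.2 (Set.singleton_subset_iff.2 (haN f hf v hv)), Set.ncard_singleton]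
    · exact h.ncard_eq_one f v (hN f hf hv)

theorem exists_isRouting_pair [Finite α] [Finite ι] [Finite W]
    (hU : Pairwise fun i j ↦ Disjoint (U i) (U j)) (x y : ι → α)
    (hcard : ∀ i, (P ⁻¹' {i}).ncard + 2 * Nat.card ι ≤ (U i).ncard)
    (hdense : KDense G (Set.univ \ ⋃ i, U i) (2 * Nat.card ι : ℕ)) :
    ∃ φ C, IsRouting G P U (fun f ↦ {x f, y f}) φ C := by
  obtain ⟨C, hdisj, hC⟩ := exists_disjoint_connectors hU (fun i ↦ by have := hcard i; omega)
    hdense (P ∘ x) (P ∘ y)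
  obtain ⟨φ, hφ, hφU⟩ := exists_injective_forall_mem_of_fibers (P := P)
    (t := fun i ↦ U i \ ((⋃ f ∈ Set.univ, C f) ∩ U i))
    (fun i j hij ↦ (hU hij).mono Set.sdiff_subset Set.sdiff_subset) fun i ↦ by
      have hle := ncard_biUnion_inter_le (Set.toFinite Set.univ) fun f _ ↦ (hC f).2.2.2 i
      have hdiff := Set.le_ncard_sdiff ((⋃ f ∈ Set.univ, C f) ∩ U i) (U i)
      rw [Set.ncard_univ] at hle
      have := hcard i
      omega
  refine ⟨φ, C, hφ, fun v ↦ (hφU v).1, fun v f hf ↦ ?_, hdisj, fun f ↦ (hC f).1,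
    fun f ↦ (hC f).2.2.2, ?_⟩
  · exact (hφU v).2 ⟨Set.mem_biUnion (Set.mem_univ f) hf, (hφU v).1⟩
  · rintro f v (rfl | rfl)
    exacts [(hC f).2.1, (hC f).2.2.1]

/-- A demand inside one piece is served by a neighbour of one of its two roots. -/
theorem exists_isRouting [Finite α] [Finite ι] [Finite W]
    (hU : Pairwise fun i j ↦ Disjoint (U i) (U j)) (x y : ι → α)
    (hcard : ∀ i, (P ⁻¹' {i}).ncard + 2 * Nat.card ι ≤ (U i).ncard)
    (hdeg : ∀ f, ∀ t ∈ U (P (y f)), (P ⁻¹' {P (y f)}).ncard + 2 * Nat.card ι ≤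
      (G.neighborSet t ∩ U (P (y f))).ncard + 1)
    (hdense : KDense G (Set.univ \ ⋃ i, U i) (2 * Nat.card ι : ℕ)) :
    ∃ φ C, IsRouting G P U (fun f ↦ {v | v = x f ∨ v = y f ∧ P (x f) ≠ P (y f)}) φ C ∧
      ∀ f, P (x f) = P (y f) → ∃ a ∈ C f, G.Adj a (φ (y f)) := by
  classical
  obtain ⟨φ, C, h⟩ := exists_isRouting_pair hU x y hcard hdense
  let I : Set ι := {f | P (x f) = P (y f)}
  obtain ⟨a, ha, haI⟩ := exists_injOn_adj_root (G := G) (I := I) (y := y) (Z := ⋃ f ∈ Iᶜ, C f)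
    hU h.mem fun f _ ↦ by
      have hle := ncard_biUnion_inter_le (Set.toFinite Iᶜ) fun g _ ↦ h.ncard_le_two g (P (y f))
      have hI := I.ncard_add_ncard_compl
      have := hdeg f _ (h.mem (y f))
      omega
  refine ⟨φ, _, h.replace_singleton (I := I) ha (fun f hf ↦ (haI f hf).2.2.1)
    (fun f hf g hg hag ↦ (haI f hf).2.2.2 (Set.mem_biUnion hg hag)) ?_ ?_, fun f hf ↦ ?_⟩
  · rintro f hf v (rfl | ⟨-, hne⟩)
    · exact (show P (x f) = P (y f) from hf) ▸ (haI f hf).1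
    · exact absurd hf hne
  · rintro f - v (rfl | ⟨rfl, -⟩)
    exacts [.inl rfl, .inr rfl]
  · exact ⟨a f, by simp [I, hf], (haI f hf).2.1.symm⟩

end ExistsRouting

theorem minor_from_linked_pieces_general {α κ W : Type*} [Finite α] [Finite W]
    {H : SimpleGraph α} (F : Finset (Sym2 α)) (P : α → κ)
    (hP : ∀ u v, (H.deleteEdges ↑F).Adj u v → P u = P v) {G : SimpleGraph W} (Gs : κ → G.Subgraph)
    (hdisj : ∀ i j, i ≠ j → Disjoint (Gs i).verts (Gs j).verts)
    (hlinked : ∀ i, IsPlusKLinked ((H.deleteEdges ↑F).induce (P ⁻¹' {i})) F.card (Gs i).coe)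
    (hdense : KDense G (Set.univ \ ⋃ i, (Gs i).verts) (2 * (F.card : ℝ))) : IsMinor H G := by
  have hU : Pairwise fun i j ↦ Disjoint (Gs i).verts (Gs j).verts := fun i j ↦ hdisj i j
  have hF : Nat.card F = F.card := Nat.card_eq_finsetCard F
  have exists_ends : ∀ e : F, ∃ x y, e.1 = s(x, y) := fun e ↦
    e.1.ind fun x y ↦ ⟨x, y, rfl⟩
  choose x y hxy using exists_ends
  rw [← hF] at hlinked
  obtain ⟨φ, C, h, hloop⟩ := exists_isRouting hU x y (P := P)
    (fun i ↦ (hlinked i).card_add_le)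
    (fun f t ht ↦ (hlinked _).card_add_le_ncard_neighborSet_inter
      (Nat.card_pos_iff.2 ⟨⟨f⟩, inferInstance⟩) ht)
    (by simpa [hF] using hdense)
  refine h.isMinor hU (fun f ↦ ?_) hlinked hP (fun u v huv ↦ ?_) (fun f ↦ .inl rfl) (y := y)
    fun f ↦ ?_
  · rintro _ (rfl | ⟨rfl, hne⟩) _ (rfl | ⟨rfl, hne'⟩) heq
    exacts [rfl, absurd heq hne', absurd heq.symm hne, rfl]
  · by_cases hmem : s(u, v) ∈ F
    · exact .inr ⟨⟨s(u, v), hmem⟩, hxy ⟨s(u, v), hmem⟩⟩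
    · exact .inl (deleteEdges_adj.2 ⟨huv, hmem⟩)
  · by_cases hf : P (x f) = P (y f)
    · exact .inr (hloop f hf)
    · exact .inl (.inr ⟨rfl, hf⟩)

theorem minor_from_linked_pieces (α : Type) [Fintype α] (H : SimpleGraph α)
    (F : Finset (Sym2 α)) (hF : ↑F ⊆ H.edgeSet) (k : ℕ) (P : α → Fin k)
    (hP : ∀ u v : α, (H.deleteEdges ↑F).Adj u v → P u = P v)
    (hFcomp : ∀ u v : α, s(u, v) ∈ F → ¬ (H.deleteEdges ↑F).Reachable u v)
    (W : Type) [Fintype W] (G : SimpleGraph W) (Gs : Fin k → G.Subgraph)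
    (hdisj : ∀ i j, i ≠ j → Disjoint (Gs i).verts (Gs j).verts)
    (hlinked : ∀ i : Fin k,
      IsPlusKLinked ((H.deleteEdges ↑F).induce (P ⁻¹' {i})) F.card (Gs i).coe)
    (hdense : KDense G (Set.univ \ ⋃ i, (Gs i).verts) (2 * (F.card : ℝ))) :
    IsMinor H G :=
  minor_from_linked_pieces_general F P hP Gs hdisj hlinked hdense
end

section
/- For every positive integer s there exists t₀ such that for every integer t ≥ t₀ there exists a graph G with minimum degree δ(G) ≥ 2s + t − 2√(2s) − 2 such that the complete bipartite graph K_{s,t} is not a minor of G. -/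
open SimpleGraph

/-!
Let `d * m ≥ 2 * s` with `d + m ≤ 2 * √(2 * s) + 1`, and let `G` be the complement of a large
graph `H` on `2 * s + t - m` vertices with maximum degree at most `d`, no cycle of length at most
`3 * s`, and degree sum at least `d * |V| - 1`. Such an `H` is an edge-maximal graph with the first
two properties, by the Erdős–Sachs exchange argument. All degrees of `G` are at least
`2 * s + t - (d + m) - 1`.

In a model of `K_{s,t}` in `G` all but at most `|V| - (s + t)` of the branch sets are singletons.
These form sets `A` and `B` of at most `s` and `t` vertices with no edge of `H` between them.
So the `H`-neighbours of `A` lie in `A ∪ W`, where `W` is the complement of `A ∪ B`. Since `A ∪ W`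
has at most `3 * s` vertices, `A ∪ W` and `A` induce forests in `H`, and counting the edges at `A`
gives `(d - 2) * |A| < |W|`. But `|A| ≥ m` and `|W| ≤ 2 * s - 2 * m ≤ (d - 2) * m`.
-/

theorem exists_mul_ge_add_le_two_mul_sqrt {n : ℕ} (hn : 0 < n) :
    ∃ a b : ℕ, 2 ≤ a ∧ 1 ≤ b ∧ n ≤ a * b ∧ (a + b : ℝ) ≤ 2 * √n + 1 := by
  set k := n.sqrt
  have hk : 1 ≤ k := Nat.sqrt_pos.2 hn
  have hnk : n < (k + 1) * (k + 1) := n.lt_succ_sqrt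
  rcases le_or_gt n ((k + 1) * k) with h | h
  · refine ⟨k + 1, k, by lia, hk, h, ?_⟩
    have : (k : ℝ) ≤ √n := Real.nat_sqrt_le_real_sqrt
    push_cast
    linarith
  · refine ⟨k + 1, k + 1, by lia, by lia, hnk.le, ?_⟩
    have hsq : (k + 1 / 2 : ℝ) ≤ √n := by
      apply Real.le_sqrt_of_sq_le
      have : ((k + 1) * k + 1 : ℝ) ≤ n := by exact_mod_cast h
      nlinarith
    push_cast
    linarith

theorem mul_card_le_sum_add_of_forall_le {ι : Type*} [Fintype ι] {f : ι → ℕ} {d c : ℕ}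
    (hf : ∀ i, f i ≤ d) (h : d * Fintype.card ι ≤ ∑ i, f i + c) (A : Finset ι) :
    d * A.card ≤ ∑ i ∈ A, f i + c := by
  classical
  have hsum := A.sum_add_sum_compl f
  have hcompl : ∑ i ∈ Aᶜ, f i ≤ Aᶜ.card * d := Finset.sum_le_card_nsmul _ _ _ fun i _ ↦ hf i
  have hcard := A.card_add_card_compl
  nlinarith

section Degree

variable {V : Type*} {G : SimpleGraph V} {v : V}

theorem deg_eq_degree [Fintype (G.neighborSet v)] : deg G v = G.degree v := by
  rw [deg, Set.ncard_eq_toFinset_card', ← neighborFinset_def, card_neighborFinset_eq_degree]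

theorem card_le_deg_compl_add [Fintype V] {d : ℕ} (h : deg G v ≤ d) :
    Fintype.card V ≤ deg Gᶜ v + 1 + d := by
  classical
  rw [deg_eq_degree] at h ⊢
  rw [degree_compl]
  lia

end Degree

section GirthAndDistance

variable {V : Type*} {G : SimpleGraph V} {u v x y : V}

theorem forall_mem_edgeSet_of_notMem_edges (p : (G ⊔ edge u v).Walk x y)
    (h : s(u, v) ∉ p.edges) : ∀ e ∈ p.edges, e ∈ G.edgeSet := by
  rintro ⟨a, b⟩ he
  have hne : s(a, b) ≠ s(u, v) := ne_of_mem_of_not_mem he h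
  have hadj := p.adj_of_mem_edges he
  rw [sup_adj, edge_adj] at hadj
  grind [mem_edgeSet]

theorem edist_le_length_of_notMem_edges (p : (G ⊔ edge u v).Walk x y)
    (h : s(u, v) ∉ p.edges) : G.edist x y ≤ p.length := by
  simpa using edist_le (p.transfer G (forall_mem_edgeSet_of_notMem_edges p h))

theorem egirth_le_edist_deleteEdges_add_one (h : G.Adj x y) :
    G.egirth ≤ (G.deleteEdges {s(x, y)}).edist x y + 1 := by
  classical
  by_cases hr : (G.deleteEdges {s(x, y)}).Reachable x y
  · obtain ⟨p, hp⟩ := hr.exists_walk_length_eq_edist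
    have hle : G.deleteEdges {s(x, y)} ≤ G := deleteEdges_le _
    have hxy : s(y, x) ∉ (p.bypass.mapLe hle).edges := by
      rw [Walk.edges_mapLe_eq_edges]
      intro he
      simpa [Sym2.eq_swap] using p.bypass.adj_of_mem_edges he
    have hcycle := ((p.bypass.mapLe hle).cons_isCycle_iff h.symm).2
      ⟨p.bypass_isPath.mapLe hle, hxy⟩
    calc G.egirth ≤ _ := egirth_le_length hcycle
      _ = p.bypass.length + 1 := by simp
      _ ≤ p.length + 1 := by gcongr; exact p.length_bypass_le_length
      _ = _ := by rw [hp]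
  · simp [edist_eq_top_of_not_reachable hr]

theorem edist_add_one_le_length_of_mem_edges {c : (G ⊔ edge u v).Walk x x} (hc : c.IsTrail)
    (h : s(u, v) ∈ c.edges) : G.edist u v + 1 ≤ c.length := by
  classical
  have hne : u ≠ v := (c.adj_of_mem_edges h).ne
  have hu := c.fst_mem_support_of_mem_edges h
  have hrot : s(u, v) ∈ (c.rotate u hu).edges := (c.rotate_edges u hu).mem_iff.2 h
  have hv := (c.rotate u hu).snd_mem_support_of_mem_edges hrot
  have hdisj := (hc.rotate hu).disjoint_edges_takeUntil_dropUntil hv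
  have hlen := congr_arg Walk.length ((c.rotate u hu).take_spec hv)
  rw [Walk.length_append, c.length_rotate] at hlen
  set p := (c.rotate u hu).takeUntil v hv
  set q := (c.rotate u hu).dropUntil v hv
  have hp : 1 ≤ p.length := Nat.one_le_iff_ne_zero.2 fun h0 ↦ hne (Walk.eq_of_length_eq_zero h0)
  have hq : 1 ≤ q.length :=
    Nat.one_le_iff_ne_zero.2 fun h0 ↦ hne (Walk.eq_of_length_eq_zero h0).symm
  obtain ⟨l, hl, hlc⟩ : ∃ l : ℕ, G.edist u v ≤ l ∧ l + 1 ≤ c.length := by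
    by_cases hmem : s(u, v) ∈ p.edges
    · refine ⟨q.length, ?_, by lia⟩
      rw [edist_comm]
      exact edist_le_length_of_notMem_edges q (hdisj hmem)
    · exact ⟨p.length, edist_le_length_of_notMem_edges p hmem, by lia⟩
  calc G.edist u v + 1 ≤ (l : ℕ∞) + 1 := by gcongr
    _ ≤ c.length := by exact_mod_cast hlc

theorem min_egirth_edist_le_egirth_sup_edge :
    min G.egirth (G.edist u v + 1) ≤ (G ⊔ edge u v).egirth := by
  rw [le_egirth]
  intro x c hc
  by_cases h : s(u, v) ∈ c.edges
  · exact (min_le_right _ _).trans (edist_add_one_le_length_of_mem_edges hc.isTrail h)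
  · refine (min_le_left _ _).trans ?_
    simpa using egirth_le_length (hc.transfer (forall_mem_edgeSet_of_notMem_edges c h))

theorem min_edist_le_edist_sup_edge :
    min (G.edist x y) (min (G.edist x u) (G.edist u y)) ≤ (G ⊔ edge u v).edist x y := by
  classical
  by_cases hr : (G ⊔ edge u v).Reachable x y
  · obtain ⟨p, hp, hlen⟩ := hr.exists_path_of_dist
    rw [← hr.coe_dist_eq_edist, ← hlen]
    by_cases h : s(u, v) ∈ p.edges
    · have hu := p.fst_mem_support_of_mem_edges h
      by_cases ht : s(u, v) ∈ (p.takeUntil u hu).edges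
      · have hd := hp.isTrail.disjoint_edges_takeUntil_dropUntil hu ht
        calc _ ≤ G.edist u y := (min_le_right _ _).trans (min_le_right _ _)
          _ ≤ (p.dropUntil u hu).length := edist_le_length_of_notMem_edges _ hd
          _ ≤ p.length := by exact_mod_cast p.length_dropUntil_le_length hu
      · calc _ ≤ G.edist x u := (min_le_right _ _).trans (min_le_left _ _)
          _ ≤ (p.takeUntil u hu).length := edist_le_length_of_notMem_edges _ ht
          _ ≤ p.length := by exact_mod_cast p.length_takeUntil_le_length hu
    · exact (min_le_left _ _).trans (edist_le_length_of_notMem_edges p h)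
  · simp [edist_eq_top_of_not_reachable hr]

end GirthAndDistance

section Balls

variable {V : Type*} {G : SimpleGraph V}

theorem ball_add_one_subset (c : V) {r : ℕ} (hr : 0 < r) :
    G.ball c (r + 1 : ℕ) ⊆ ⋃ z ∈ G.ball c r, insert z (G.neighborSet z) := by
  intro y hy
  rw [mem_ball] at hy
  obtain ⟨p, hp⟩ := exists_walk_of_edist_ne_top hy.ne_top
  rw [← hp] at hy
  cases p with
  | nil => exact Set.mem_biUnion (mem_ball_self (by exact_mod_cast hr)) (Set.mem_insert _ _)
  | @cons _ z _ h q =>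
    rw [Walk.length_cons, Nat.cast_lt, Nat.add_lt_add_iff_right] at hy
    have hz : G.edist z c < r := (edist_le q).trans_lt (by exact_mod_cast hy)
    exact Set.mem_biUnion hz (Set.mem_insert_of_mem _ h.symm)

theorem encard_ball_add_one_le {d : ℕ} (hd : ∀ v, (G.neighborSet v).encard ≤ d) (c : V) (r : ℕ) :
    (G.ball c (r + 1 : ℕ)).encard ≤ ((d + 1) ^ r : ℕ) := by
  induction r with
  | zero => simp
  | succ r ih =>
    have hfin : (G.ball c (r + 1 : ℕ)).Finite := Set.finite_of_encard_le_coe ih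
    calc (G.ball c (r + 1 + 1 : ℕ)).encard
        ≤ (⋃ z ∈ hfin.toFinset, insert z (G.neighborSet z)).encard := by
          gcongr
          simpa using ball_add_one_subset c r.succ_pos
      _ ≤ ∑ z ∈ hfin.toFinset, (insert z (G.neighborSet z)).encard :=
          Finset.set_encard_biUnion_le _ _
      _ ≤ ∑ z ∈ hfin.toFinset, ((d : ℕ∞) + 1) := by
          gcongr with z
          exact (Set.encard_insert_le _ _).trans (by gcongr; exact hd z)
      _ = (G.ball c (r + 1 : ℕ)).encard * (d + 1) := by
          rw [Finset.sum_const, nsmul_eq_mul, hfin.encard_eq_coe_toFinset_card]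
      _ ≤ ((d + 1) ^ (r + 1) : ℕ) := by
          rw [pow_succ, Nat.cast_mul, Nat.cast_add_one]
          exact mul_le_mul_left ih _

theorem exists_le_edist_of_two_mul_pow_lt_card [Finite V] {d k : ℕ} (hd : ∀ v, deg G v ≤ d)
    (hV : 2 * (d + 1) ^ k < Nat.card V) (u v : V) :
    ∃ x, (k + 1 : ℕ) ≤ G.edist u x ∧ (k + 1 : ℕ) ≤ G.edist v x := by
  have hd' (z : V) : (G.neighborSet z).encard ≤ d := by
    rw [← (Set.toFinite _).cast_ncard_eq]
    exact_mod_cast hd z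
  suffices h : G.ball u (k + 1 : ℕ) ∪ G.ball v (k + 1 : ℕ) ≠ Set.univ by
    obtain ⟨x, hx⟩ := (Set.ne_univ_iff_exists_notMem _).1 h
    exact ⟨x, by simpa [edist_comm] using hx⟩
  intro h
  have hle : (Nat.card V : ℕ∞) ≤ (2 * (d + 1) ^ k : ℕ) := by
    calc (Nat.card V : ℕ∞) = (G.ball u (k + 1 : ℕ) ∪ G.ball v (k + 1 : ℕ)).encard := by
          rw [h, Set.encard_univ, ENat.card_eq_coe_natCard]
      _ ≤ ((d + 1) ^ k : ℕ) + ((d + 1) ^ k : ℕ) := (Set.encard_union_le _ _).trans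
          (add_le_add (encard_ball_add_one_le hd' u k) (encard_ball_add_one_le hd' v k))
      _ = (2 * (d + 1) ^ k : ℕ) := by rw [two_mul, Nat.cast_add]
  exact hV.not_ge (by exact_mod_cast hle)

end Balls

section AddingEdges

variable {V : Type*} {G : SimpleGraph V} {k : ℕ} {u v x y z : V}

theorem deleteEdges_sup_edge (h : G.Adj x y) : G.deleteEdges {s(x, y)} ⊔ edge x y = G :=
  sdiff_sup_cancel (by simp [fromEdgeSet_le, h])

theorem ne_and_not_adj_of_two_le_edist (h : 2 ≤ G.edist x y) : x ≠ y ∧ ¬G.Adj x y := by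
  constructor
  · rintro rfl
    simp at h
  · intro hadj
    rw [edist_eq_one_iff_adj.2 hadj] at h
    exact absurd h (by decide)

theorem le_edist_of_adj (h : (k + 1 : ℕ) ≤ G.edist v x) (hadj : G.Adj x y) : k ≤ G.edist v y := by
  have htri : G.edist v x ≤ G.edist v y + 1 := by
    simpa [edist_eq_one_iff_adj.2 hadj.symm] using G.edist_triangle (u := v) (v := y) (w := x)
  rw [← ENat.natCast_lt_add_one_iff]
  exact lt_of_lt_of_le (by exact_mod_cast k.lt_succ_self) (h.trans htri)

theorem lt_egirth_sup_edge (hG : k < G.egirth) (h : k ≤ G.edist u v) :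
    k < (G ⊔ edge u v).egirth :=
  (lt_min hG (ENat.natCast_lt_add_one_iff.2 h)).trans_le min_egirth_edist_le_egirth_sup_edge

variable [Finite V]

open scoped Classical in
theorem deg_sup_edge (hne : u ≠ v) (hn : ¬G.Adj u v) :
    deg (G ⊔ edge u v) z = deg G z + if z ∈ s(u, v) then 1 else 0 := by
  have := Fintype.ofFinite V
  simp only [deg_eq_degree, ← card_incidenceFinset_eq_degree, incidenceFinset_eq_filter]
  rw [G.edgeFinset_sup_edge hn hne, Finset.filter_cons]
  split_ifs
  · rw [Finset.card_cons]
  · rw [add_zero]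

theorem ncard_edgeSet_sup_edge (hne : u ≠ v) (hn : ¬G.Adj u v) :
    (G ⊔ edge u v).edgeSet.ncard = G.edgeSet.ncard + 1 := by
  rw [edgeSet_sup, edgeSet_edge_of_ne hne, Set.union_singleton,
    Set.ncard_insert_of_notMem (by simpa using hn)]

end AddingEdges

section ErdosSachs

variable {V : Type*} {G : SimpleGraph V} {d k : ℕ} {u v x y : V}

/-- The graphs competing in the Erdős–Sachs construction: maximum degree at most `d` and no cycle
of length at most `k`. With `egirth`, forests qualify for every `k`. -/
structure IsErdosSachs (d k : ℕ) (G : SimpleGraph V) : Prop where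
  deg_le : ∀ v, deg G v ≤ d
  lt_egirth : k < G.egirth

namespace IsErdosSachs

variable [Finite V]

theorem sup_edge (hG : IsErdosSachs d k G) (hk : 2 ≤ k) (h : k ≤ G.edist u x)
    (hu : deg G u < d) (hx : deg G x < d) :
    IsErdosSachs d k (G ⊔ edge u x) ∧
      (G ⊔ edge u x).edgeSet.ncard = G.edgeSet.ncard + 1 := by
  obtain ⟨hne, hn⟩ := ne_and_not_adj_of_two_le_edist (le_trans (by exact_mod_cast hk) h)
  refine ⟨⟨fun z ↦ ?_, lt_egirth_sup_edge hG.lt_egirth h⟩, ncard_edgeSet_sup_edge hne hn⟩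
  rw [deg_sup_edge hne hn]
  have := hG.deg_le z
  split_ifs with hz
  · rcases Sym2.mem_iff.1 hz with rfl | rfl <;> lia
  · lia

theorem exists_ncard_edgeSet_eq_add_one_of_adj (hG : IsErdosSachs d k G) (hk : 2 ≤ k)
    (hu : deg G u < d) (hv : deg G v < d) (huv : u = v → deg G u + 1 < d)
    (hux : k ≤ G.edist u x) (hvx : (k + 1 : ℕ) ≤ G.edist v x) (hxy : G.Adj x y) :
    ∃ G' : SimpleGraph V, IsErdosSachs d k G' ∧ G'.edgeSet.ncard = G.edgeSet.ncard + 1 := by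
  -- Replacing `xy` by `ux` and `vy` raises only the degrees of `u` and `v`.
  classical
  set K := G.deleteEdges {s(x, y)}
  have hKG : K ≤ G := deleteEdges_le _
  have hK : K ⊔ edge x y = G := deleteEdges_sup_edge hxy
  have hKux : k ≤ K.edist u x := hux.trans (edist_anti hKG)
  have hKvx : k ≤ K.edist v x := (Nat.cast_le.2 k.le_succ).trans (hvx.trans (edist_anti hKG))
  have hKvy : k ≤ K.edist v y := (le_edist_of_adj hvx hxy).trans (edist_anti hKG)
  have hKxy : k ≤ K.edist x y := ENat.natCast_lt_add_one_iff.1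
    (hG.lt_egirth.trans_le (egirth_le_edist_deleteEdges_add_one hxy))
  have hLvy : k ≤ (K ⊔ edge u x).edist v y := by
    rw [edge_comm]
    exact (le_min hKvy (le_min hKvx hKxy)).trans min_edist_le_edist_sup_edge
  have two_le {m : ℕ∞} (h : k ≤ m) : 2 ≤ m := le_trans (by exact_mod_cast hk) h
  obtain ⟨hxy_ne, hxy_n⟩ := ne_and_not_adj_of_two_le_edist (two_le hKxy)
  obtain ⟨hux_ne, hux_n⟩ := ne_and_not_adj_of_two_le_edist (two_le hKux)
  obtain ⟨hvy_ne, hvy_n⟩ := ne_and_not_adj_of_two_le_edist (two_le hLvy)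
  refine ⟨K ⊔ edge u x ⊔ edge v y, ⟨fun z ↦ ?_, ?_⟩, ?_⟩
  · have hGz : deg G z = deg K z + if z ∈ s(x, y) then 1 else 0 := by
      rw [← deg_sup_edge hxy_ne hxy_n, hK]
    have := hG.deg_le z
    rw [deg_sup_edge hvy_ne hvy_n, deg_sup_edge hux_ne hux_n]
    grind
  · exact lt_egirth_sup_edge
      (lt_egirth_sup_edge (hG.lt_egirth.trans_le (egirth_anti hKG)) hKux) hLvy
  · rw [ncard_edgeSet_sup_edge hvy_ne hvy_n, ncard_edgeSet_sup_edge hux_ne hux_n,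
      ← ncard_edgeSet_sup_edge hxy_ne hxy_n, hK]

theorem exists_ncard_edgeSet_eq_add_one (hG : IsErdosSachs d k G) (hk : 2 ≤ k)
    (hV : 2 * (d + 1) ^ k < Nat.card V)
    (hu : deg G u < d) (hv : deg G v < d) (huv : u = v → deg G u + 1 < d) :
    ∃ G' : SimpleGraph V, IsErdosSachs d k G' ∧ G'.edgeSet.ncard = G.edgeSet.ncard + 1 := by
  obtain ⟨x, hux, hvx⟩ := exists_le_edist_of_two_mul_pow_lt_card hG.deg_le hV u v
  have hux' : k ≤ G.edist u x := (Nat.cast_le.2 k.le_succ).trans hux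
  rcases (hG.deg_le x).lt_or_eq with hx | hx
  · exact ⟨_, hG.sup_edge hk hux' hu hx⟩
  · obtain ⟨y, hxy⟩ : (G.neighborSet x).Nonempty :=
      Set.nonempty_of_ncard_ne_zero (show deg G x ≠ 0 by lia)
    exact hG.exists_ncard_edgeSet_eq_add_one_of_adj hk hu hv huv hux' hvx hxy

end IsErdosSachs

theorem exists_isErdosSachs_mul_card_le_sum_deg_add_one [Fintype V] (hk : 2 ≤ k)
    (hV : 2 * (d + 1) ^ k < Fintype.card V) :
    ∃ G : SimpleGraph V, IsErdosSachs d k G ∧ d * Fintype.card V ≤ ∑ v, deg G v + 1 := by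
  classical
  have hbot : IsErdosSachs d k (⊥ : SimpleGraph V) :=
    ⟨by simp [deg_eq_degree], by simp [ENat.natCast_lt_top]⟩
  obtain ⟨G, hG, hmax⟩ := Set.exists_max_image {G : SimpleGraph V | IsErdosSachs d k G}
    (fun G ↦ G.edgeSet.ncard) (Set.toFinite _) ⟨⊥, hbot⟩
  refine ⟨G, hG, ?_⟩
  by_contra! hlt
  have hconst : ∑ _v : V, d = d * Fintype.card V := by simp [mul_comm]
  obtain ⟨u, -, hu⟩ : ∃ u ∈ Finset.univ, deg G u < d :=
    Finset.exists_lt_of_sum_lt (by lia)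
  obtain ⟨v, -, hv⟩ : ∃ v ∈ Finset.univ, deg G v + (if v = u then 1 else 0) < d :=
    Finset.exists_lt_of_sum_lt (by simpa [Finset.sum_add_distrib, hconst] using hlt)
  rw [← Nat.card_eq_fintype_card] at hV
  obtain ⟨G', hG', hcard⟩ := hG.exists_ncard_edgeSet_eq_add_one (v := v) hk hV hu (by lia)
    (by rintro rfl; simpa using hv)
  have : G'.edgeSet.ncard ≤ G.edgeSet.ncard := hmax G' hG'
  lia

end ErdosSachs

section LocalSparsity

open Finset

variable {V : Type*} {G : SimpleGraph V}

theorem isAcyclic_of_card_lt_egirth [Fintype V] (h : Fintype.card V < G.egirth) :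
    G.IsAcyclic := by
  intro x c hc
  have hlen : c.length ≤ Fintype.card V := by
    simpa using hc.support_nodup.length_le_card
  exact (h.trans_le (egirth_le_length hc)).not_ge (by exact_mod_cast hlen)

theorem card_edgeFinset_lt_card_of_isAcyclic [Fintype V] [Nonempty V] [Fintype G.edgeSet]
    (h : G.IsAcyclic) : #G.edgeFinset < Fintype.card V := by
  classical
  obtain ⟨T, hGT, -, hT⟩ := connected_top.exists_isTree_le_of_le_of_isAcyclic le_top h
  rw [← hT.card_edgeFinset, Nat.lt_add_one_iff]
  exact card_le_card (edgeFinset_mono hGT)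

theorem card_interedges_self_eq_two_mul [DecidableRel G.Adj] (S : Finset V) :
    #(G.interedges S S) = 2 * #(G.induce (S : Set V)).edgeFinset := by
  classical
  rw [two_mul_card_edgeFinset]
  symm
  refine card_nbij (Prod.map (↑) (↑)) ?_ ?_ ?_
  · rintro ⟨a, b⟩ hab
    simpa [mem_interedges_iff] using hab
  · exact (Subtype.val_injective.prodMap Subtype.val_injective).injOn
  · rintro ⟨a, b⟩ hab
    obtain ⟨ha, hb, h⟩ := (G.mk_mem_interedges_iff).1 hab
    exact ⟨(⟨a, ha⟩, ⟨b, hb⟩), by simpa using h, rfl⟩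

theorem card_interedges_self_add_two_le [DecidableRel G.Adj] {S : Finset V}
    (hS : S.Nonempty) (h : #S < G.egirth) : #(G.interedges S S) + 2 ≤ 2 * #S := by
  classical
  have := hS.to_subtype
  have hcard : Fintype.card (S : Set V) = #S := by simp
  have hacyclic : (G.induce (S : Set V)).IsAcyclic := by
    apply isAcyclic_of_card_lt_egirth
    rw [hcard]
    exact h.trans_le (Embedding.induce (G := G) (S : Set V)).isContained.egirth_le
  have := card_edgeFinset_lt_card_of_isAcyclic hacyclic
  rw [card_interedges_self_eq_two_mul]
  lia

theorem sum_deg_eq_card_interedges [Finite V] [DecidableRel G.Adj] {A S : Finset V}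
    (hN : ∀ v ∈ A, ∀ w, G.Adj v w → w ∈ S) : ∑ v ∈ A, deg G v = #(G.interedges A S) := by
  have := Fintype.ofFinite V
  classical
  have hdeg (v : V) (hv : v ∈ A) : deg G v = #{w ∈ S | G.Adj v w} := by
    rw [deg_eq_degree, ← card_neighborFinset_eq_degree]
    congr 1
    ext w
    simpa using hN v hv w
  rw [sum_congr rfl hdeg, interedges_def, card_filter, sum_product]
  simp only [card_filter]

theorem sum_deg_add_two_le [Finite V] {A W : Finset V} (hA : A.Nonempty)
    (hgirth : (#A + #W : ℕ) < G.egirth)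
    (hN : ∀ v ∈ A, ∀ w, G.Adj v w → w ∈ A ∨ w ∈ W) :
    ∑ v ∈ A, deg G v + 2 ≤ 2 * #A + #W := by
  classical
  set S := A ∪ W
  have hAS : A ⊆ S := subset_union_left
  have hS : #S ≤ #A + #W := card_union_le A W
  have hsum : ∑ v ∈ A, deg G v = #(G.interedges A S) :=
    sum_deg_eq_card_interedges fun v hv w hw ↦ mem_union.2 (hN v hv w hw)
  have hSS := card_interedges_self_add_two_le (hA.mono hAS)
    (lt_of_le_of_lt (by exact_mod_cast hS) hgirth)
  have hAA := card_interedges_self_add_two_le hA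
    (lt_of_le_of_lt (by exact_mod_cast (#A).le_add_right #W) hgirth)
  have hunion : #(G.interedges A S ∪ G.interedges S A) ≤ #(G.interedges S S) :=
    card_le_card <| union_subset (G.interedges_mono hAS subset_rfl)
      (G.interedges_mono subset_rfl hAS)
  have hinter : #(G.interedges A S ∩ G.interedges S A) ≤ #(G.interedges A A) :=
    card_le_card fun p hp ↦ by
      simp only [mem_inter, mem_interedges_iff] at hp ⊢
      tauto
  have := G.symm
  have hcomm : #(G.interedges S A) = #(G.interedges A S) := Rel.card_interedges_comm S A
  have hadd := card_union_add_card_inter (G.interedges A S) (G.interedges S A)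
  lia

end LocalSparsity

section Minors

open Finset

theorem two_mul_card_le_card_add_card_subsingleton {ι V : Type*} [Fintype ι] [Fintype V]
    {μ : ι → Set V} (hne : ∀ i, (μ i).Nonempty) (hdisj : Pairwise (Function.onFun Disjoint μ))
    [DecidablePred fun i ↦ (μ i).Subsingleton] :
    2 * Fintype.card ι ≤ Fintype.card V + #{i | (μ i).Subsingleton} := by
  have hle (i : ι) : 2 ≤ (μ i).ncard + if (μ i).Subsingleton then 1 else 0 := by
    split_ifs with h
    · have := (Set.ncard_pos (Set.toFinite _)).2 (hne i)
      lia
    · have := (Set.one_lt_ncard_iff_nontrivial).2 (Set.not_subsingleton_iff.1 h)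
      lia
  have hunion : ∑ i, (μ i).ncard = (⋃ i, μ i).ncard := by
    rw [Set.ncard_iUnion_of_finite (fun i ↦ Set.toFinite _) hdisj, finsum_eq_sum_of_fintype]
  have hV : (⋃ i, μ i).ncard ≤ Fintype.card V := by
    rw [← Nat.card_eq_fintype_card]
    exact Set.ncard_le_card _
  calc 2 * Fintype.card ι = ∑ _i : ι, 2 := by simp [mul_comm]
    _ ≤ ∑ i, ((μ i).ncard + if (μ i).Subsingleton then 1 else 0) := sum_le_sum fun i _ ↦ hle i
    _ ≤ Fintype.card V + #{i | (μ i).Subsingleton} := by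
      rw [sum_add_distrib, hunion, ← card_filter]
      gcongr

theorem exists_complete_pair_of_isMinor_completeBipartiteGraph {α β V : Type*} [Fintype α]
    [Fintype β] [Fintype V] {G : SimpleGraph V} (h : IsMinor (completeBipartiteGraph α β) G) :
    ∃ A B : Finset V, #A ≤ Fintype.card α ∧ #B ≤ Fintype.card β ∧
      2 * (Fintype.card α + Fintype.card β) ≤ Fintype.card V + (#A + #B) ∧
      ∀ a ∈ A, ∀ b ∈ B, G.Adj a b := by
  classical
  obtain ⟨μ, hdisj, hconn, hadj⟩ := h
  have hne (i) : (μ i).Nonempty := Set.nonempty_coe_sort.1 (hconn i).nonempty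
  choose root hroot using hne
  have hinj : Function.Injective root := fun i j hij ↦ by
    by_contra hij'
    exact Set.disjoint_left.1 (hdisj i j hij') (hroot i) (hij ▸ hroot j)
  have hcard := two_mul_card_le_card_add_card_subsingleton (fun i ↦ ⟨_, hroot i⟩)
    fun i j ↦ hdisj i j
  set S : Finset (α ⊕ β) := {i | (μ i).Subsingleton} with hS
  have hrootS {i} (hi : i ∈ S) {a} (ha : a ∈ μ i) : a = root i := by
    rw [hS, mem_filter_univ] at hi
    exact hi ha (hroot i)
  refine ⟨S.toLeft.image (root ∘ Sum.inl), S.toRight.image (root ∘ Sum.inr),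
    card_image_le.trans (card_le_univ _), card_image_le.trans (card_le_univ _), ?_, ?_⟩
  · rw [card_image_of_injective _ (hinj.comp Sum.inl_injective),
      card_image_of_injective _ (hinj.comp Sum.inr_injective), S.card_toLeft_add_card_toRight]
    simpa using hcard
  · simp only [forall_mem_image, mem_toLeft, mem_toRight, Function.comp_apply]
    intro i hi j hj
    obtain ⟨a, ha, b, hb, hab⟩ := hadj (.inl i) (.inr j) (by simp)
    rwa [hrootS hi ha, hrootS hj hb] at hab

theorem not_isMinor_completeBipartiteGraph_compl {α β V : Type*} [Fintype α] [Fintype β]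
    [Fintype V] {H : SimpleGraph V} {d m : ℕ} (hd : 2 ≤ d) (hm : 1 ≤ m)
    (hα : 2 * Fintype.card α ≤ d * m)
    (hV : Fintype.card V + m ≤ 2 * Fintype.card α + Fintype.card β)
    (hgirth : (3 * Fintype.card α : ℕ) < H.egirth)
    (hdeg : ∀ A : Finset V, d * #A ≤ ∑ v ∈ A, deg H v + 1) :
    ¬ IsMinor (completeBipartiteGraph α β) Hᶜ := by
  classical
  intro hminor
  obtain ⟨A, B, hA, hB, hAB, hadj⟩ :=
    exists_complete_pair_of_isMinor_completeBipartiteGraph hminor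
  have hdisj : Disjoint A B := disjoint_left.2 fun v hvA hvB ↦ (hadj v hvA v hvB).ne rfl
  have hW := card_add_card_compl (A ∪ B)
  rw [card_union_of_disjoint hdisj] at hW
  have hN (v) (hv : v ∈ A) (w) (hvw : H.Adj v w) : w ∈ A ∨ w ∈ (A ∪ B)ᶜ := by
    by_cases hw : w ∈ B
    · exact absurd hvw (hadj v hv w hw).2
    · simp only [mem_compl, mem_union]
      tauto
  have hne : A.Nonempty := card_pos.1 (by lia)
  have hgirth' : (#A + #(A ∪ B)ᶜ : ℕ) < H.egirth :=
    lt_of_le_of_lt (by exact_mod_cast (by lia)) hgirth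
  have hexp := sum_deg_add_two_le hne hgirth' hN
  have hdense := hdeg A
  obtain ⟨c, rfl⟩ := Nat.exists_eq_add_of_le hd
  have hA_lt_W : c * #A < #(A ∪ B)ᶜ := by lia
  have hW_le : #(A ∪ B)ᶜ ≤ c * m := by lia
  have hm_le_A : c * m ≤ c * #A := Nat.mul_le_mul_left c (by lia)
  exact hA_lt_W.not_ge (hW_le.trans hm_le_A)

end Minors

theorem no_Kst_minor_large_min_degree (s : ℕ) (hs : 0 < s) :
    ∃ t₀ : ℕ, ∀ t : ℕ, t₀ ≤ t →
      ∃ (N : ℕ) (G : SimpleGraph (Fin N)), 0 < N ∧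
        (∀ v : Fin N,
          2 * (s : ℝ) + (t : ℝ) - 2 * Real.sqrt (2 * (s : ℝ)) - 2 ≤ (deg G v : ℝ)) ∧
        ¬ IsMinor (completeBipartiteGraph (Fin s) (Fin t)) G := by
  obtain ⟨d, m, hd, hm, hdm, hsqrt⟩ := exists_mul_ge_add_le_two_mul_sqrt (n := 2 * s) (by lia)
  refine ⟨2 * (d + 1) ^ (3 * s) + m + 1, fun t ht ↦ ?_⟩
  obtain ⟨N, hN⟩ : ∃ N, N + m = 2 * s + t := ⟨2 * s + t - m, by lia⟩
  obtain ⟨H, hH, hsum⟩ := exists_isErdosSachs_mul_card_le_sum_deg_add_one (V := Fin N) (d := d)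
    (k := 3 * s) (by lia) (by rw [Fintype.card_fin]; lia)
  refine ⟨N, Hᶜ, by lia, fun v ↦ ?_, ?_⟩
  · have hdeg : (N : ℝ) ≤ deg Hᶜ v + 1 + d := by
      exact_mod_cast (Fintype.card_fin N).ge.trans (card_le_deg_compl_add (hH.deg_le v))
    have hNR : (N + m : ℝ) = 2 * s + t := by exact_mod_cast hN
    push_cast at hsqrt
    linarith
  · refine not_isMinor_completeBipartiteGraph_compl hd hm ?_ ?_ ?_
      (mul_card_le_sum_add_of_forall_le hH.deg_le hsum)
    · simpa using hdm
    · simpa using hN.le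
    · simpa using hH.lt_egirth
end

section
/- There exists a positive integer Δ₀ such that for every integer Δ ≥ Δ₀ and every integer n ≥ 2Δ, there exist a bipartite graph H′ with |V(H′)| ≤ 6n and maximum degree Δ(H′) ≤ Δ, and a graph G′ with minimum degree δ(G′) ≥ (1/5)·n·√(ln Δ), such that H′ is not a minor of G′. -/
open SimpleGraph

/-!
Take a graph `G` on `Δ` vertices that is dense but has no large joined families: all degrees are at
least `Δ / 2`, yet among any two families of `ℓ` pairwise disjoint sets of size at most
`s ≈ √(ln Δ) / 3` some member of the first is anticomplete to some member of the second. A random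
graph of edge density `15 / 16` works, since two sets of size `s` are anticomplete with probability
`16 ^ (-s ^ 2)`, which is a small negative power of `Δ`. Let `G'` be the blow-up of `G` in which
every vertex becomes `w` independent copies, with `w` of order `n √(ln Δ) / Δ`, and let `H'` be the
union of `Δ` random perfect matchings between two sides of `3 n` vertices.

The bags of a model of `H'` in `G'` are disjoint, so on each side at least half of them have at most
`s` vertices. Projected to `G`, each vertex lies in at most `w` bags, so disjoint families can be
chosen greedily, and many pairs (left bag, right bag) have anticomplete projections. All
matchings must avoid these pairs. A fixed set of pairs is avoided with probability at most
`exp (-Δ k ^ 2 / (3 n))`, where `k` is about `3 n / (8 ℓ)`. Replacing the large projected bags by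
the whole vertex set of `G`, a harmless enlargement, leaves only about `Δ ^ s` possible bags and
hence few sets of pairs, so a union bound yields matchings for which there is no model.
-/

section Counting

open Finset

lemma card_filter_forall_le_exp_mul_card {Ω ι : Type*} [Fintype Ω] {P : ι → Ω → Prop}
    [∀ i, DecidablePred (P i)] {p : ℝ} (T : Finset ι)
    (h : ∀ T' ⊆ T, ∀ i ∈ T, i ∉ T' →
      p * #{ω | ∀ j ∈ T', P j ω} ≤ #{ω | (∀ j ∈ T', P j ω) ∧ ¬ P i ω}) :
    (#{ω | ∀ j ∈ T, P j ω} : ℝ) ≤ Real.exp (-(p * #T)) * Fintype.card Ω := by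
  classical
  induction T using Finset.induction_on with
  | empty => simp
  | insert i T hi ih =>
    have ih := ih fun T' hT' j hj =>
      h T' (hT'.trans (subset_insert _ _)) j (mem_insert_of_mem hj)
    have hi_fails := h T (subset_insert _ _) i (mem_insert_self _ _) hi
    have hsplit : (#{ω | ∀ j ∈ insert i T, P j ω} : ℝ) + #{ω | (∀ j ∈ T, P j ω) ∧ ¬ P i ω} =
        #{ω | ∀ j ∈ T, P j ω} := by
      have := card_filter_add_card_filter_not (s := ({ω | ∀ j ∈ T, P j ω} : Finset Ω)) (P i)
      simp only [filter_filter] at this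
      simp only [forall_mem_insert, and_comm (a := P i _)]
      exact_mod_cast this
    calc (#{ω | ∀ j ∈ insert i T, P j ω} : ℝ)
        ≤ (1 - p) * #{ω | ∀ j ∈ T, P j ω} := by linarith
      _ ≤ Real.exp (-p) * (Real.exp (-(p * #T)) * Fintype.card Ω) := by
        gcongr
        exact Real.one_sub_le_exp_neg p
      _ = Real.exp (-(p * #(insert i T))) * Fintype.card Ω := by
        rw [← mul_assoc, ← Real.exp_add, card_insert_of_notMem hi]
        push_cast
        ring_nf

section Permutations

open Equiv

variable {ι : Type*} [Fintype ι]

lemma mul_card_perm_forall_notMem_le [DecidableEq ι] {T : Finset ι} {E : ι → Finset ι}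
    {i : ι} {t : ℕ} (hi : i ∉ T) (hE : #T + t ≤ #(E i)) :
    t * #{σ : Perm ι | ∀ j ∈ T, σ j ∉ E j} ≤
      Fintype.card ι * #{σ : Perm ι | (∀ j ∈ T, σ j ∉ E j) ∧ σ i ∈ E i} := by
  set X : Finset (Perm ι) := {σ | ∀ j ∈ T, σ j ∉ E j}
  set Y : Finset (Perm ι) := {σ | (∀ j ∈ T, σ j ∉ E j) ∧ σ i ∈ E i}
  -- Redirect `i` to a target in `E i` not used by `T`; the old image of `i` undoes this.
  let redirect : (Σ _ : Perm ι, ι) → Perm ι × ι := fun x => (x.1.trans (swap (x.1 i) x.2), x.1 i)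
  have hmaps : Set.MapsTo redirect (X.sigma fun σ => E i \ T.image σ)
      ↑(Y ×ˢ (univ : Finset ι)) := by
    rintro ⟨σ, v⟩ hσv
    simp only [coe_sigma, Set.mem_sigma_iff, mem_coe, mem_sdiff, mem_image, not_exists, not_and,
      X, mem_filter, mem_univ, true_and] at hσv
    obtain ⟨hσ, hv, hvT⟩ := hσv
    simp only [redirect, Y, coe_product, Set.mem_prod, mem_coe, mem_filter, mem_univ, true_and,
      and_true, trans_apply, swap_apply_left]
    refine ⟨fun j hj => ?_, hv⟩
    rw [swap_apply_of_ne_of_ne (σ.injective.ne (ne_of_mem_of_not_mem hj hi)) (hvT j hj)]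
    exact hσ j hj
  have hinj : Function.Injective redirect := by
    rintro ⟨σ, v⟩ ⟨σ', v'⟩ h
    obtain ⟨hperm, himage⟩ := Prod.mk.inj h
    obtain rfl : v = v' := by simpa using DFunLike.congr_fun hperm i
    obtain rfl : σ = σ' := by
      ext x
      have hx := DFunLike.congr_fun hperm x
      rw [himage] at hx
      exact (swap _ v).injective hx
    rfl
  calc t * #X = #X • t := by rw [smul_eq_mul, mul_comm]
    _ ≤ ∑ σ ∈ X, #(E i \ T.image σ) := by
      refine card_nsmul_le_sum _ _ _ fun σ _ => ?_
      have := le_card_sdiff (T.image σ) (E i)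
      have : #(T.image σ) ≤ #T := card_image_le
      omega
    _ ≤ #(Y ×ˢ (univ : Finset ι)) := by
      rw [← card_sigma]
      exact card_le_card_of_injOn redirect hmaps hinj.injOn
    _ = Fintype.card ι * #Y := by rw [card_product, card_univ, mul_comm]

lemma card_perm_forall_notMem_le [DecidableEq ι] {S : Finset ι} {E : ι → Finset ι} {t : ℕ}
    (hE : ∀ i ∈ S, #S + t ≤ #(E i)) :
    (#{σ : Perm ι | ∀ i ∈ S, σ i ∉ E i} : ℝ) ≤
      Real.exp (-(t / Fintype.card ι * #S)) * Fintype.card (Perm ι) := by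
  convert card_filter_forall_le_exp_mul_card (P := fun i (σ : Perm ι) => σ i ∉ E i)
    (p := t / Fintype.card ι) S fun T hT i hi hiT => ?_
  have : Nonempty ι := ⟨i⟩
  have hstep := mul_card_perm_forall_notMem_le hiT
    ((Nat.add_le_add_right (card_le_card hT) t).trans (hE i hi))
  simp only [not_not]
  rw [div_mul_eq_mul_div, div_le_iff₀' (by exact_mod_cast Fintype.card_pos)]
  norm_cast
  convert hstep

/-- The bipartite graph on two copies of `ι` in which `i` on the left is joined to all of `E i` on
the right has at least `k` left vertices of degree at least `2 * k`. -/
def HasHeavyRows (k : ℕ) (E : ι → Finset ι) : Prop :=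
  k ≤ #{i | 2 * k ≤ #(E i)}

lemma HasHeavyRows.card_perm_forall_notMem_le [DecidableEq ι] {k : ℕ} {E : ι → Finset ι}
    (hE : HasHeavyRows k E) :
    (#{σ : Perm ι | ∀ i, σ i ∉ E i} : ℝ) ≤
      Real.exp (-(k ^ 2 / Fintype.card ι)) * Fintype.card (Perm ι) := by
  obtain ⟨S, hS, hSk⟩ := exists_subset_card_eq hE
  have hbound := _root_.card_perm_forall_notMem_le (S := S) (E := E) (t := k) fun i hi => by
    rw [hSk, ← two_mul]
    exact (mem_filter.1 (hS hi)).2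
  rw [hSk, div_mul_eq_mul_div, ← sq] at hbound
  refine le_trans ?_ hbound
  exact_mod_cast card_le_card <| monotone_filter_right univ
    fun (σ : Perm ι) _ (hσ : ∀ i, σ i ∉ E i) i (_ : i ∈ S) => hσ i

theorem exists_perms_meeting_heavy_families {κ : Type*} [Fintype κ] {k : ℕ}
    {𝓔 : Finset (ι → Finset ι)} (hheavy : ∀ E ∈ 𝓔, HasHeavyRows k E)
    (hcard : (#𝓔 : ℝ) < Real.exp (Fintype.card κ * (k ^ 2 / Fintype.card ι))) :
    ∃ σ : κ → Perm ι, ∀ E ∈ 𝓔, ∃ c i, σ c i ∈ E i := by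
  classical
  by_contra! hmiss
  let missing (E : ι → Finset ι) : Finset (Perm ι) := {σ | ∀ i, σ i ∉ E i}
  have hcover : (univ : Finset (κ → Perm ι)) ⊆
      𝓔.biUnion fun E => Fintype.piFinset fun _ => missing E := fun σ _ => by
    simpa [missing] using hmiss σ
  have hpos : (0 : ℝ) < (Fintype.card (Perm ι) : ℝ) ^ Fintype.card κ :=
    pow_pos (by exact_mod_cast Fintype.card_pos) _
  refine lt_irrefl ((Fintype.card (Perm ι) : ℝ) ^ Fintype.card κ) ?_
  calc (Fintype.card (Perm ι) : ℝ) ^ Fintype.card κ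
      = #(univ : Finset (κ → Perm ι)) := by rw [card_univ, Fintype.card_fun, Nat.cast_pow]
    _ ≤ ∑ E ∈ 𝓔, (#(missing E) : ℝ) ^ Fintype.card κ := by
      have := (card_le_card hcover).trans card_biUnion_le
      simp only [Fintype.card_piFinset, prod_const, card_univ] at this
      exact_mod_cast this
    _ ≤ #𝓔 * (Real.exp (-(k ^ 2 / Fintype.card ι)) * Fintype.card (Perm ι)) ^ Fintype.card κ := by
      rw [← nsmul_eq_mul]
      refine sum_le_card_nsmul _ _ _ fun E hE => ?_
      gcongr
      exact (hheavy E hE).card_perm_forall_notMem_le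
    _ < Real.exp (Fintype.card κ * (k ^ 2 / Fintype.card ι)) *
        (Real.exp (-(k ^ 2 / Fintype.card ι)) * Fintype.card (Perm ι)) ^ Fintype.card κ := by
      gcongr
    _ = (Fintype.card (Perm ι) : ℝ) ^ Fintype.card κ := by
      rw [mul_pow, ← Real.exp_nat_mul, ← mul_assoc, ← Real.exp_add, mul_neg, add_neg_cancel,
        Real.exp_zero, one_mul]

end Permutations

end Counting

section BaseGraph

open Finset

section RandomLabels

variable {κ : Type*} [Fintype κ] [DecidableEq κ] {q : ℕ} [NeZero q]

lemma card_fun_forall_eq_zero_mul_pow (C : Finset κ) :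
    #{M : κ → Fin q | ∀ e ∈ C, M e = 0} * q ^ #C = Fintype.card (κ → Fin q) := by
  have hpi : ({M : κ → Fin q | ∀ e ∈ C, M e = 0} : Finset _) =
      Fintype.piFinset fun e => if e ∈ C then {0} else univ := by
    ext M
    simp only [mem_filter, mem_univ, true_and, Fintype.mem_piFinset]
    refine forall_congr' fun e => ?_
    split_ifs with he <;> simp [he]
  have hcard (e : κ) : #(if e ∈ C then ({0} : Finset (Fin q)) else univ) =
      if e ∈ C then 1 else q := by
    split_ifs <;> simp
  simp only [hpi, Fintype.card_piFinset, hcard]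
  rw [prod_ite, prod_const_one, one_mul, prod_const, ← pow_add, Fintype.card_fun, Fintype.card_fin,
    filter_not, filter_mem_eq_inter, univ_inter, card_sdiff_add_card,
    union_eq_left.2 (subset_univ C), card_univ]

lemma card_fun_forall_exists_ne_zero_le {ι : Type*} {C : ι → Finset κ} {c : ℕ} {T : Finset ι}
    (hC : ∀ i ∈ T, #(C i) ≤ c) (hdisj : (T : Set ι).PairwiseDisjoint C) :
    (#{M : κ → Fin q | ∀ i ∈ T, ∃ e ∈ C i, M e ≠ 0} : ℝ) ≤
      Real.exp (-(1 / (q : ℝ) ^ c * #T)) * Fintype.card (κ → Fin q) := by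
  refine card_filter_forall_le_exp_mul_card T fun T' hT' i hi hiT' => ?_
  have hq : 0 < q := NeZero.pos q
  rw [div_mul_eq_mul_div, one_mul, div_le_iff₀ (by positivity)]
  norm_cast
  set X : Finset (κ → Fin q) := {M | ∀ j ∈ T', ∃ e ∈ C j, M e ≠ 0}
  set Y : Finset (κ → Fin q) :=
    {M | (∀ j ∈ T', ∃ e ∈ C j, M e ≠ 0) ∧ ¬ ∃ e ∈ C i, M e ≠ 0}
  -- Erasing the labels on `C i` is undone by remembering them.
  let erase : (κ → Fin q) → (κ → Fin q) × (C i → Fin q) :=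
    fun M => (fun e => if e ∈ C i then 0 else M e, fun e => M e)
  have hmaps : Set.MapsTo erase X ↑(Y ×ˢ (univ : Finset (C i → Fin q))) := by
    intro M hM
    simp only [X, mem_coe, mem_filter, mem_univ, true_and] at hM
    simp only [Y, erase, mem_coe, mem_product, mem_filter, mem_univ, true_and, and_true]
    refine ⟨fun j hj => ?_, fun ⟨e, he, hne⟩ => hne (if_pos he)⟩
    obtain ⟨e, he, hne⟩ := hM j hj
    have hji : Disjoint (C j) (C i) := hdisj (hT' hj) hi (ne_of_mem_of_not_mem hj hiT')
    exact ⟨e, he, by rwa [if_neg (disjoint_left.1 hji he)]⟩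
  have hinj : Function.Injective erase := by
    intro M M' h
    obtain ⟨hout, hin⟩ := Prod.mk.inj h
    ext1 e
    by_cases he : e ∈ C i
    · exact congrFun hin ⟨e, he⟩
    · simpa [he] using congrFun hout e
  calc #X ≤ #(Y ×ˢ (univ : Finset (C i → Fin q))) :=
        card_le_card_of_injOn erase hmaps hinj.injOn
    _ = #Y * q ^ #(C i) := by
        rw [card_product, card_univ, Fintype.card_fun, Fintype.card_fin, Fintype.card_coe]
    _ ≤ #Y * q ^ c := Nat.mul_le_mul_left _ (Nat.pow_le_pow_right hq (hC i hi))

end RandomLabels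

variable {V : Type*}

/-- The graph on `V` whose edges are the pairs with nonzero label. For uniformly random labels in
`Fin q` it is the binomial random graph with edge probability `1 - 1 / q`. -/
def labelGraph {q : ℕ} [NeZero q] (M : Sym2 V → Fin q) : SimpleGraph V :=
  fromEdgeSet {e | M e ≠ 0}

lemma labelGraph_adj {q : ℕ} [NeZero q] {M : Sym2 V → Fin q} {u v : V} :
    (labelGraph M).Adj u v ↔ M s(u, v) ≠ 0 ∧ u ≠ v :=
  fromEdgeSet_adj _

lemma exists_isolating_set [Fintype V] {q : ℕ} [NeZero q] {M : Sym2 V → Fin q} {u : V}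
    (hu : 2 * deg (labelGraph M) u < Fintype.card V) :
    ∃ T : Finset V, Fintype.card V ≤ 2 * #T + 1 ∧ ∀ v ∈ T, M s(u, v) = 0 := by
  classical
  set N := (labelGraph M).neighborFinset u
  have hdeg : deg (labelGraph M) u = #N := by
    rw [deg, Set.ncard_eq_toFinset_card']
    rfl
  refine ⟨(insert u N)ᶜ, ?_, fun v hv => ?_⟩
  · have := card_insert_le u N
    rw [card_compl]
    omega
  · obtain ⟨hvu, hvN⟩ : v ≠ u ∧ ¬ (labelGraph M).Adj u v := by simpa [N] using hv
    by_contra hne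
    exact hvN (labelGraph_adj.2 ⟨hne, hvu.symm⟩)

lemma card_labels_forall_mem_eq_zero_mul_le [Fintype V] [DecidableEq V] {u : V} {T : Finset V}
    (hT : Fintype.card V ≤ 2 * #T + 1) :
    #{M : Sym2 V → Fin 16 | ∀ v ∈ T, M s(u, v) = 0} * 4 ^ Fintype.card V ≤
      4 * Fintype.card (Sym2 V → Fin 16) := by
  have hinj : Function.Injective fun v => s(u, v) := fun _ _ => Sym2.congr_right.1
  calc #{M : Sym2 V → Fin 16 | ∀ v ∈ T, M s(u, v) = 0} * 4 ^ Fintype.card V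
      ≤ #{M : Sym2 V → Fin 16 | ∀ v ∈ T, M s(u, v) = 0} * 4 ^ (2 * #T + 1) := by gcongr; norm_num
    _ = 4 * (#{M : Sym2 V → Fin 16 | ∀ e ∈ T.image fun v => s(u, v), M e = 0} *
          16 ^ #(T.image fun v => s(u, v))) := by
        rw [pow_succ, pow_mul, card_image_of_injective _ hinj]
        simp only [forall_mem_image]
        ring
    _ = 4 * Fintype.card (Sym2 V → Fin 16) := by rw [card_fun_forall_eq_zero_mul_pow]

open scoped Classical in
lemma two_mul_card_labels_deg_lt [Fintype V] (hV : 8 * Fintype.card V < 2 ^ Fintype.card V) :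
    2 * #{M : Sym2 V → Fin 16 | ∃ u, 2 * deg (labelGraph M) u < Fintype.card V} <
      Fintype.card (Sym2 V → Fin 16) := by
  set r := Fintype.card V
  let isolating : Finset (V × Finset V) := {x | r ≤ 2 * #x.2 + 1}
  let labels (x : V × Finset V) : Finset (Sym2 V → Fin 16) := {M | ∀ v ∈ x.2, M s(x.1, v) = 0}
  set bad : Finset (Sym2 V → Fin 16) := {M | ∃ u, 2 * deg (labelGraph M) u < r}
  have hcover : bad ⊆ isolating.biUnion labels := by
    intro M hM
    obtain ⟨u, hu⟩ := (mem_filter.1 hM).2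
    obtain ⟨T, hTcard, hT⟩ := exists_isolating_set hu
    exact mem_biUnion.2 ⟨(u, T), by simpa [isolating] using hTcard, by simpa [labels] using hT⟩
  have hunion : #bad * 4 ^ r ≤ r * 2 ^ r * (4 * Fintype.card (Sym2 V → Fin 16)) :=
    calc #bad * 4 ^ r ≤ ∑ x ∈ isolating, #(labels x) * 4 ^ r := by
          rw [← sum_mul]
          gcongr
          exact (card_le_card hcover).trans card_biUnion_le
      _ ≤ #isolating * (4 * Fintype.card (Sym2 V → Fin 16)) :=
          sum_le_card_nsmul _ _ _ fun x hx =>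
            card_labels_forall_mem_eq_zero_mul_le (mem_filter.1 hx).2
      _ ≤ r * 2 ^ r * (4 * Fintype.card (Sym2 V → Fin 16)) := by
          gcongr
          simpa [r] using card_le_univ isolating
  have : 0 < Fintype.card (Sym2 V → Fin 16) := Fintype.card_pos
  refine lt_of_mul_lt_mul_right (a := 4 ^ r) ?_ (Nat.zero_le _)
  calc 2 * #bad * 4 ^ r ≤ 8 * r * (2 ^ r * Fintype.card (Sym2 V → Fin 16)) := by linarith
    _ < 2 ^ r * (2 ^ r * Fintype.card (Sym2 V → Fin 16)) := by gcongr
    _ = Fintype.card (Sym2 V → Fin 16) * 4 ^ r := by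
        rw [← mul_assoc, ← mul_pow, mul_comm]
        norm_num

/-- No edge of `G` has one end in `P` and the other in `Q`. -/
def Anticomplete (G : SimpleGraph V) (P Q : Finset V) : Prop :=
  ∀ u ∈ P, ∀ v ∈ Q, ¬ G.Adj u v

lemma pairwiseDisjoint_image₂_sym2 [DecidableEq V] {𝓟 𝓠 : Finset (Finset V)}
    (h𝓟𝓠 : Disjoint 𝓟 𝓠) (hdisj : (𝓟 ∪ 𝓠 : Set (Finset V)).PairwiseDisjoint id) :
    (↑(𝓟 ×ˢ 𝓠) : Set (Finset V × Finset V)).PairwiseDisjoint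
      fun X => image₂ (fun u v => s(u, v)) X.1 X.2 := by
  rintro ⟨P, Q⟩ hPQ ⟨P', Q'⟩ hPQ' hne
  rw [Function.onFun, Finset.disjoint_left]
  have heq {A B : Finset V} (hA : A ∈ (𝓟 ∪ 𝓠 : Set (Finset V)))
      (hB : B ∈ (𝓟 ∪ 𝓠 : Set (Finset V))) {u : V} (huA : u ∈ A) (huB : u ∈ B) : A = B :=
    hdisj.elim_finset hA hB u huA huB
  simp only [coe_product, Set.mem_prod, mem_coe] at hPQ hPQ'
  simp only [mem_image₂]
  rintro _ ⟨u, hu, v, hv, rfl⟩ ⟨u', hu', v', hv', h⟩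
  rcases Sym2.eq_iff.1 h with ⟨rfl, rfl⟩ | ⟨rfl, rfl⟩
  · exact hne (Prod.ext (heq (.inl hPQ.1) (.inl hPQ'.1) hu hu')
      (heq (.inr hPQ.2) (.inr hPQ'.2) hv hv'))
  · exact Finset.disjoint_left.1 h𝓟𝓠 hPQ.1
      (heq (.inl hPQ.1) (.inr hPQ'.2) hu hv' ▸ hPQ'.2)

open scoped Classical in
lemma card_labels_forall_not_anticomplete_le [Fintype V] {q s : ℕ} [NeZero q]
    {𝓟 𝓠 : Finset (Finset V)} (h𝓟 : ∀ P ∈ 𝓟, #P ≤ s) (h𝓠 : ∀ Q ∈ 𝓠, #Q ≤ s)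
    (h𝓟𝓠 : Disjoint 𝓟 𝓠) (hdisj : (𝓟 ∪ 𝓠 : Set (Finset V)).PairwiseDisjoint id) :
    (#{M : Sym2 V → Fin q | ∀ P ∈ 𝓟, ∀ Q ∈ 𝓠, ¬ Anticomplete (labelGraph M) P Q} : ℝ) ≤
      Real.exp (-(#𝓟 * #𝓠 / (q : ℝ) ^ s ^ 2)) * Fintype.card (Sym2 V → Fin q) := by
  let pairs (X : Finset V × Finset V) : Finset (Sym2 V) := image₂ (fun u v => s(u, v)) X.1 X.2
  have hcard (X) (hX : X ∈ 𝓟 ×ˢ 𝓠) : #(pairs X) ≤ s ^ 2 := by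
    obtain ⟨hP, hQ⟩ := mem_product.1 hX
    rw [sq]
    exact (card_image₂_le _ _ _).trans (Nat.mul_le_mul (h𝓟 _ hP) (h𝓠 _ hQ))
  have hbound := card_fun_forall_exists_ne_zero_le (q := q) hcard
    (pairwiseDisjoint_image₂_sym2 h𝓟𝓠 hdisj)
  rw [card_product, Nat.cast_mul, one_div_mul_eq_div] at hbound
  refine le_trans ?_ hbound
  norm_cast
  refine card_le_card fun M hM => ?_
  simp only [mem_filter, mem_univ, true_and, mem_product, and_imp, Prod.forall, pairs,
    exists_mem_image₂] at hM ⊢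
  intro P Q hP hQ
  have hedge := hM P hP Q hQ
  simp only [Anticomplete, not_forall, not_not, labelGraph_adj] at hedge
  obtain ⟨u, hu, v, hv, hne, -⟩ := hedge
  exact ⟨u, hu, v, hv, hne⟩

/-- The nonempty sets of at most `s` elements. -/
def smallSets (V : Type*) [Fintype V] (s : ℕ) : Finset (Finset V) :=
  {P | P.Nonempty ∧ #P ≤ s}

lemma mem_smallSets [Fintype V] {s : ℕ} {P : Finset V} :
    P ∈ smallSets V s ↔ P.Nonempty ∧ #P ≤ s := by
  simp [smallSets]

lemma card_smallSets_le [Fintype V] (s : ℕ) : #(smallSets V s) ≤ Fintype.card V ^ s := by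
  classical
  have hcover : smallSets V s ⊆ univ.image fun f : Fin s → V => univ.image f := by
    intro P hP
    obtain ⟨hne, hcard⟩ := mem_smallSets.1 hP
    have : Nonempty P := hne.to_subtype
    obtain ⟨e⟩ : Nonempty (P ↪ Fin s) := Function.Embedding.nonempty_of_card_le (by simpa)
    have hsurj := Function.invFun_surjective e.injective
    refine mem_image.2 ⟨fun x => (Function.invFun e x).1, mem_univ _, ?_⟩
    ext v
    simpa using ⟨fun ⟨x, hx⟩ => hx ▸ (Function.invFun e x).2,
      fun hv => (hsurj ⟨v, hv⟩).imp fun x hx => congrArg Subtype.val hx⟩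
  calc #(smallSets V s) ≤ Fintype.card (Fin s → V) := (card_le_card hcover).trans card_image_le
    _ = Fintype.card V ^ s := by rw [Fintype.card_fun, Fintype.card_fin]

open scoped Classical in
/-- The pairs of families of `ℓ` sets in `smallSets V s` such that the `2 * ℓ` sets involved are
distinct and pairwise disjoint. -/
noncomputable def smallFamilyPairs (V : Type*) [Fintype V] (s ℓ : ℕ) :
    Finset (Finset (Finset V) × Finset (Finset V)) :=
  {X ∈ powersetCard ℓ (smallSets V s) ×ˢ powersetCard ℓ (smallSets V s) |
    Disjoint X.1 X.2 ∧ (X.1 ∪ X.2 : Set (Finset V)).PairwiseDisjoint id}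

lemma mem_smallFamilyPairs [Fintype V] {s ℓ : ℕ} {X : Finset (Finset V) × Finset (Finset V)} :
    X ∈ smallFamilyPairs V s ℓ ↔ ((X.1 ⊆ smallSets V s ∧ #X.1 = ℓ) ∧
      X.2 ⊆ smallSets V s ∧ #X.2 = ℓ) ∧
      Disjoint X.1 X.2 ∧ (X.1 ∪ X.2 : Set (Finset V)).PairwiseDisjoint id := by
  simp only [smallFamilyPairs, mem_filter, mem_product, mem_powersetCard]

lemma card_smallFamilyPairs_le [Fintype V] (s ℓ : ℕ) :
    #(smallFamilyPairs V s ℓ) ≤ Fintype.card V ^ (2 * s * ℓ) := by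
  have hfamilies : #(powersetCard ℓ (smallSets V s)) ≤ (Fintype.card V ^ s) ^ ℓ := by
    rw [card_powersetCard]
    exact (Nat.choose_le_pow _ _).trans (Nat.pow_le_pow_left (card_smallSets_le s) ℓ)
  calc #(smallFamilyPairs V s ℓ)
      ≤ #(powersetCard ℓ (smallSets V s)) * #(powersetCard ℓ (smallSets V s)) := by
        rw [← card_product]
        exact card_le_card fun X hX => mem_product.2 <| by
          simpa only [mem_powersetCard] using (mem_smallFamilyPairs.1 hX).1
    _ ≤ (Fintype.card V ^ s) ^ ℓ * (Fintype.card V ^ s) ^ ℓ := by gcongr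
    _ = Fintype.card V ^ (2 * s * ℓ) := by ring

/-- Whenever `2 * ℓ` pairwise disjoint nonempty sets of at most `s` vertices are split into two
families of `ℓ` sets, some member of the first family has no edges to some member of the second. -/
def HasAnticompletePair [Fintype V] (G : SimpleGraph V) (s ℓ : ℕ) : Prop :=
  ∀ X ∈ smallFamilyPairs V s ℓ, ∃ P ∈ X.1, ∃ Q ∈ X.2, Anticomplete G P Q

open scoped Classical in
lemma two_mul_card_labels_not_hasAnticompletePair_le [Fintype V] {q s ℓ : ℕ} [NeZero q]
    (h : 2 * (Fintype.card V : ℝ) ^ (2 * s * ℓ) ≤ Real.exp (ℓ ^ 2 / (q : ℝ) ^ s ^ 2)) :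
    2 * #{M : Sym2 V → Fin q | ¬ HasAnticompletePair (labelGraph M) s ℓ} ≤
      Fintype.card (Sym2 V → Fin q) := by
  set bad : Finset (Sym2 V → Fin q) := {M | ¬ HasAnticompletePair (labelGraph M) s ℓ}
  let joined (X : Finset (Finset V) × Finset (Finset V)) : Finset (Sym2 V → Fin q) :=
    {M | ∀ P ∈ X.1, ∀ Q ∈ X.2, ¬ Anticomplete (labelGraph M) P Q}
  have hcover : bad ⊆ (smallFamilyPairs V s ℓ).biUnion joined := by
    intro M hM
    have hno := (mem_filter.1 hM).2
    simp only [HasAnticompletePair] at hno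
    push Not at hno
    simpa [joined] using hno
  have hjoined (X) (hX : X ∈ smallFamilyPairs V s ℓ) : (#(joined X) : ℝ) ≤
      Real.exp (-(ℓ ^ 2 / (q : ℝ) ^ s ^ 2)) * Fintype.card (Sym2 V → Fin q) := by
    obtain ⟨⟨⟨h𝓟, h𝓟card⟩, h𝓠, h𝓠card⟩, h𝓟𝓠, hdisj⟩ := mem_smallFamilyPairs.1 hX
    have := card_labels_forall_not_anticomplete_le (q := q)
      (fun P hP => (mem_smallSets.1 (h𝓟 hP)).2) (fun Q hQ => (mem_smallSets.1 (h𝓠 hQ)).2)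
      h𝓟𝓠 hdisj
    rwa [h𝓟card, h𝓠card, ← sq] at this
  suffices 2 * (#bad : ℝ) ≤ Fintype.card (Sym2 V → Fin q) by exact_mod_cast this
  calc 2 * (#bad : ℝ) ≤ 2 * ∑ X ∈ smallFamilyPairs V s ℓ, (#(joined X) : ℝ) := by
        exact_mod_cast Nat.mul_le_mul_left 2 ((card_le_card hcover).trans card_biUnion_le)
    _ ≤ 2 * (#(smallFamilyPairs V s ℓ) * (Real.exp (-(ℓ ^ 2 / (q : ℝ) ^ s ^ 2)) *
          Fintype.card (Sym2 V → Fin q))) := by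
        rw [← nsmul_eq_mul #(smallFamilyPairs V s ℓ)]
        gcongr
        exact sum_le_card_nsmul _ _ _ hjoined
    _ ≤ (2 * (Fintype.card V : ℝ) ^ (2 * s * ℓ)) * (Real.exp (-(ℓ ^ 2 / (q : ℝ) ^ s ^ 2)) *
          Fintype.card (Sym2 V → Fin q)) := by
        rw [← mul_assoc]
        gcongr
        exact_mod_cast card_smallFamilyPairs_le s ℓ
    _ ≤ Real.exp (ℓ ^ 2 / (q : ℝ) ^ s ^ 2) * (Real.exp (-(ℓ ^ 2 / (q : ℝ) ^ s ^ 2)) *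
          Fintype.card (Sym2 V → Fin q)) := by gcongr
    _ = Fintype.card (Sym2 V → Fin q) := by
        rw [← mul_assoc, ← Real.exp_add, add_neg_cancel, Real.exp_zero, one_mul]

lemma exists_hasAnticompletePair [Fintype V] {s ℓ : ℕ}
    (hV : 8 * Fintype.card V < 2 ^ Fintype.card V)
    (h : 2 * (Fintype.card V : ℝ) ^ (2 * s * ℓ) ≤ Real.exp (ℓ ^ 2 / 16 ^ s ^ 2)) :
    ∃ G : SimpleGraph V, (∀ u, Fintype.card V ≤ 2 * deg G u) ∧ HasAnticompletePair G s ℓ := by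
  classical
  by_contra! hbad
  have hdeg := two_mul_card_labels_deg_lt hV
  have hpair := two_mul_card_labels_not_hasAnticompletePair_le (V := V) (q := 16)
    (by exact_mod_cast h)
  set lowDegree : Finset (Sym2 V → Fin 16) :=
    {M | ∃ u, 2 * deg (labelGraph M) u < Fintype.card V}
  set noPair : Finset (Sym2 V → Fin 16) := {M | ¬ HasAnticompletePair (labelGraph M) s ℓ}
  have hcover : (univ : Finset (Sym2 V → Fin 16)) ⊆ lowDegree ∪ noPair := fun M _ => by
    by_cases hM : ∃ u, 2 * deg (labelGraph M) u < Fintype.card V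
    · exact mem_union_left _ (mem_filter.2 ⟨mem_univ _, hM⟩)
    · push Not at hM
      exact mem_union_right _ (mem_filter.2 ⟨mem_univ _, by convert hbad _ hM⟩)
  have := (card_le_card hcover).trans (card_union_le _ _)
  rw [card_univ] at this
  omega

end BaseGraph

section HeavyRows

open Finset

variable {V ι : Type*}

lemma exists_disjoint_of_card_mul_lt [DecidableEq V] {P : ι → Finset V} {I : Finset ι} {w : ℕ}
    (hoverlap : ∀ v, #{i ∈ I | v ∈ P i} ≤ w) {F : Finset V} (hF : #F * w < #I) :
    ∃ i ∈ I, Disjoint F (P i) := by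
  classical
  by_contra! hmeet
  have hcover : I ⊆ F.biUnion fun v => {i ∈ I | v ∈ P i} := fun i hi => by
    obtain ⟨v, hvF, hvP⟩ := not_disjoint_iff.1 (hmeet i hi)
    exact mem_biUnion.2 ⟨v, hvF, mem_filter.2 ⟨hi, hvP⟩⟩
  exact hF.not_ge <| (card_le_card hcover).trans <|
    card_biUnion_le_card_mul _ _ _ fun v _ => hoverlap v

lemma exists_pairwiseDisjoint_subfamily [Fintype V] [DecidableEq V] {s w : ℕ} {P : ι → Finset V}
    {I : Finset ι} (hP : ∀ i ∈ I, P i ∈ smallSets V s) (hoverlap : ∀ v, #{i ∈ I | v ∈ P i} ≤ w)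
    {F : Finset V} {ℓ : ℕ} (hI : (#F + ℓ * s) * w < #I) :
    ∃ J ⊆ I, #J = ℓ ∧ (J : Set ι).PairwiseDisjoint P ∧ ∀ i ∈ J, Disjoint F (P i) := by
  classical
  induction ℓ with
  | zero => exact ⟨∅, empty_subset _, by simp⟩
  | succ ℓ ih =>
    obtain ⟨J, hJI, hJcard, hJdisj, hFJ⟩ := ih (lt_of_le_of_lt (by gcongr; omega) hI)
    have hcard : #(F ∪ J.biUnion P) ≤ #F + (ℓ + 1) * s := by
      have : #(J.biUnion P) ≤ #J * s :=
        card_biUnion_le_card_mul _ _ _ fun i hi => (mem_smallSets.1 (hP i (hJI hi))).2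
      rw [hJcard] at this
      linarith [card_union_le F (J.biUnion P)]
    obtain ⟨i, hi, hdisj⟩ := exists_disjoint_of_card_mul_lt hoverlap
      (lt_of_le_of_lt (Nat.mul_le_mul_right w hcard) hI)
    obtain ⟨hFi, hJi⟩ := disjoint_union_left.1 hdisj
    rw [disjoint_biUnion_left] at hJi
    have hiJ : i ∉ J := fun hiJ =>
      (mem_smallSets.1 (hP i hi)).1.ne_empty (disjoint_self_iff_empty _ |>.1 (hJi i hiJ))
    refine ⟨insert i J, insert_subset hi hJI, by rw [card_insert_of_notMem hiJ, hJcard], ?_, ?_⟩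
    · rw [coe_insert]
      exact hJdisj.insert fun j hj _ => (hJi j hj).symm
    · exact forall_mem_insert _ _ _ |>.2 ⟨hFi, hFJ⟩

lemma injOn_of_pairwiseDisjoint {P : ι → Finset V} {I : Set ι} (hP : ∀ i ∈ I, (P i).Nonempty)
    (hdisj : I.PairwiseDisjoint P) : Set.InjOn P I := fun i hi _ hj hij =>
  by_contra fun hne => (hdisj hi hj hne).ne (hP i hi).ne_empty hij

lemma image_mem_smallFamilyPairs [Fintype V] [DecidableEq V] {s ℓ : ℕ} {P Q : ι → Finset V}
    {I J : Finset ι} (hP : ∀ i ∈ I, P i ∈ smallSets V s) (hQ : ∀ j ∈ J, Q j ∈ smallSets V s)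
    (hI : #I = ℓ) (hJ : #J = ℓ) (hPdisj : (I : Set ι).PairwiseDisjoint P)
    (hQdisj : (J : Set ι).PairwiseDisjoint Q) (hPQ : ∀ i ∈ I, ∀ j ∈ J, Disjoint (P i) (Q j)) :
    (I.image P, J.image Q) ∈ smallFamilyPairs V s ℓ := by
  have hPne (i) (hi : i ∈ I) : (P i).Nonempty := (mem_smallSets.1 (hP i hi)).1
  have hPinj := injOn_of_pairwiseDisjoint hPne hPdisj
  have hQinj := injOn_of_pairwiseDisjoint (fun j hj => (mem_smallSets.1 (hQ j hj)).1) hQdisj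
  refine mem_smallFamilyPairs.2 ⟨⟨⟨image_subset_iff.2 hP, ?_⟩, image_subset_iff.2 hQ, ?_⟩, ?_, ?_⟩
  · rw [card_image_of_injOn hPinj, hI]
  · rw [card_image_of_injOn hQinj, hJ]
  · rw [Finset.disjoint_left]
    rintro _ hPi hPi'
    obtain ⟨i, hi, rfl⟩ := mem_image.1 hPi
    obtain ⟨j, hj, hji⟩ := mem_image.1 hPi'
    exact (hPQ i hi j hj).ne (hPne i hi).ne_empty hji.symm
  · rw [coe_image, coe_image]
    refine Set.PairwiseDisjoint.union (hPinj.pairwiseDisjoint_image.2 hPdisj)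
      (hQinj.pairwiseDisjoint_image.2 hQdisj) ?_
    rintro _ ⟨i, hi, rfl⟩ _ ⟨j, hj, rfl⟩ -
    exact hPQ i hi j hj

open scoped Classical in
/-- Row `i` consists of the `j` such that no edge of `G` joins `P i` to `Q j`. -/
noncomputable def anticompleteRows [Fintype ι] (G : SimpleGraph V) (P Q : ι → Finset V) (i : ι) :
    Finset ι :=
  {j | Anticomplete G (P i) (Q j)}

lemma mem_anticompleteRows [Fintype ι] {G : SimpleGraph V} {P Q : ι → Finset V} {i j : ι} :
    j ∈ anticompleteRows G P Q i ↔ Anticomplete G (P i) (Q j) := by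
  simp [anticompleteRows]

open scoped Classical in
theorem HasAnticompletePair.hasHeavyRows [Fintype V] [Fintype ι] {G : SimpleGraph V}
    {s ℓ w k : ℕ} (hG : HasAnticompletePair G s ℓ) {P Q : ι → Finset V} {I J : Finset ι}
    (hP : ∀ i ∈ I, P i ∈ smallSets V s) (hQ : ∀ j ∈ J, Q j ∈ smallSets V s)
    (hPw : ∀ v, #{i ∈ I | v ∈ P i} ≤ w) (hQw : ∀ v, #{j ∈ J | v ∈ Q j} ≤ w)
    (hI : ℓ * s * w + k < #I) (hJ : 2 * (ℓ * s * w) + ℓ * (2 * k) < #J) :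
    HasHeavyRows k (anticompleteRows G P Q) := by
  set E := anticompleteRows G P Q
  by_contra hlight
  rw [HasHeavyRows, not_le] at hlight
  obtain ⟨I₀, hI₀, hI₀card, hI₀disj, -⟩ : ∃ I₀ ⊆ {i ∈ I | #(E i) < 2 * k}, #I₀ = ℓ ∧
      (I₀ : Set ι).PairwiseDisjoint P ∧ ∀ i ∈ I₀, Disjoint ∅ (P i) := by
    refine exists_pairwiseDisjoint_subfamily (fun i hi => hP i (mem_filter.1 hi).1)
      (fun v => (card_le_card (filter_subset_filter _ (filter_subset _ _))).trans (hPw v)) ?_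
    have hsplit := card_filter_add_card_filter_not (s := I) fun i => #(E i) < 2 * k
    have : #{i ∈ I | ¬ #(E i) < 2 * k} ≤ #{i | 2 * k ≤ #(E i)} := by
      simp only [not_lt]
      exact card_le_card (filter_subset_filter _ (subset_univ _))
    rw [card_empty, zero_add]
    omega
  obtain ⟨J₀, hJ₀, hJ₀card, hJ₀disj, hIJ⟩ : ∃ J₀ ⊆ J \ I₀.biUnion E, #J₀ = ℓ ∧
      (J₀ : Set ι).PairwiseDisjoint Q ∧ ∀ j ∈ J₀, Disjoint (I₀.biUnion P) (Q j) := by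
    refine exists_pairwiseDisjoint_subfamily (fun j hj => hQ j (mem_sdiff.1 hj).1)
      (fun v => (card_le_card (filter_subset_filter _ sdiff_subset)).trans (hQw v)) ?_
    have hE : #(I₀.biUnion E) ≤ ℓ * (2 * k) := hI₀card ▸
      card_biUnion_le_card_mul _ _ _ fun i hi => (mem_filter.1 (hI₀ hi)).2.le
    have hPs : #(I₀.biUnion P) ≤ ℓ * s := hI₀card ▸
      card_biUnion_le_card_mul _ _ _ fun i hi =>
        (mem_smallSets.1 (hP i (mem_filter.1 (hI₀ hi)).1)).2
    calc (#(I₀.biUnion P) + ℓ * s) * w ≤ (ℓ * s + ℓ * s) * w := by gcongr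
      _ < #J - ℓ * (2 * k) := by rw [add_mul, ← two_mul]; omega
      _ ≤ #J - #(I₀.biUnion E) := by omega
      _ ≤ #(J \ I₀.biUnion E) := le_card_sdiff _ _
  simp only [disjoint_biUnion_left] at hIJ
  obtain ⟨_, hPi, _, hQj, hij⟩ := hG _ <| image_mem_smallFamilyPairs
    (fun i hi => hP i (mem_filter.1 (hI₀ hi)).1) (fun j hj => hQ j (mem_sdiff.1 (hJ₀ hj)).1)
    hI₀card hJ₀card hI₀disj hJ₀disj fun i hi j hj => hIJ j hj i hi
  obtain ⟨i, hi, rfl⟩ := mem_image.1 hPi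
  obtain ⟨j, hj, rfl⟩ := mem_image.1 hQj
  exact (mem_sdiff.1 (hJ₀ hj)).2 (mem_biUnion.2 ⟨i, hi, mem_anticompleteRows.2 hij⟩)

lemma exists_perms_meeting_anticompleteRows [Fintype ι] {κ : Type*} [Fintype κ]
    (G : SimpleGraph V) {𝒯 : Finset (Finset V)} {k : ℕ}
    (hcard : (#𝒯 : ℝ) ^ (2 * Fintype.card ι) <
      Real.exp (Fintype.card κ * (k ^ 2 / Fintype.card ι))) :
    ∃ σ : κ → Equiv.Perm ι, ∀ P Q : ι → Finset V, (∀ i, P i ∈ 𝒯) → (∀ i, Q i ∈ 𝒯) →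
      HasHeavyRows k (anticompleteRows G P Q) → ∃ c i, Anticomplete G (P i) (Q (σ c i)) := by
  classical
  let families : Finset (ι → Finset V) := Fintype.piFinset fun _ => 𝒯
  let 𝓔 : Finset (ι → Finset ι) :=
    {E ∈ (families ×ˢ families).image fun X => anticompleteRows G X.1 X.2 | HasHeavyRows k E}
  have h𝓔 : #𝓔 ≤ #𝒯 ^ (2 * Fintype.card ι) :=
    calc #𝓔 ≤ #(families ×ˢ families) := (card_filter_le _ _).trans card_image_le
      _ = #𝒯 ^ (2 * Fintype.card ι) := by
        simp only [families, card_product, Fintype.card_piFinset, prod_const, card_univ, ← pow_add,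
          ← two_mul]
  obtain ⟨σ, hσ⟩ := exists_perms_meeting_heavy_families (κ := κ) (𝓔 := 𝓔)
    (fun E hE => (mem_filter.1 hE).2) (lt_of_le_of_lt (by exact_mod_cast h𝓔) hcard)
  refine ⟨σ, fun P Q hP hQ hheavy => ?_⟩
  obtain ⟨c, i, hi⟩ := hσ (anticompleteRows G P Q) <| mem_filter.2 ⟨mem_image.2 ⟨(P, Q),
    mem_product.2 ⟨Fintype.mem_piFinset.2 hP, Fintype.mem_piFinset.2 hQ⟩, rfl⟩, hheavy⟩
  exact ⟨c, i, mem_anticompleteRows.1 hi⟩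

end HeavyRows

section MatchGraph

open Equiv

variable {ι κ : Type*}

/-- The bipartite graph on two copies of `ι` that is the union of the perfect matchings given by the
permutations `σ c`. -/
def matchGraph (σ : κ → Perm ι) : SimpleGraph (ι ⊕ ι) :=
  fromRel fun x y => ∃ c i, x = .inl i ∧ y = .inr (σ c i)

lemma matchGraph_adj_inl_inr {σ : κ → Perm ι} {i j : ι} :
    (matchGraph σ).Adj (.inl i) (.inr j) ↔ ∃ c, σ c i = j := by
  simp [matchGraph, eq_comm]

lemma matchGraph_colorable (σ : κ → Perm ι) : (matchGraph σ).Colorable 2 := by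
  refine (Coloring.mk Sum.isLeft ?_ : (matchGraph σ).Coloring Bool).colorable
  rintro (_ | _) (_ | _) h <;> simp [matchGraph] at h ⊢

lemma deg_matchGraph_le [Finite κ] (σ : κ → Perm ι) (x : ι ⊕ ι) :
    deg (matchGraph σ) x ≤ Nat.card κ := by
  obtain ⟨f, hf⟩ : ∃ f : κ → ι ⊕ ι, (matchGraph σ).neighborSet x = Set.range f := by
    rcases x with i | j
    · refine ⟨fun c => .inr (σ c i), Set.ext ?_⟩
      rintro (_ | _)
      · simp [matchGraph]
      · simp [matchGraph_adj_inl_inr]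
    · refine ⟨fun c => .inl ((σ c).symm j), Set.ext ?_⟩
      rintro (_ | _)
      · simp [adj_comm, matchGraph_adj_inl_inr, symm_apply_eq, eq_comm (a := j)]
      · simp [matchGraph]
  rw [deg, hf]
  exact Finite.card_range_le f

end MatchGraph

section Isomorphisms

variable {V V' W W' : Type*} {G : SimpleGraph V} {G' : SimpleGraph V'} {H : SimpleGraph W}
  {H' : SimpleGraph W'}

lemma deg_iso_apply (e : G ≃g G') (v : V) : deg G' (e v) = deg G v :=
  (Set.ncard_congr' (e.mapNeighborSet v)).symm

lemma deg_overFin [Fintype V] {n : ℕ} (hV : Fintype.card V = n) (v : Fin n) :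
    deg (G.overFin hV) v = deg G ((G.overFinIso hV).symm v) :=
  (deg_iso_apply (G.overFinIso hV).symm v).symm

lemma IsMinor.of_iso (e : H ≃g H') (f : G ≃g G') : IsMinor H' G' → IsMinor H G := by
  rintro ⟨μ, hdisj, hconn, hadj⟩
  refine ⟨fun v => f ⁻¹' μ (e v), fun u v huv => ?_, fun v => ?_, fun u v huv => ?_⟩
  · exact (hdisj _ _ (e.injective.ne huv)).preimage f
  · exact (f.induce (f.toEquiv.bijective.bijOn_preimage)).connected_iff.2 (hconn (e v))
  · obtain ⟨a, ha, b, hb, hab⟩ := hadj _ _ (e.map_adj_iff.2 huv)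
    exact ⟨f.symm a, by simpa using ha, f.symm b, by simpa using hb, f.symm.map_adj_iff.2 hab⟩

lemma deg_comap_fst {β : Type*} (G : SimpleGraph V) (z : V × β) :
    deg (G.comap Prod.fst) z = deg G z.1 * Nat.card β := by
  rw [deg, neighborSet_comap, ← Set.prod_univ, Set.ncard_prod, Set.ncard_univ, deg]

end Isomorphisms

section Models

open Finset

variable {V W ι : Type*} [Fintype W]

lemma card_filter_fst_eq [Fintype V] [DecidableEq V] (v : V) :
    #{z : V × W | z.1 = v} = Fintype.card W := by
  rw [show ({z : V × W | z.1 = v} : Finset _) = {v} ×ˢ univ by ext ⟨_, _⟩; simp [eq_comm],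
    card_product, card_singleton, one_mul, card_univ]

lemma card_filter_mem_image_le [DecidableEq V] {U : ι → Finset W}
    (hU : Pairwise (Function.onFun Disjoint U)) {π : W → V} {w : ℕ} {v : V}
    (hπ : #{z | π z = v} ≤ w) (I : Finset ι) :
    #{i ∈ I | v ∈ (U i).image π} ≤ w := by
  refine le_trans ?_ hπ
  refine card_le_card_of_forall_subsingleton (fun i z => z ∈ U i) ?_ ?_
  · intro i hi
    obtain ⟨z, hz, hzv⟩ := mem_image.1 (mem_filter.1 hi).2
    exact ⟨z, mem_filter.2 ⟨mem_univ _, hzv⟩, hz⟩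
  · rintro z - i ⟨-, hi⟩ j ⟨-, hj⟩
    by_contra hij
    exact Finset.disjoint_left.1 (hU hij) hi hj

variable [Fintype V] [Fintype ι]

lemma card_le_two_mul_card_filter_card_le {U : ι → Finset W}
    (hU : Pairwise (Function.onFun Disjoint U)) {s : ℕ}
    (hW : 2 * Fintype.card W ≤ Fintype.card ι * (s + 1)) :
    Fintype.card ι ≤ 2 * #{i | #(U i) ≤ s} := by
  classical
  have hsplit := card_filter_add_card_filter_not (s := (univ : Finset ι)) fun i => #(U i) ≤ s
  have hlarge : #{i | ¬ #(U i) ≤ s} * (s + 1) ≤ Fintype.card W :=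
    calc #{i | ¬ #(U i) ≤ s} * (s + 1) ≤ ∑ i with ¬ #(U i) ≤ s, #(U i) := by
          rw [← smul_eq_mul]
          exact card_nsmul_le_sum _ _ _ fun i hi => not_le.1 (mem_filter.1 hi).2
      _ = #(({i | ¬ #(U i) ≤ s} : Finset ι).biUnion U) :=
          (card_biUnion fun i _ j _ hij => hU hij).symm
      _ ≤ Fintype.card W := card_le_univ _
  have : 2 * #{i | ¬ #(U i) ≤ s} ≤ Fintype.card ι :=
    le_of_mul_le_mul_right (by linarith) s.succ_pos
  rw [card_univ] at hsplit
  omega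

/-- Replaces a set of more than `s` elements by the whole type. Whatever edges meet `P` also meet
`truncate s P`, but there are only about `card V ^ s` truncated sets. -/
def truncate (s : ℕ) (P : Finset V) : Finset V :=
  if #P ≤ s then P else univ

lemma subset_truncate (s : ℕ) (P : Finset V) : P ⊆ truncate s P := by
  rw [truncate]
  split_ifs
  exacts [Subset.rfl, subset_univ P]

lemma truncate_mem [DecidableEq V] {s : ℕ} {P : Finset V} (hP : P.Nonempty) :
    truncate s P ∈ insert univ (smallSets V s) := by
  rw [truncate]
  split_ifs with h
  exacts [mem_insert_of_mem (mem_smallSets.2 ⟨hP, h⟩), mem_insert_self _ _]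

theorem HasAnticompletePair.hasHeavyRows_truncate [DecidableEq V] {G : SimpleGraph V} {s ℓ w k : ℕ}
    (hG : HasAnticompletePair G s ℓ) {π : W → V} (hπ : ∀ v, #{z | π z = v} ≤ w)
    {U U' : ι → Finset W} (hU : Pairwise (Function.onFun Disjoint U)) (hUne : ∀ i, (U i).Nonempty)
    (hU' : Pairwise (Function.onFun Disjoint U')) (hUne' : ∀ i, (U' i).Nonempty)
    (hW : 2 * Fintype.card W ≤ Fintype.card ι * (s + 1)) (hℓ : 0 < ℓ)
    (hk : 8 * k * ℓ ≤ Fintype.card ι) (hw : 8 * ℓ * s * w < Fintype.card ι) :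
    HasHeavyRows k (anticompleteRows G (fun i => truncate s ((U i).image π))
      fun i => truncate s ((U' i).image π)) := by
  have hsmall {T : Finset W} (hT : #T ≤ s) : truncate s (T.image π) = T.image π :=
    if_pos (card_image_le.trans hT)
  have hmem {T : ι → Finset W} (hne : ∀ i, (T i).Nonempty) :
      ∀ i ∈ ({i | #(T i) ≤ s} : Finset ι), truncate s ((T i).image π) ∈ smallSets V s := by
    intro i hi
    have hTs := (mem_filter.1 hi).2
    rw [hsmall hTs]
    exact mem_smallSets.2 ⟨(hne i).image π, card_image_le.trans hTs⟩
  have hoverlap {T : ι → Finset W} (hT : Pairwise (Function.onFun Disjoint T)) (v : V) :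
      #{i ∈ ({i | #(T i) ≤ s} : Finset ι) | v ∈ truncate s ((T i).image π)} ≤ w := by
    rw [filter_congr fun i hi => by rw [hsmall (mem_filter.1 hi).2]]
    exact card_filter_mem_image_le hT (hπ v) _
  have hI := card_le_two_mul_card_filter_card_le hU hW
  have hJ := card_le_two_mul_card_filter_card_le hU' hW
  have hkℓ : k ≤ k * ℓ := Nat.le_mul_of_pos_right k hℓ
  refine hG.hasHeavyRows (w := w) (I := {i | #(U i) ≤ s}) (J := {i | #(U' i) ≤ s}) (hmem hUne)
    (hmem hUne') ?_ ?_ ?_ ?_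
  · convert hoverlap hU
  · convert hoverlap hU'
  · linarith
  · linarith

theorem HasAnticompletePair.exists_not_isMinor_comap [DecidableEq V] {κ : Type*} [Fintype κ]
    {G : SimpleGraph V} {s ℓ w k : ℕ} (hG : HasAnticompletePair G s ℓ) {π : W → V}
    (hπ : ∀ v, #{z | π z = v} ≤ w) (hW : 2 * Fintype.card W ≤ Fintype.card ι * (s + 1))
    (hℓ : 0 < ℓ) (hk : 8 * k * ℓ ≤ Fintype.card ι) (hw : 8 * ℓ * s * w < Fintype.card ι)
    (hcard : ((Fintype.card V : ℝ) ^ s + 1) ^ (2 * Fintype.card ι) <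
      Real.exp (Fintype.card κ * (k ^ 2 / Fintype.card ι))) :
    ∃ σ : κ → Equiv.Perm ι, ¬ IsMinor (matchGraph σ) (G.comap π) := by
  classical
  have h𝒯 : #(insert univ (smallSets V s)) ≤ Fintype.card V ^ s + 1 :=
    (card_insert_le _ _).trans (Nat.add_le_add_right (card_smallSets_le s) 1)
  obtain ⟨σ, hσ⟩ := exists_perms_meeting_anticompleteRows (κ := κ) (ι := ι) G
    (𝒯 := insert univ (smallSets V s)) (k := k)
    (lt_of_le_of_lt (pow_le_pow_left₀ (by positivity) (by exact_mod_cast h𝒯) _) hcard)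
  refine ⟨σ, ?_⟩
  rintro ⟨μ, hdisj, hconn, hadj⟩
  let bag (x : ι ⊕ ι) : Finset W := (μ x).toFinset
  have hne (x) : (bag x).Nonempty :=
    Set.toFinset_nonempty.2 <| Set.nonempty_coe_sort.1 (hconn x).nonempty
  have hbag {f : ι → ι ⊕ ι} (hf : f.Injective) :
      Pairwise (Function.onFun Disjoint fun i => bag (f i)) := fun i j hij =>
    Set.disjoint_toFinset.2 (hdisj _ _ (hf.ne hij))
  obtain ⟨c, i, hi⟩ := hσ _ _ (fun i => truncate_mem ((hne (.inl i)).image π))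
    (fun i => truncate_mem ((hne (.inr i)).image π)) <|
    hG.hasHeavyRows_truncate hπ (hbag Sum.inl_injective) (fun i => hne _)
      (hbag Sum.inr_injective) (fun i => hne _) hW hℓ hk hw
  obtain ⟨a, ha, b, hb, hab⟩ := hadj _ _ (matchGraph_adj_inl_inr.2 ⟨c, rfl⟩)
  exact hi _ (subset_truncate _ _ (mem_image_of_mem π (Set.mem_toFinset.2 ha)))
    _ (subset_truncate _ _ (mem_image_of_mem π (Set.mem_toFinset.2 hb))) hab

end Models

section Parameters

open Real

lemma sixteen_pow_sq_le_exp {x : ℝ} {s : ℕ} (hs : 9 * (s : ℝ) ^ 2 ≤ x) :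
    (16 : ℝ) ^ s ^ 2 ≤ exp (x / 3) := by
  have h16 : (16 : ℝ) ≤ exp 3 :=
    calc (16 : ℝ) ≤ 2.7 ^ 3 := by norm_num
      _ ≤ exp 1 ^ 3 := by gcongr; linarith [exp_one_gt_d9]
      _ = exp 3 := by rw [← exp_nat_mul]; norm_num
  calc (16 : ℝ) ^ s ^ 2 ≤ exp 3 ^ s ^ 2 := by gcongr
    _ = exp (s ^ 2 * 3) := by rw [← exp_nat_mul, Nat.cast_pow]
    _ ≤ exp (x / 3) := by gcongr; linarith

lemma two_mul_exp_pow_le_exp_sq_div {x a : ℝ} {s ℓ : ℕ} (hℓ : 1 ≤ ℓ) (ha : 0 < a)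
    (h : a * (2 * s * x + 1) ≤ ℓ) : 2 * exp x ^ (2 * s * ℓ) ≤ exp (ℓ ^ 2 / a) := by
  have hℓ' : (1 : ℝ) ≤ ℓ := by exact_mod_cast hℓ
  calc 2 * exp x ^ (2 * s * ℓ) ≤ exp 1 * exp x ^ (2 * s * ℓ) := by
        gcongr
        linarith [exp_one_gt_d9]
    _ = exp (2 * s * ℓ * x + 1) := by
        rw [← exp_nat_mul, ← exp_add, add_comm]
        push_cast
        rfl
    _ ≤ exp (ℓ ^ 2 / a) := by
        gcongr
        rw [le_div_iff₀' ha]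
        calc a * (2 * s * ℓ * x + 1) ≤ a * (2 * s * ℓ * x + ℓ) := by gcongr
          _ = ℓ * (a * (2 * s * x + 1)) := by ring
          _ ≤ ℓ ^ 2 := by rw [sq]; gcongr

lemma exists_pair_parameters {x : ℝ} (hx : 25 ≤ x) (hxz : 4096 * x ^ 2 ≤ exp (x / 15)) :
    ∃ s ℓ : ℕ, 0 < ℓ ∧ √x < 3 * (s + 1) ∧
      2 * exp x ^ (2 * s * ℓ) ≤ exp (ℓ ^ 2 / 16 ^ s ^ 2) ∧ 512 * ℓ ^ 2 * (s + 1) * x < exp x := by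
  -- `16 ^ s ^ 2 ≤ z ^ 5` leaves room for `ℓ` near `z ^ 6`, while `ℓ ^ 2` stays below `z ^ 15`.
  set z := exp (x / 15)
  have hz (n : ℕ) : z ^ n = exp (n * x / 15) := by rw [← exp_nat_mul]; ring_nf
  have hz1 : 1 ≤ z := by nlinarith
  have hz6 : 1 ≤ z ^ 6 := one_le_pow₀ hz1
  obtain ⟨s, hs, hs'⟩ : ∃ s : ℕ, 3 * (s : ℝ) ≤ √x ∧ √x < 3 * (s + 1) :=
    ⟨⌊√x / 3⌋₊, by linarith [Nat.floor_le (a := √x / 3) (by positivity)],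
      by linarith [Nat.lt_floor_add_one (√x / 3)]⟩
  obtain ⟨ℓ, hℓ, hℓ'⟩ : ∃ ℓ : ℕ, z ^ 6 ≤ ℓ ∧ ℓ ≤ 2 * z ^ 6 :=
    ⟨⌈z ^ 6⌉₊, Nat.le_ceil _, by linarith [Nat.ceil_lt_add_one (a := z ^ 6) (by positivity)]⟩
  have hsq : 9 * (s : ℝ) ^ 2 ≤ x := by
    have := pow_le_pow_left₀ (by positivity) hs 2
    rw [sq_sqrt (by linarith)] at this
    linarith
  have hsx : (s : ℝ) + 1 ≤ x := by nlinarith [s.cast_nonneg (α := ℝ)]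
  have hℓ1 : (1 : ℝ) ≤ ℓ := hz6.trans hℓ
  refine ⟨s, ℓ, by exact_mod_cast hℓ1, hs', ?_, ?_⟩
  · have h16 : (16 : ℝ) ^ s ^ 2 ≤ z ^ 5 := by
      convert sixteen_pow_sq_le_exp hsq using 1
      rw [hz]
      ring_nf
    refine two_mul_exp_pow_le_exp_sq_div (by exact_mod_cast hℓ1) (by positivity) ?_
    calc 16 ^ s ^ 2 * (2 * s * x + 1) ≤ z ^ 5 * z := by
          gcongr
          nlinarith [s.cast_nonneg (α := ℝ)]
      _ = z ^ 6 := by ring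
      _ ≤ ℓ := hℓ
  · calc 512 * ℓ ^ 2 * (s + 1) * x ≤ 512 * (2 * z ^ 6) ^ 2 * x * x := by gcongr
      _ = z ^ 12 * (4096 * x ^ 2) / 2 := by ring
      _ ≤ z ^ 12 * z / 2 := by gcongr
      _ < z ^ 12 * z := half_lt_self (by positivity)
      _ ≤ z ^ 15 := by rw [← pow_succ]; gcongr; norm_num
      _ = exp x := by rw [hz]; ring_nf

lemma eight_mul_lt_two_pow {d : ℕ} (hd : 6 ≤ d) : 8 * d < 2 ^ d := by
  induction d, hd using Nat.le_induction with
  | base => norm_num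
  | succ d _ ih => rw [pow_succ]; omega

lemma eventually_exists_pair_parameters :
    ∀ᶠ Δ : ℕ in Filter.atTop, 8 * Δ < 2 ^ Δ ∧ 25 ≤ log Δ ∧ ∃ s ℓ : ℕ, 0 < ℓ ∧
      √(log Δ) < 3 * (s + 1) ∧ 2 * (Δ : ℝ) ^ (2 * s * ℓ) ≤ exp (ℓ ^ 2 / 16 ^ s ^ 2) ∧
      512 * ℓ ^ 2 * (s + 1) * log Δ < Δ := by
  have hlog : Filter.Tendsto (fun Δ : ℕ => log Δ) Filter.atTop Filter.atTop :=
    tendsto_log_atTop.comp tendsto_natCast_atTop_atTop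
  have hexp := ((tendsto_exp_div_pow_atTop 2).comp
    (hlog.atTop_div_const (by norm_num : (0 : ℝ) < 15))).eventually_ge_atTop (4096 * 15 ^ 2)
  filter_upwards [hlog.eventually_ge_atTop 25, hexp, Filter.eventually_ge_atTop 6]
    with Δ hΔ hΔexp hΔ6
  rw [Function.comp_apply, le_div_iff₀ (by positivity)] at hΔexp
  refine ⟨eight_mul_lt_two_pow hΔ6, hΔ, ?_⟩
  have := exists_pair_parameters hΔ (by linarith)
  rwa [exp_log (by norm_cast; omega)] at this

variable {Δ s ℓ : ℕ}

lemma exists_blowUp_size {n : ℕ} (hΔ : 25 ≤ log Δ) (hn : 2 * Δ ≤ n)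
    (hs : √(log Δ) < 3 * (s + 1)) (hℓ : 0 < ℓ) (hℓΔ : 512 * ℓ ^ 2 * (s + 1) * log Δ < Δ) :
    ∃ w : ℕ, 0 < Δ * w ∧ 2 * n * √(log Δ) ≤ 5 * (Δ * w) ∧
      2 * (Δ * w) ≤ 3 * n * (s + 1) ∧ 8 * ℓ * s * w < 3 * n := by
  set L := √(log Δ)
  have hL : 5 ≤ L := le_sqrt_of_sq_le (by linarith)
  have hLx : 5 * L ≤ log Δ := by nlinarith [sq_sqrt (show 0 ≤ log Δ by linarith)]
  have hΔ0 : (0 : ℝ) < Δ := lt_of_le_of_lt (by positivity) hℓΔ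
  have hn' : 2 * (Δ : ℝ) ≤ n := by exact_mod_cast hn
  have hℓ1 : (1 : ℝ) ≤ ℓ := by exact_mod_cast hℓ
  obtain ⟨w, hw, hw'⟩ : ∃ w : ℕ, 2 * n * L ≤ 5 * (Δ * w) ∧ 5 * (Δ * w) ≤ 2 * n * L + 5 * Δ := by
    refine ⟨⌈2 * n * L / (5 * Δ)⌉₊, ?_, ?_⟩
    · rw [← mul_assoc, ← div_le_iff₀' (by positivity)]
      exact Nat.le_ceil _
    · have := Nat.ceil_lt_add_one (a := 2 * n * L / (5 * Δ)) (by positivity)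
      rw [div_add_one (by positivity), lt_div_iff₀' (by positivity)] at this
      linarith
  have hupper : 2 * (Δ * w) ≤ n * L := by nlinarith
  refine ⟨w, ?_, hw, ?_, ?_⟩
  · have : 0 < 2 * n * L := by nlinarith
    have : (0 : ℝ) < Δ * w := by linarith
    exact_mod_cast this
  · have : 2 * ((Δ : ℝ) * w) ≤ 3 * n * (s + 1) := by nlinarith
    exact_mod_cast this
  · have hℓsL : ℓ * s * (5 * L) ≤ 512 * ℓ ^ 2 * (s + 1) * log Δ := by
      gcongr
      · nlinarith
      · linarith
    have : 8 * (ℓ : ℝ) * s * w < 3 * n := by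
      refine lt_of_mul_lt_mul_right ?_ hΔ0.le
      calc (8 * ℓ * s * w * Δ : ℝ) = 4 * ℓ * s * (2 * (Δ * w)) := by ring
        _ ≤ 4 * ℓ * s * (n * L) := by gcongr
        _ ≤ 3 * n * (ℓ * s * (5 * L)) := by
            have : 0 ≤ ℓ * s * (n * L) := by positivity
            linarith
        _ < 3 * n * Δ :=
            mul_lt_mul_of_pos_left (hℓsL.trans_lt hℓΔ) (by linarith)
    exact_mod_cast this

lemma exists_heavyRows_threshold {m : ℕ} (hΔ : 1 ≤ log Δ) (hm : Δ ≤ m) (hℓ : 0 < ℓ)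
    (hℓΔ : 512 * ℓ ^ 2 * (s + 1) * log Δ < Δ) :
    ∃ k : ℕ, 8 * k * ℓ ≤ m ∧ ((Δ : ℝ) ^ s + 1) ^ (2 * m) < exp (Δ * (k ^ 2 / m)) := by
  have hℓ1 : (1 : ℝ) ≤ ℓ := by exact_mod_cast hℓ
  have hΔ0 : (0 : ℝ) < Δ := lt_of_le_of_lt (by positivity) hℓΔ
  have hm0 : (0 : ℝ) < m := hΔ0.trans_le (by exact_mod_cast hm)
  have hℓm : 8 * ℓ ≤ m := by
    have : (8 : ℝ) * ℓ ≤ 512 * ℓ ^ 2 * (s + 1) * log Δ :=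
      calc (8 : ℝ) * ℓ ≤ 512 * ℓ ^ 2 * 1 * 1 := by nlinarith
        _ ≤ _ := by gcongr; linarith [s.cast_nonneg (α := ℝ)]
    have : (8 : ℝ) * ℓ ≤ m := (this.trans hℓΔ.le).trans (by exact_mod_cast hm)
    exact_mod_cast this
  obtain ⟨k, hk, hk'⟩ : ∃ k : ℕ, 8 * k * ℓ ≤ m ∧ m ≤ 16 * ℓ * k := by
    refine ⟨m / (8 * ℓ), by linarith [Nat.div_mul_le_self m (8 * ℓ)], ?_⟩
    have := (Nat.one_le_div_iff (by omega)).2 hℓm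
    have := Nat.lt_mul_div_succ m (show 0 < 8 * ℓ by omega)
    nlinarith
  refine ⟨k, hk, ?_⟩
  have hk'' : (m : ℝ) ≤ 16 * ℓ * k := by exact_mod_cast hk'
  have hΔ2 : 2 ≤ (Δ : ℝ) := by
    linarith [log_le_sub_one_of_pos hΔ0]
  calc ((Δ : ℝ) ^ s + 1) ^ (2 * m) ≤ ((Δ : ℝ) ^ (s + 1)) ^ (2 * m) := by
        gcongr
        have : 1 ≤ (Δ : ℝ) ^ s := one_le_pow₀ (by linarith)
        rw [pow_succ]
        nlinarith
    _ = exp (512 * ℓ ^ 2 * (s + 1) * log Δ * (m / (16 * ℓ) ^ 2)) := by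
        rw [← exp_log hΔ0, ← exp_nat_mul, ← exp_nat_mul, log_exp]
        field_simp
        push_cast
        ring_nf
    _ < exp (Δ * (m / (16 * ℓ) ^ 2)) := by gcongr
    _ ≤ exp (Δ * (k ^ 2 / m)) := by
        gcongr exp (Δ * ?_)
        rw [div_le_div_iff₀ (by positivity) hm0, ← sq, ← mul_pow, mul_comm (k : ℝ)]
        gcongr

end Parameters

theorem no_sslss_counterexample :
    ∃ Δ₀ : ℕ, ∀ Δ : ℕ, Δ₀ ≤ Δ → ∀ n : ℕ, 2 * Δ ≤ n →
      ∃ (m : ℕ) (H' : SimpleGraph (Fin m)) (N : ℕ) (G' : SimpleGraph (Fin N)),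
        H'.Colorable 2 ∧ m ≤ 6 * n ∧ (∀ v, deg H' v ≤ Δ) ∧ 0 < N ∧
        (∀ w : Fin N,
          1 / 5 * (n : ℝ) * Real.sqrt (Real.log (Δ : ℝ)) ≤ (deg G' w : ℝ)) ∧
        ¬ IsMinor H' G' := by
  obtain ⟨Δ₀, hΔ₀⟩ := Filter.eventually_atTop.1 eventually_exists_pair_parameters
  refine ⟨Δ₀, fun Δ hΔ n hn => ?_⟩
  obtain ⟨hΔ8, hΔ25, s, ℓ, hℓ, hs, hpair, hℓΔ⟩ := hΔ₀ Δ hΔ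
  obtain ⟨w, hN0, hw, hbags, hwn⟩ := exists_blowUp_size hΔ25 hn hs hℓ hℓΔ
  obtain ⟨k, hk, hcount⟩ := exists_heavyRows_threshold (m := 3 * n) (by linarith) (by omega) hℓ hℓΔ
  obtain ⟨G, hdeg, hG⟩ := exists_hasAnticompletePair (V := Fin Δ) (s := s) (ℓ := ℓ)
    (by simpa using hΔ8) (by simpa using hpair)
  obtain ⟨σ, hσ⟩ := hG.exists_not_isMinor_comap (κ := Fin Δ) (ι := Fin (3 * n))
    (π := Prod.fst (β := Fin w)) (w := w) (k := k)
    (by simp [card_filter_fst_eq]) (by simpa using hbags) hℓ (by simpa using hk)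
    (by simpa using hwn) (by simpa using hcount)
  have hH : Fintype.card (Fin (3 * n) ⊕ Fin (3 * n)) = 6 * n := by simp; ring
  have hN : Fintype.card (Fin Δ × Fin w) = Δ * w := by simp
  refine ⟨6 * n, (matchGraph σ).overFin hH, Δ * w, (G.comap Prod.fst).overFin hN,
    (matchGraph_colorable σ).of_hom (overFinIso _ hH).symm.toHom, le_rfl, fun v => ?_, hN0,
    fun z => ?_, fun h => hσ (h.of_iso (overFinIso _ hH) (overFinIso _ hN))⟩
  · simpa only [deg_overFin, Nat.card_fin] using deg_matchGraph_le σ _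
  · rw [deg_overFin, deg_comap_fst, Nat.card_fin, Nat.cast_mul]
    have hdeg : (Δ : ℝ) ≤ 2 * deg G (((G.comap Prod.fst).overFinIso hN).symm z).1 := by
      exact_mod_cast (Fintype.card_fin Δ).ge.trans (hdeg _)
    linarith [mul_le_mul_of_nonneg_right hdeg (Nat.cast_nonneg (α := ℝ) w)]
end
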